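/- arXiv:math/0606015 — 9 statements merged into one kernel-verified Lean document; each statement's English description precedes it below -/
import Mathlib

section
/- Fix Λ > 0 and let b : [0,∞) → ℝ be continuous, nonnegative and integrable. Let E(t,s) be the fundamental solution of the dissipative system and E₀(t) = [[cos(Λt), sin(Λt)], [−sin(Λt), cos(Λt)]] the fundamental solution of the free system. Set Q(t,s) := E₀(s−t)·E(t,s) for t ≥ s ≥ 0. Then for every s ≥ 0 the limit Q(∞,s) := lim_{t→∞} Q(t,s) exists in the 2×2 complex matrices, and for all t ≥ s: ‖Q(∞,s) − Q(t,s)‖ ≤ 2(∫_t^∞ b(τ)dτ)·exp(2∫₀^∞ b(θ)dθ). -/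
open MeasureTheory Filter

/-- The operator (ℓ²) norm of a 2×2 complex matrix. -/
noncomputable def opNorm (A : Matrix (Fin 2) (Fin 2) ℂ) : ℝ :=
  ‖Matrix.toEuclideanCLM (𝕜 := ℂ) (n := Fin 2) A‖

/-- The coefficient matrix `[[0, Λ], [−Λ, −2b(t)]]` of the dissipative system. -/
noncomputable def sysMat (Λ : ℝ) (b : ℝ → ℝ) (t : ℝ) : Matrix (Fin 2) (Fin 2) ℂ :=
  !![0, (Λ : ℂ); (-Λ : ℂ), ((-2 * b t : ℝ) : ℂ)]

/-- The fundamental solution `E₀(t)` of the free system. -/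
noncomputable def freeMat (Λ t : ℝ) : Matrix (Fin 2) (Fin 2) ℂ :=
  !![(Real.cos (Λ * t) : ℂ), (Real.sin (Λ * t) : ℂ);
     (-(Real.sin (Λ * t)) : ℝ), (Real.cos (Λ * t) : ℂ)]

section Aux

open scoped Matrix.Norms.L2Operator

theorem aux_opNorm (A : Matrix (Fin 2) (Fin 2) ℂ) : opNorm A = ‖A‖ := rfl

theorem aux_energy (Λ : ℝ) (b : ℝ → ℝ) (s : ℝ) (hs : 0 ≤ s)
    (hb0 : ∀ t ≥ (0:ℝ), 0 ≤ b t) (x y : ℝ → ℂ)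
    (hx : ∀ t ≥ s, HasDerivAt x (Λ * y t) t)
    (hy : ∀ t ≥ s, HasDerivAt y (-Λ * x t + ((-2 * b t : ℝ) : ℂ) * y t) t) (t : ℝ) (ht : s ≤ t) :
    ‖x t‖ ^ 2 + ‖y t‖ ^ 2 ≤ ‖x s‖ ^ 2 + ‖y s‖ ^ 2 := by
  have hF : ∀ t ≥ s, HasDerivAt (fun t => ‖x t‖ ^ 2 + ‖y t‖ ^ 2) (-4 * b t * ‖y t‖ ^ 2) t := by
    intro t ht
    refine ((hx t ht).norm_sq.add (hy t ht).norm_sq).congr_deriv ?_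
    rw [← Complex.normSq_eq_norm_sq, Complex.normSq_apply]
    simp [Complex.inner]
    ring
  have hanti : AntitoneOn (fun t => ‖x t‖ ^ 2 + ‖y t‖ ^ 2) (Set.Ici s) := by
    apply antitoneOn_of_deriv_nonpos (convex_Ici s)
    · intro t ht
      exact (hF t ht).continuousAt.continuousWithinAt
    · intro t ht
      rw [interior_Ici] at ht
      exact (hF t (le_of_lt ht)).differentiableAt.differentiableWithinAt
    · intro t ht
      rw [interior_Ici] at ht
      rw [(hF t (le_of_lt ht)).deriv]
      have h1 := hb0 t (hs.trans (le_of_lt ht))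
      have : 0 ≤ b t * ‖y t‖ ^ 2 := by positivity
      linarith
  exact hanti Set.self_mem_Ici ht ht

theorem aux_norm_le (A : Matrix (Fin 2) (Fin 2) ℂ)
    (h : ∀ v0 v1 : ℂ, ‖A 0 0 * v0 + A 0 1 * v1‖ ^ 2 + ‖A 1 0 * v0 + A 1 1 * v1‖ ^ 2
      ≤ ‖v0‖ ^ 2 + ‖v1‖ ^ 2) : ‖A‖ ≤ 1 := by
  rw [← aux_opNorm]
  unfold opNorm
  refine ContinuousLinearMap.opNorm_le_bound _ zero_le_one fun v => ?_
  rw [one_mul, EuclideanSpace.norm_eq, EuclideanSpace.norm_eq]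
  apply Real.sqrt_le_sqrt
  simpa [Fin.sum_univ_two, Matrix.mulVec, dotProduct] using h (v 0) (v 1)

theorem aux_hasDerivAt (A : ℝ → Matrix (Fin 2) (Fin 2) ℂ) (A' : Matrix (Fin 2) (Fin 2) ℂ) (t : ℝ)
    (h : ∀ i j, HasDerivAt (fun τ => A τ i j) (A' i j) t) : HasDerivAt A A' t := by
  have key : ∀ B : Matrix (Fin 2) (Fin 2) ℂ, B = ∑ i, ∑ j, B i j • Matrix.single i j (1:ℂ) := by
    intro B
    conv_lhs => rw [Matrix.matrix_eq_sum_single B]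
    simp [Matrix.smul_single]
  have h2 : HasDerivAt (fun τ => ∑ i, ∑ j, A τ i j • Matrix.single i j (1:ℂ))
      (∑ i, ∑ j, A' i j • Matrix.single i j (1:ℂ)) t :=
    HasDerivAt.fun_sum fun i _ => HasDerivAt.fun_sum fun j _ => (h i j).smul_const _
  rw [← key] at h2
  exact h2.congr_of_eventuallyEq (Filter.Eventually.of_forall fun τ => key (A τ))

theorem aux_free_norm (Λ t : ℝ) : ‖freeMat Λ t‖ ≤ 1 := by
  apply aux_norm_le
  intro v0 v1
  apply le_of_eq
  simp only [← Complex.normSq_eq_norm_sq, Complex.normSq_apply, freeMat]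
  have := Real.sin_sq_add_cos_sq (Λ * t)
  generalize Real.sin (Λ * t) = S at *
  generalize Real.cos (Λ * t) = C at *
  simp
  linear_combination (v0.re ^ 2 + v0.im ^ 2 + v1.re ^ 2 + v1.im ^ 2) * this

theorem aux_diag_norm (c : ℝ) (hc : 0 ≤ c) :
    ‖Matrix.diagonal ![(0:ℂ), ((-2 * c : ℝ) : ℂ)]‖ ≤ 2 * c := by
  rw [Matrix.l2_opNorm_diagonal, pi_norm_le_iff_of_nonneg (by positivity)]
  intro i
  fin_cases i
  · simpa using hc
  · simp [abs_of_nonneg hc]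

theorem aux_free_deriv (Λ s t : ℝ) :
    HasDerivAt (fun τ => freeMat Λ (s - τ))
      (freeMat Λ (s - t) * !![0, -(Λ : ℂ); (Λ : ℂ), 0]) t := by
  have h0 : HasDerivAt (fun τ : ℝ => Λ * (s - τ)) (-Λ) t := by
    simpa using ((hasDerivAt_id t).const_sub s).const_mul Λ
  have hc := h0.cos.ofReal_comp
  have hs := h0.sin.ofReal_comp
  have hs' := h0.sin.neg.ofReal_comp
  apply aux_hasDerivAt
  intro i j
  fin_cases i <;> fin_cases j
  · refine hc.congr_deriv ?_
    simp [freeMat]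
  · refine hs.congr_deriv ?_
    simp [freeMat]
  · refine hs'.congr_deriv ?_
    simp [freeMat]
  · refine hc.congr_deriv ?_
    simp [freeMat]

theorem aux_main_exists_with_rate
    (Λ : ℝ) (hΛ : 0 < Λ) (b : ℝ → ℝ)
    (hbc : ContinuousOn b (Set.Ici 0))
    (hb0 : ∀ t ≥ (0:ℝ), 0 ≤ b t) (hbi : IntegrableOn b (Set.Ici 0))
    (E : ℝ → ℝ → Matrix (Fin 2) (Fin 2) ℂ)
    (hE0 : ∀ s ≥ (0:ℝ), E s s = 1)
    (hE : ∀ s ≥ (0:ℝ), ∀ t ≥ s, ∀ i j : Fin 2,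
      HasDerivAt (fun τ => E τ s i j) ((sysMat Λ b t * E t s) i j) t) :
    ∀ s ≥ (0:ℝ), ∃ Qinf : Matrix (Fin 2) (Fin 2) ℂ,
      Tendsto (fun t => freeMat Λ (s - t) * E t s) atTop (nhds Qinf) ∧
      ∀ t ≥ s, opNorm (Qinf - freeMat Λ (s - t) * E t s) ≤
        2 * (∫ τ in Set.Ioi t, b τ) * Real.exp (2 * ∫ θ in Set.Ioi (0:ℝ), b θ) := by
  intro s hs
  have hEn : ∀ t ≥ s, ‖E t s‖ ≤ 1 := by
    intro t ht
    apply aux_norm_le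
    intro v0 v1
    have := aux_energy Λ b s hs hb0 (fun t => E t s 0 0 * v0 + E t s 0 1 * v1)
      (fun t => E t s 1 0 * v0 + E t s 1 1 * v1) ?_ ?_ t ht
    · simpa [hE0 s hs] using this
    · intro t ht
      refine (((hE s hs t ht 0 0).mul_const v0).add ((hE s hs t ht 0 1).mul_const v1)).congr_deriv ?_
      simp [sysMat, Matrix.mul_apply, Fin.sum_univ_two]
      ring
    · intro t ht
      refine (((hE s hs t ht 1 0).mul_const v0).add ((hE s hs t ht 1 1).mul_const v1)).congr_deriv ?_
      simp [sysMat, Matrix.mul_apply, Fin.sum_univ_two]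
      ring
  have hEd : ∀ t ≥ s, HasDerivAt (fun τ => E τ s) (sysMat Λ b t * E t s) t :=
    fun t ht => aux_hasDerivAt _ _ t (hE s hs t ht)
  set D : ℝ → Matrix (Fin 2) (Fin 2) ℂ :=
    fun t => Matrix.diagonal ![(0:ℂ), ((-2 * b t : ℝ) : ℂ)] with hD
  set Q' : ℝ → Matrix (Fin 2) (Fin 2) ℂ := fun t => freeMat Λ (s - t) * D t * E t s with hQ'
  have hQ : ∀ t ≥ s, HasDerivAt (fun t => freeMat Λ (s - t) * E t s) (Q' t) t := by
    intro t ht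
    refine ((aux_free_deriv Λ s t).mul (hEd t ht)).congr_deriv ?_
    rw [hQ', Matrix.mul_assoc, ← Matrix.mul_add]
    dsimp only
    rw [Matrix.mul_assoc, ← Matrix.add_mul]
    congr 2
    ext i j
    fin_cases i <;> fin_cases j <;> simp [sysMat, hD]
  have hbd : ∀ t ≥ s, ‖Q' t‖ ≤ 2 * b t := by
    intro t ht
    have hbt := hb0 t (hs.le.trans ht)
    calc ‖Q' t‖ ≤ ‖freeMat Λ (s - t) * D t‖ * ‖E t s‖ := norm_mul_le _ _
      _ ≤ (‖freeMat Λ (s - t)‖ * ‖D t‖) * ‖E t s‖ := by gcongr; exact norm_mul_le _ _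
      _ ≤ (1 * (2 * b t)) * 1 := by
        gcongr
        · exact aux_free_norm _ _
        · exact aux_diag_norm _ hbt
        · exact hEn t ht
      _ = 2 * b t := by ring
  have hcont : ContinuousOn Q' (Set.Ici s) := by
    have h1 : ContinuousOn D (Set.Ici s) := by
      have hb' : ContinuousOn b (Set.Ici s) := hbc.mono (Set.Ici_subset_Ici.2 hs)
      refine continuousOn_iff_continuous_domRestrict.2 ?_
      have hb'' := continuousOn_iff_continuous_domRestrict.1 hb'
      apply Continuous.matrix_diagonal
      refine continuous_pi fun i => ?_
      fin_cases i
      · exact continuous_const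
      · exact Complex.continuous_ofReal.comp (continuous_const.mul hb'')
    refine ContinuousOn.mul (ContinuousOn.mul ?_ h1) ?_
    · exact fun t _ => (aux_free_deriv Λ s t).continuousAt.continuousWithinAt
    · exact fun t ht => (hEd t ht).continuousAt.continuousWithinAt
  have hbs : ∀ t ≥ s, IntegrableOn (fun τ => 2 * b τ) (Set.Ioi t) := fun t ht =>
    (hbi.mono_set (fun x hx => (hs.le.trans ht).trans (le_of_lt hx))).const_mul 2
  have hle : ∀ t ≥ s, ∀ᵐ τ ∂(volume.restrict (Set.Ioi t)), ‖Q' τ‖ ≤ 2 * b τ := fun t ht =>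
    (ae_restrict_mem measurableSet_Ioi).mono fun τ hτ => hbd τ (ht.le.trans (le_of_lt hτ))
  have hint : ∀ t ≥ s, IntegrableOn Q' (Set.Ioi t) := by
    intro t ht
    refine Integrable.mono' (hbs t ht) ?_ (hle t ht)
    exact (hcont.mono fun x hx => ht.le.trans (le_of_lt hx)).aestronglyMeasurable measurableSet_Ioi
  have hlim := tendsto_limUnder_of_hasDerivAt_of_integrableOn_Ioi
    (fun t ht => hQ t (le_of_lt ht)) (hint s le_rfl)
  refine ⟨_, hlim, fun t ht => ?_⟩
  have hI := integral_Ioi_of_hasDerivAt_of_tendsto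
    (hQ t ht).continuousAt.continuousWithinAt
    (fun τ hτ => hQ τ (ht.le.trans (le_of_lt hτ))) (hint t ht) hlim
  rw [aux_opNorm, ← hI]
  have h1 := norm_integral_le_of_norm_le (hbs t ht) (hle t ht)
  rw [integral_const_mul] at h1
  have hn : 0 ≤ ∫ τ in Set.Ioi t, b τ :=
    setIntegral_nonneg measurableSet_Ioi fun τ hτ => hb0 τ ((hs.le.trans ht).trans (le_of_lt hτ))
  have hn0 : 0 ≤ ∫ τ in Set.Ioi (0:ℝ), b τ :=
    setIntegral_nonneg measurableSet_Ioi fun τ hτ => hb0 τ (le_of_lt hτ)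
  exact h1.trans (le_mul_of_one_le_right (by positivity) (Real.one_le_exp (by positivity)))

end Aux

/-- For integrable nonnegative dissipation `b`, the matrices
`Q(t,s) = E₀(s−t)·E(t,s)` converge as `t → ∞`, with the convergence rate
`‖Q(∞,s) − Q(t,s)‖ ≤ 2(∫_t^∞ b) exp(2∫_0^∞ b)`. -/
theorem Q_limit_exists_with_rate
    (Λ : ℝ) (hΛ : 0 < Λ) (b : ℝ → ℝ)
    (hbc : ContinuousOn b (Set.Ici 0))
    (hb0 : ∀ t ≥ (0:ℝ), 0 ≤ b t) (hbi : IntegrableOn b (Set.Ici 0))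
    (E : ℝ → ℝ → Matrix (Fin 2) (Fin 2) ℂ)
    (hE0 : ∀ s ≥ (0:ℝ), E s s = 1)
    (hE : ∀ s ≥ (0:ℝ), ∀ t ≥ s, ∀ i j : Fin 2,
      HasDerivAt (fun τ => E τ s i j) ((sysMat Λ b t * E t s) i j) t) :
    ∀ s ≥ (0:ℝ), ∃ Qinf : Matrix (Fin 2) (Fin 2) ℂ,
      Tendsto (fun t => freeMat Λ (s - t) * E t s) atTop (nhds Qinf) ∧
      ∀ t ≥ s, opNorm (Qinf - freeMat Λ (s - t) * E t s) ≤
        2 * (∫ τ in Set.Ioi t, b τ) * Real.exp (2 * ∫ θ in Set.Ioi (0:ℝ), b θ) :=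
  aux_main_exists_with_rate Λ hΛ b hbc hb0 hbi E hE0 hE
end

section
/- Fix Λ > 0 and let b : [0,∞) → ℝ be continuous, nonnegative and integrable. With E(t,s) the fundamental solution of the dissipative system, E₀(t) = [[cos(Λt), sin(Λt)], [−sin(Λt), cos(Λt)]], and Q(t,s) := E₀(s−t)·E(t,s), the limit matrix Q(∞,s) := lim_{t→∞} Q(t,s) exists and is invertible for every s ≥ 0. -/
open MeasureTheory Filter

/-- Energy bound. -/
lemma energy_bound (Λ : ℝ) (c : ℝ → ℝ) (s : ℝ) (hc0 : ∀ t, 0 ≤ c t)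
    (u v : ℝ → ℂ)
    (hu : ∀ t ≥ s, HasDerivAt u (Λ * v t) t)
    (hv : ∀ t ≥ s, HasDerivAt v (-Λ * u t - 2 * c t * v t) t) :
    ∀ t ≥ s, ‖u t‖ ^ 2 + ‖v t‖ ^ 2 ≤ ‖u s‖ ^ 2 + ‖v s‖ ^ 2 := by
  have hd : ∀ t ≥ s, HasDerivAt (fun t => ‖u t‖ ^ 2 + ‖v t‖ ^ 2) (-4 * c t * ‖v t‖ ^ 2) t := by
    intro t ht
    refine HasDerivAt.congr_deriv ((hu t ht).norm_sq.add (hv t ht).norm_sq) ?_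
    simp only [Complex.inner, Complex.sq_norm, Complex.normSq_apply]
    simp
    ring
  have hanti : AntitoneOn (fun t => ‖u t‖ ^ 2 + ‖v t‖ ^ 2) (Set.Ici s) := by
    apply antitoneOn_of_deriv_nonpos (convex_Ici s)
    · intro t ht
      exact (hd t ht).continuousAt.continuousWithinAt
    · intro t ht
      rw [interior_Ici] at ht
      exact (hd t (le_of_lt ht)).differentiableAt.differentiableWithinAt
    · intro t ht
      rw [interior_Ici] at ht
      rw [(hd t (le_of_lt ht)).deriv]
      have := mul_nonneg (hc0 t) (sq_nonneg ‖v t‖)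
      linarith
  intro t ht
  exact hanti (Set.mem_Ici.2 le_rfl) ht ht

/-- A function with derivative dominated by an integrable function converges. -/
lemma lim_of_deriv (c : ℝ → ℝ) (hc : Continuous c) (s K : ℝ) (hc0 : ∀ t, 0 ≤ c t)
    (hci : IntegrableOn c (Set.Ioi s)) (f w : ℝ → ℂ)
    (hw : ContinuousOn w (Set.Ici s)) (hK : ∀ t ≥ s, ‖w t‖ ≤ K)
    (hf : ∀ t ≥ s, HasDerivAt f ((c t : ℂ) * w t) t) :
    ∃ l, Tendsto f atTop (nhds l) := by
  have hint : IntegrableOn (fun t => (c t : ℂ) * w t) (Set.Ioi s) := by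
    refine Integrable.mono' (hci.const_mul K) ?_ ?_
    · apply ContinuousOn.aestronglyMeasurable _ measurableSet_Ioi
      exact (Complex.continuous_ofReal.comp hc).continuousOn.mul
        (hw.mono Set.Ioi_subset_Ici_self)
    · refine (ae_restrict_mem measurableSet_Ioi).mono ?_
      intro t ht
      rw [norm_mul, Complex.norm_real, Real.norm_of_nonneg (hc0 t), mul_comm]
      exact mul_le_mul_of_nonneg_right (hK t (le_of_lt ht)) (hc0 t)
  exact ⟨_, tendsto_limUnder_of_hasDerivAt_of_integrableOn_Ioi
    (fun t ht => hf t (le_of_lt ht)) hint⟩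

/-- Liouville formula. -/
lemma liouville (c : ℝ → ℝ) (hc : Continuous c) (s : ℝ) (D : ℝ → ℂ) (hD1 : D s = 1)
    (hD : ∀ t ≥ s, HasDerivAt D (-2 * c t * D t) t) :
    ∀ t ≥ s, D t = Complex.exp (-2 * ((∫ x in s..t, c x : ℝ) : ℂ)) := by
  have hG : ∀ t, HasDerivAt (fun t => ((∫ x in s..t, c x : ℝ) : ℂ)) (c t : ℂ) t := fun t =>
    (intervalIntegral.integral_hasDerivAt_right (hc.intervalIntegrable _ _)
      (hc.stronglyMeasurableAtFilter _ _) hc.continuousAt).ofReal_comp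
  have hF : ∀ t ≥ s, HasDerivAt
      (fun t => D t * Complex.exp (2 * ((∫ x in s..t, c x : ℝ) : ℂ))) 0 t := by
    intro t ht
    refine HasDerivAt.congr_deriv ((hD t ht).mul ((hG t).const_mul 2).cexp) ?_
    ring
  intro t ht
  have key := constant_of_has_deriv_right_zero (a := s) (b := t)
    (fun x hx => (hF x hx.1).continuousAt.continuousWithinAt)
    (fun x hx => (hF x hx.1).hasDerivWithinAt) t ⟨ht, le_rfl⟩
  simp only [intervalIntegral.integral_same, hD1] at key
  rw [neg_mul, Complex.exp_neg]
  apply eq_inv_of_mul_eq_one_left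
  simpa using key

/-- For integrable nonnegative dissipation `b`, the limit
`Q(∞,s) = lim_{t→∞} E₀(s−t)·E(t,s)` exists and is an invertible matrix. -/
theorem Q_limit_invertible
    (Λ : ℝ) (hΛ : 0 < Λ) (b : ℝ → ℝ)
    (hbc : ContinuousOn b (Set.Ici 0))
    (hb0 : ∀ t ≥ (0:ℝ), 0 ≤ b t) (hbi : IntegrableOn b (Set.Ici 0))
    (E : ℝ → ℝ → Matrix (Fin 2) (Fin 2) ℂ)
    (hE0 : ∀ s ≥ (0:ℝ), E s s = 1)
    (hE : ∀ s ≥ (0:ℝ), ∀ t ≥ s, ∀ i j : Fin 2,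
      HasDerivAt (fun τ => E τ s i j) ((sysMat Λ b t * E t s) i j) t) :
    ∀ s ≥ (0:ℝ), ∃ Qinf : Matrix (Fin 2) (Fin 2) ℂ,
      Tendsto (fun t => freeMat Λ (s - t) * E t s) atTop (nhds Qinf) ∧
      IsUnit Qinf := by
  intro s hs
  obtain ⟨c, hcdef⟩ : ∃ c : ℝ → ℝ, c = fun t => b (max t 0) := ⟨_, rfl⟩
  have hcb : ∀ t ≥ (0:ℝ), c t = b t := by
    intro t ht
    simp [hcdef, max_eq_left ht]
  have hc : Continuous c := by
    rw [hcdef]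
    exact hbc.comp_continuous (by fun_prop) (fun x => Set.mem_Ici.2 (le_max_right _ _))
  have hc0 : ∀ t, 0 ≤ c t := by
    intro t
    rw [hcdef]
    exact hb0 _ (le_max_right _ _)
  have hci : IntegrableOn c (Set.Ioi s) := by
    refine (hbi.mono_set (fun x hx => hs.trans (le_of_lt hx))).congr_fun ?_ measurableSet_Ioi
    intro x hx
    exact (hcb x (hs.trans (le_of_lt hx))).symm
  have hu : ∀ j, ∀ t ≥ s, HasDerivAt (fun τ => E τ s 0 j) (Λ * E t s 1 j) t := by
    intro j t ht
    convert hE s hs t ht 0 j using 1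
    simp [sysMat, Matrix.mul_apply, Fin.sum_univ_two]
  have hv : ∀ j, ∀ t ≥ s, HasDerivAt (fun τ => E τ s 1 j)
      (-Λ * E t s 0 j - 2 * c t * E t s 1 j) t := by
    intro j t ht
    convert hE s hs t ht 1 j using 1
    simp [sysMat, Matrix.mul_apply, Fin.sum_univ_two, hcb t (hs.trans ht)]
    ring
  have hbound : ∀ j, ∀ t ≥ s, ‖E t s 1 j‖ ≤ 1 := by
    intro j t ht
    have h := energy_bound Λ c s hc0 _ _ (hu j) (hv j) t ht
    have h1 : ‖E s s 0 j‖ ^ 2 + ‖E s s 1 j‖ ^ 2 = 1 := by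
      rw [hE0 s hs]
      clear h
      revert j
      simp [Fin.forall_fin_two]
    rw [h1] at h
    nlinarith [sq_nonneg ‖E t s 0 j‖, norm_nonneg (E t s 1 j)]
  have hcos : ∀ t, HasDerivAt (fun t => (Real.cos (Λ * (s - t)) : ℂ))
      (Λ * Real.sin (Λ * (s - t)) : ℂ) t := by
    intro t
    have h := (((hasDerivAt_id t).const_sub s).const_mul Λ).cos.ofReal_comp
    refine HasDerivAt.congr_deriv h ?_
    simp only [id]
    push_cast
    ring
  have hsin : ∀ t, HasDerivAt (fun t => (Real.sin (Λ * (s - t)) : ℂ))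
      (-Λ * Real.cos (Λ * (s - t)) : ℂ) t := by
    intro t
    have h := (((hasDerivAt_id t).const_sub s).const_mul Λ).sin.ofReal_comp
    refine HasDerivAt.congr_deriv h ?_
    simp only [id]
    push_cast
    ring
  have hvc : ∀ j, ContinuousOn (fun t => E t s 1 j) (Set.Ici s) := fun j t ht =>
    (hv j t ht).continuousAt.continuousWithinAt
  have hlim : ∀ i j, ∃ l, Tendsto (fun t => (freeMat Λ (s - t) * E t s) i j) atTop (nhds l) := by
    intro i j
    fin_cases i
    · refine lim_of_deriv c hc s 2 hc0 hci _
        (fun t => -2 * (Real.sin (Λ * (s - t)) : ℂ) * E t s 1 j) ?_ ?_ ?_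
      · exact ContinuousOn.mul (Continuous.continuousOn (by fun_prop)) (hvc j)
      · intro t ht
        have h1 := hbound j t ht
        have h2 := Real.abs_sin_le_one (Λ * (s - t))
        rw [norm_mul, norm_mul, Complex.norm_real, Real.norm_eq_abs]
        simp only [norm_neg, Complex.norm_ofNat]
        nlinarith [norm_nonneg (E t s 1 j), abs_nonneg (Real.sin (Λ * (s - t)))]
      · intro t ht
        have h := ((hcos t).mul (hu j t ht)).add ((hsin t).mul (hv j t ht))
        refine (h.congr_of_eventuallyEq (Eventually.of_forall ?_)).congr_deriv ?_
        · intro τ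
          simp [freeMat, Matrix.mul_apply, Fin.sum_univ_two]
        · ring
    · refine lim_of_deriv c hc s 2 hc0 hci _
        (fun t => -2 * (Real.cos (Λ * (s - t)) : ℂ) * E t s 1 j) ?_ ?_ ?_
      · exact ContinuousOn.mul (Continuous.continuousOn (by fun_prop)) (hvc j)
      · intro t ht
        have h1 := hbound j t ht
        have h2 := Real.abs_cos_le_one (Λ * (s - t))
        rw [norm_mul, norm_mul, Complex.norm_real, Real.norm_eq_abs]
        simp only [norm_neg, Complex.norm_ofNat]
        nlinarith [norm_nonneg (E t s 1 j), abs_nonneg (Real.cos (Λ * (s - t)))]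
      · intro t ht
        have h := ((hcos t).mul (hv j t ht)).sub ((hsin t).mul (hu j t ht))
        refine (h.congr_of_eventuallyEq (Eventually.of_forall ?_)).congr_deriv ?_
        · intro τ
          simp [freeMat, Matrix.mul_apply, Fin.sum_univ_two]
          ring
        · ring
  choose L hL using hlim
  have hT : Tendsto (fun t => freeMat Λ (s - t) * E t s) atTop (nhds (Matrix.of L)) :=
    tendsto_pi_nhds.2 fun i => tendsto_pi_nhds.2 fun j => hL i j
  refine ⟨Matrix.of L, hT, ?_⟩
  have hdet : Tendsto (fun t => (freeMat Λ (s - t) * E t s).det) atTop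
      (nhds (Matrix.of L).det) :=
    ((Continuous.matrix_det continuous_id).tendsto _).comp hT
  have hDd : ∀ t ≥ s, HasDerivAt (fun t => (E t s).det) (-2 * c t * (E t s).det) t := by
    intro t ht
    have h := ((hu 0 t ht).mul (hv 1 t ht)).sub ((hu 1 t ht).mul (hv 0 t ht))
    refine (h.congr_of_eventuallyEq (Eventually.of_forall ?_)).congr_deriv ?_
    · intro τ
      simp [Matrix.det_fin_two]
    · simp only [Matrix.det_fin_two]
      ring
  have hDE := liouville c hc s (fun t => (E t s).det) (by simp [hE0 s hs]) hDd
  have hG : Tendsto (fun t => ∫ x in s..t, c x) atTop (nhds (∫ x in Set.Ioi s, c x)) :=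
    intervalIntegral_tendsto_integral_Ioi s hci tendsto_id
  have hexp : Tendsto (fun t => Complex.exp (-2 * ((∫ x in s..t, c x : ℝ) : ℂ))) atTop
      (nhds (Complex.exp (-2 * ((∫ x in Set.Ioi s, c x : ℝ) : ℂ)))) :=
    (Complex.continuous_exp.tendsto _).comp
      (((Complex.continuous_ofReal.tendsto _).comp hG).const_mul _)
  have hfree : ∀ t, (freeMat Λ t).det = 1 := by
    intro t
    rw [Matrix.det_fin_two]
    simp only [freeMat, Matrix.of_apply, Matrix.cons_val', Matrix.cons_val_zero,
      Matrix.cons_val_one, Matrix.cons_val_fin_one]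
    have := Real.sin_sq_add_cos_sq (Λ * t)
    norm_cast
    linarith
  have heq : (Matrix.of L).det = Complex.exp (-2 * ((∫ x in Set.Ioi s, c x : ℝ) : ℂ)) := by
    refine tendsto_nhds_unique (hdet.congr' ?_) hexp
    filter_upwards [eventually_ge_atTop s] with t ht
    rw [Matrix.det_mul, hfree, one_mul]
    exact hDE t ht
  rw [Matrix.isUnit_iff_isUnit_det, heq]
  exact (Complex.exp_ne_zero _).isUnit
end

section
/- Let b : [0,∞) → ℝ be continuously differentiable with b(t) ≥ 0, b(t) ≤ C₁(1+t)^{−1} and |b'(t)| ≤ C₂(1+t)^{−2} for all t ≥ 0, and assume limsup_{t→∞} t·b(t) < 1/2. Set λ(t) = exp(∫₀^t b(τ)dτ). Let N > 0, γ ≥ 0 and K > 0 be such that Λ^γ·λ(t)² ≤ K whenever Λ > 0, t ≥ 0 and Λ(1+t) ≤ N. Then there is a constant C > 0 (depending only on b, N, γ, K) such that for all Λ > 0 and all t ≥ 0 with Λ(1+t) ≤ N, the fundamental solution E(t,0) of the dissipative system satisfies the entrywise bounds |E(t,0)_{11}| ≤ C·Λ^{−γ}·λ(t)^{−2}, |E(t,0)_{21}|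 ≤ C·Λ^{−γ}·λ(t)^{−2}, |E(t,0)_{12}| ≤ C·λ(t)^{−2}, |E(t,0)_{22}| ≤ C·λ(t)^{−2}. -/
open MeasureTheory Filter

/-- The auxiliary function `λ(t) = exp(∫₀^t b)`. -/
noncomputable def lam (b : ℝ → ℝ) (t : ℝ) : ℝ := Real.exp (∫ τ in (0:ℝ)..t, b τ)

lemma aux_G (b L : ℝ → ℝ) (C₁ : ℝ)
    (hLc : Continuous L) (hLpos : ∀ t, 0 < L t) (hL0 : L 0 = 1)
    (hL : ∀ t ≥ (0:ℝ), HasDerivAt L (b t * L t) t)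
    (hb0 : ∀ t ≥ (0:ℝ), 0 ≤ b t)
    (hb1 : ∀ t ≥ (0:ℝ), b t ≤ C₁ / (1 + t))
    (hlimsup : ∃ μ < (1/2 : ℝ), ∀ᶠ t in atTop, t * b t ≤ μ) :
    ∃ C > (0:ℝ), ∃ G : ℝ → ℝ, G 0 = 0 ∧ (∀ t ≥ (0:ℝ), HasDerivAt G (1 / L t ^ 2) t) ∧
      ∀ t ≥ (0:ℝ), 0 ≤ G t ∧ G t ≤ C * (1 + t) / L t ^ 2 := by
  have hcont : Continuous fun t => 1 / L t ^ 2 :=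
    continuous_const.div (hLc.pow 2) (fun t => (pow_pos (hLpos t) 2).ne')
  have hmono : MonotoneOn L (Set.Ici 0) := by
    apply monotoneOn_of_deriv_nonneg (convex_Ici 0) hLc.continuousOn
    · intro x hx
      rw [interior_Ici] at hx
      exact (hL x hx.le).differentiableAt.differentiableWithinAt
    · intro x hx
      rw [interior_Ici] at hx
      rw [(hL x hx.le).deriv]
      exact mul_nonneg (hb0 x hx.le) (hLpos x).le
  have hL1 : ∀ t ≥ (0:ℝ), 1 ≤ L t := fun t ht => by
    rw [← hL0]; exact hmono (Set.mem_Ici.2 le_rfl) ht ht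
  have hG : ∀ t, HasDerivAt (fun t => ∫ τ in (0:ℝ)..t, 1 / L τ ^ 2) (1 / L t ^ 2) t := fun t =>
    intervalIntegral.integral_hasDerivAt_right (hcont.intervalIntegrable _ _)
      (hcont.stronglyMeasurableAtFilter _ _) hcont.continuousAt
  obtain ⟨μ, hμ, hev⟩ := hlimsup
  obtain ⟨T₀, hT₀⟩ := eventually_atTop.1 hev
  set ε : ℝ := (1/2 - μ)/2 with hε
  have hεpos : 0 < ε := by rw [hε]; linarith
  obtain ⟨T, hT0, hT1, hT2⟩ : ∃ T : ℝ, 0 ≤ T ∧ T₀ ≤ T ∧ C₁ / ε ≤ T :=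
    ⟨max 0 (max T₀ (C₁ / ε)), by simp, by simp, by simp⟩
  have hbt : ∀ t ≥ T, 2 * ε ≤ 1 - 2 * b t * (1 + t) := by
    intro t ht
    have h1 := hT₀ t (hT1.trans ht)
    have ht0 : 0 ≤ t := hT0.trans ht
    have h2 := hb1 t ht0
    have h3 : C₁ / (1 + t) ≤ ε := by
      rw [div_le_iff₀ (by linarith)]
      rw [div_le_iff₀ hεpos] at hT2
      nlinarith
    nlinarith
  refine ⟨max (1 / (2 * ε)) (T * L T ^ 2) , lt_max_of_lt_left (by positivity),
    fun t => ∫ τ in (0:ℝ)..t, 1 / L τ ^ 2, by simp, fun t _ => hG t, ?_⟩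
  set C := max (1 / (2 * ε)) (T * L T ^ 2) with hC
  have hCpos : 0 < C := lt_max_of_lt_left (by positivity)
  set G : ℝ → ℝ := fun t => ∫ τ in (0:ℝ)..t, 1 / L τ ^ 2 with hGdef
  have hGc : Continuous G := continuous_iff_continuousAt.2 fun t => (hG t).continuousAt
  have hsmall : ∀ t, 0 ≤ t → t ≤ T → G t ≤ C * (1 + t) / L t ^ 2 := by
    intro t ht htT
    have h1 : G t ≤ t := by
      have := image_le_of_deriv_right_le_deriv_boundary (f := G) (f' := fun t => 1 / L t ^ 2)
        (B := fun t => t) (B' := fun _ => 1) (a := 0) (b := t) hGc.continuousOn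
        (fun x _ => (hG x).hasDerivWithinAt) (by simp [hGdef]) continuousOn_id
        (fun x _ => (hasDerivAt_id x).hasDerivWithinAt)
        (fun x hx => by
          rw [div_le_one (pow_pos (hLpos x) 2)]
          exact one_le_pow₀ (hL1 x hx.1))
      exact this (Set.right_mem_Icc.2 ht)
    refine h1.trans ?_
    rw [le_div_iff₀ (pow_pos (hLpos t) 2)]
    have h2 : L t ^ 2 ≤ L T ^ 2 := pow_le_pow_left₀ (hLpos t).le (hmono ht hT0 htT) 2
    have h3 : T * L T ^ 2 ≤ C := le_max_right _ _
    calc t * L t ^ 2 ≤ T * L T ^ 2 := mul_le_mul htT h2 (sq_nonneg _) hT0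
      _ ≤ C := h3
      _ ≤ C * (1 + t) := by nlinarith
  intro t ht
  refine ⟨intervalIntegral.integral_nonneg ht (fun u _ => by positivity), ?_⟩
  rcases le_total t T with h | h
  · exact hsmall t ht h
  have hB : ∀ x ≥ (0:ℝ), HasDerivAt (fun x => C * (1 + x) / L x ^ 2)
      (C * (1 - 2 * b x * (1 + x)) / L x ^ 2) x := by
    intro x hx
    have h1 : HasDerivAt (fun x => C * (1 + x)) C x := by
      simpa using ((hasDerivAt_id x).const_add 1).const_mul C
    have h2 := h1.div ((hL x hx).pow 2) (pow_pos (hLpos x) 2).ne'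
    refine h2.congr_deriv ?_
    have := (hLpos x).ne'
    simp only [Pi.pow_apply]
    field_simp
    ring
  have := image_le_of_deriv_right_le_deriv_boundary (f := G) (f' := fun t => 1 / L t ^ 2)
        (B := fun x => C * (1 + x) / L x ^ 2)
        (B' := fun x => C * (1 - 2 * b x * (1 + x)) / L x ^ 2) (a := T) (b := t) hGc.continuousOn
        (fun x _ => (hG x).hasDerivWithinAt) (hsmall T hT0 le_rfl)
        (fun x hx => (hB x (hT0.trans hx.1)).continuousAt.continuousWithinAt)
        (fun x hx => (hB x (hT0.trans hx.1)).hasDerivWithinAt)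
        (fun x hx => by
          have := pow_pos (hLpos x) 2
          gcongr
          have h1 := hbt x hx.1
          have h2 : 1 / (2 * ε) ≤ C := le_max_left _ _
          rw [div_le_iff₀ (by positivity)] at h2
          nlinarith)
  exact this (Set.right_mem_Icc.2 h)

lemma aux_col2 (b L G : ℝ → ℝ) (C : ℝ) (hC : 0 < C)
    (hLpos : ∀ t, 0 < L t) (hL0 : L 0 = 1)
    (hL : ∀ t ≥ (0:ℝ), HasDerivAt L (b t * L t) t)
    (hG0 : G 0 = 0) (hG : ∀ t ≥ (0:ℝ), HasDerivAt G (1 / L t ^ 2) t)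
    (hGb : ∀ t ≥ (0:ℝ), 0 ≤ G t ∧ G t ≤ C * (1 + t) / L t ^ 2)
    (Λ : ℝ) (hΛ : 0 < Λ) (v w : ℝ → ℂ) (hv0 : v 0 = 0) (hw0 : w 0 = 1)
    (hv : ∀ t ≥ (0:ℝ), HasDerivAt v (Λ * w t) t)
    (hw : ∀ t ≥ (0:ℝ), HasDerivAt w (-Λ * v t + ((-2 * b t : ℝ) : ℂ) * w t) t)
    (t : ℝ) (ht : 0 ≤ t) :
    ‖v t‖ * L t ^ 2 ≤ 2 * Real.exp (C * (Λ * (1 + t)) ^ 2) * (C * (Λ * (1 + t))) ∧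
    ‖w t‖ * L t ^ 2 ≤ 2 * Real.exp (C * (Λ * (1 + t)) ^ 2) := by
  set y : ℝ → ℂ := fun s => ((L s ^ 2 : ℝ) : ℂ) * w s with hy
  set W : ℝ → ℝ := fun s => Real.exp (C * (Λ * (1 + s)) ^ 2) with hW
  have hWpos : ∀ s, 0 < W s := fun s => Real.exp_pos _
  have hW1 : ∀ s, 1 ≤ W s := fun s => Real.one_le_exp (by positivity)
  have hWd : ∀ s, HasDerivAt W (W s * (2 * C * Λ ^ 2 * (1 + s))) s := by
    intro s
    have h1 : HasDerivAt (fun s => Λ * (1 + s)) Λ s := by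
      simpa using ((hasDerivAt_id s).const_add 1).const_mul Λ
    have h2 := ((h1.pow 2).const_mul C).exp
    refine h2.congr_deriv ?_
    simp only [Pi.pow_apply, hW]
    push_cast
    ring
  have hyd : ∀ s ≥ (0:ℝ), HasDerivAt y (-((Λ * L s ^ 2 : ℝ) : ℂ) * v s) s := by
    intro s hs
    have h1 := (((hL s hs).pow 2).ofReal_comp).mul (hw s hs)
    refine h1.congr_deriv ?_
    simp only [Pi.pow_apply]
    push_cast
    ring
  have hyn : ∀ s, ‖y s‖ = ‖w s‖ * L s ^ 2 := by
    intro s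
    rw [hy]
    simp only [norm_mul, Complex.norm_real, Real.norm_eq_abs]
    rw [abs_of_pos (pow_pos (hLpos s) 2), mul_comm]
  have hyc : ContinuousOn y (Set.Icc 0 t) := fun s hs =>
    (hyd s hs.1).continuousAt.continuousWithinAt
  obtain ⟨s₀, hs₀, hmax⟩ := isCompact_Icc.exists_isMaxOn (Set.nonempty_Icc.2 ht)
    (f := fun s => ‖y s‖ / W s)
    (hyc.norm.div (fun s _ => (hWd s).continuousAt.continuousWithinAt) (fun s _ => (hWpos s).ne'))
  set M := ‖y s₀‖ / W s₀ with hM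
  have hM0 : 0 ≤ M := div_nonneg (norm_nonneg _) (hWpos _).le
  have hyM : ∀ s ∈ Set.Icc 0 t, ‖y s‖ ≤ M * W s := fun s hs => by
    have := hmax hs
    simp only [Set.mem_ofPred_eq] at this
    rwa [div_le_iff₀ (hWpos s)] at this
  have hvb : ∀ s ∈ Set.Icc 0 t, ‖v s‖ ≤ Λ * M * (W s * G s) := by
    refine image_norm_le_of_norm_deriv_right_le_deriv_boundary' (f := v) (f' := fun s => (Λ : ℂ) * w s)
      (B := fun s => Λ * M * (W s * G s))
      (B' := fun s => Λ * M * (W s * (2 * C * Λ ^ 2 * (1 + s)) * G s + W s * (1 / L s ^ 2))) ?_ ?_ ?_ ?_ ?_ ?_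
    · exact fun s hs => (hv s hs.1).continuousAt.continuousWithinAt
    · exact fun s hs => (hv s hs.1).hasDerivWithinAt
    · simp [hv0, hG0]
    · exact fun s hs => (((hWd s).mul (hG s hs.1)).const_mul _).continuousAt.continuousWithinAt
    · exact fun s hs => (((hWd s).mul (hG s hs.1)).const_mul _).hasDerivWithinAt
    · intro s hs
      have h1 := hyM s ⟨hs.1, hs.2.le⟩
      have hp := pow_pos (hLpos s) 2
      rw [hyn, ← le_div_iff₀ hp] at h1
      rw [norm_mul, Complex.norm_real, Real.norm_eq_abs, abs_of_pos hΛ]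
      have h2 : 0 ≤ W s * (2 * C * Λ ^ 2 * (1 + s)) * G s := by
        have := (hGb s hs.1).1
        have := hs.1
        have := hWpos s
        positivity
      calc Λ * ‖w s‖ ≤ Λ * (M * W s / L s ^ 2) := by gcongr
        _ = Λ * M * (0 + W s * (1 / L s ^ 2)) := by ring
        _ ≤ _ := by gcongr
  have hvL : ∀ s ∈ Set.Icc 0 t, ‖v s‖ * L s ^ 2 ≤ M * W s * (C * (Λ * (1 + s))) := by
    intro s hs
    have hp := pow_pos (hLpos s) 2
    have h2 := (hGb s hs.1).2
    rw [le_div_iff₀ hp] at h2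
    have := hWpos s
    calc ‖v s‖ * L s ^ 2 ≤ Λ * M * (W s * G s) * L s ^ 2 := by gcongr; exact hvb s hs
      _ = Λ * M * W s * (G s * L s ^ 2) := by ring
      _ ≤ Λ * M * W s * (C * (1 + s)) := by gcongr
      _ = _ := by ring
  have hyb : ∀ s ∈ Set.Icc 0 t, ‖y s‖ ≤ 1 + M / 2 * W s := by
    refine image_norm_le_of_norm_deriv_right_le_deriv_boundary'
      (f := y) (B := fun s => 1 + M / 2 * W s)
      (f' := fun s => -((Λ * L s ^ 2 : ℝ) : ℂ) * v s)
      (B' := fun s => M / 2 * (W s * (2 * C * Λ ^ 2 * (1 + s)))) ?_ ?_ ?_ ?_ ?_ ?_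
    · exact hyc
    · exact fun s hs => (hyd s hs.1).hasDerivWithinAt
    · rw [hyn, hw0, hL0]
      have := hWpos 0
      have : 0 ≤ M / 2 * W 0 := by positivity
      simpa using this
    · exact fun s hs => (((hWd s).const_mul _).const_add _).continuousAt.continuousWithinAt
    · exact fun s hs => (((hWd s).const_mul _).const_add _).hasDerivWithinAt
    · intro s hs
      have h1 := hvL s ⟨hs.1, hs.2.le⟩
      have hp := pow_pos (hLpos s) 2
      rw [norm_mul, norm_neg, Complex.norm_real, Real.norm_eq_abs, abs_of_pos (by positivity)]
      calc Λ * L s ^ 2 * ‖v s‖ = Λ * (‖v s‖ * L s ^ 2) := by ring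
        _ ≤ Λ * (M * W s * (C * (Λ * (1 + s)))) := by gcongr
        _ = _ := by ring
  have hM2 : M ≤ 2 := by
    have h1 := hyb s₀ hs₀
    have h2 : M * W s₀ = ‖y s₀‖ := div_mul_cancel₀ _ (hWpos s₀).ne'
    have h3 := hW1 s₀
    nlinarith
  have htt : t ∈ Set.Icc 0 t := Set.right_mem_Icc.2 ht
  have hWt := hWpos t
  constructor
  · refine (hvL t htt).trans ?_
    change M * W t * _ ≤ 2 * W t * _
    gcongr
  · rw [← hyn]
    refine (hyM t htt).trans ?_
    change M * W t ≤ 2 * W t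
    gcongr

lemma aux_col1 (b : ℝ → ℝ) (hb0 : ∀ t ≥ (0:ℝ), 0 ≤ b t)
    (Λ : ℝ) (v w : ℝ → ℂ) (hv0 : v 0 = 1) (hw0 : w 0 = 0)
    (hv : ∀ t ≥ (0:ℝ), HasDerivAt v (Λ * w t) t)
    (hw : ∀ t ≥ (0:ℝ), HasDerivAt w (-Λ * v t + ((-2 * b t : ℝ) : ℂ) * w t) t)
    (t : ℝ) (ht : 0 ≤ t) : ‖v t‖ ≤ 1 ∧ ‖w t‖ ≤ 1 := by
  have hd : ∀ s ≥ (0:ℝ), HasDerivAt (fun s => ‖v s‖ ^ 2 + ‖w s‖ ^ 2)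
      (-4 * b s * ‖w s‖ ^ 2) s := by
    intro s hs
    refine ((hv s hs).norm_sq.add (hw s hs).norm_sq).congr_deriv ?_
    rw [Complex.inner, Complex.inner, ← Complex.normSq_eq_norm_sq, Complex.normSq_apply]
    simp
    ring
  have hle : ‖v t‖ ^ 2 + ‖w t‖ ^ 2 ≤ 1 := by
    have := image_le_of_deriv_right_le_deriv_boundary (f := fun s => ‖v s‖ ^ 2 + ‖w s‖ ^ 2)
      (f' := fun s => -4 * b s * ‖w s‖ ^ 2) (B := fun _ => (1:ℝ)) (B' := fun _ => 0)
      (a := 0) (b := t) (fun s hs => (hd s hs.1).continuousAt.continuousWithinAt)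
      (fun s hs => (hd s hs.1).hasDerivWithinAt) (by simp [hv0, hw0]) continuousOn_const
      (fun s _ => (hasDerivAt_const s _).hasDerivWithinAt)
      (fun s hs => by
        have := mul_nonneg (hb0 s hs.1) (sq_nonneg ‖w s‖)
        nlinarith)
    exact this (Set.right_mem_Icc.2 ht)
  constructor <;> nlinarith [norm_nonneg (v t), norm_nonneg (w t), sq_nonneg ‖v t‖, sq_nonneg ‖w t‖]

/-- Dissipative-zone estimate in the case
`limsup t·b(t) < 1/2`: on the zone `Λ(1+t) ≤ N` the entries of the fundamental
solution `E(t,0)` are bounded by `C·Λ^{−γ}·λ(t)^{−2}` (first column) and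
`C·λ(t)^{−2}` (second column). -/
theorem dissipative_zone_estimate_C1
    (b b' : ℝ → ℝ) (C₁ C₂ : ℝ)
    (hb' : ∀ t ≥ (0:ℝ), HasDerivAt b (b' t) t)
    (hb'c : ContinuousOn b' (Set.Ici 0))
    (hb0 : ∀ t ≥ (0:ℝ), 0 ≤ b t)
    (hb1 : ∀ t ≥ (0:ℝ), b t ≤ C₁ / (1 + t))
    (hb2 : ∀ t ≥ (0:ℝ), |b' t| ≤ C₂ / (1 + t) ^ 2)
    (hlimsup : ∃ μ < (1/2 : ℝ), ∀ᶠ t in atTop, t * b t ≤ μ)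
    (N γ K : ℝ) (hN : 0 < N) (hγ : 0 ≤ γ) (hK : 0 < K)
    (hzone : ∀ Λ > (0:ℝ), ∀ t ≥ (0:ℝ), Λ * (1 + t) ≤ N → Λ ^ γ * (lam b t) ^ 2 ≤ K) :
    ∃ C > (0:ℝ), ∀ Λ > (0:ℝ), ∀ E : ℝ → Matrix (Fin 2) (Fin 2) ℂ,
      E 0 = 1 →
      (∀ t ≥ (0:ℝ), ∀ i j : Fin 2,
        HasDerivAt (fun τ => E τ i j) ((sysMat Λ b t * E t) i j) t) →
      ∀ t ≥ (0:ℝ), Λ * (1 + t) ≤ N →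
        ‖E t 0 0‖ ≤ C * Λ ^ (-γ) / (lam b t) ^ 2 ∧
        ‖E t 1 0‖ ≤ C * Λ ^ (-γ) / (lam b t) ^ 2 ∧
        ‖E t 0 1‖ ≤ C / (lam b t) ^ 2 ∧
        ‖E t 1 1‖ ≤ C / (lam b t) ^ 2 := by
  set β : ℝ → ℝ := fun t => b (max t 0) with hβ
  have hβb : ∀ t ≥ (0:ℝ), β t = b t := fun t ht => by simp [hβ, max_eq_left ht]
  have hβc : Continuous β := continuous_iff_continuousAt.2 fun t =>
    ContinuousAt.comp (f := fun t : ℝ => max t 0) (g := b) (x := t)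
      (hb' (max t 0) (le_max_right _ _)).continuousAt
      (continuous_id.max continuous_const).continuousAt
  set L : ℝ → ℝ := lam β with hLdef
  have hLlam : ∀ t ≥ (0:ℝ), lam b t = L t := by
    intro t ht
    simp only [hLdef, lam]
    congr 1
    apply intervalIntegral.integral_congr
    intro s hs
    rw [Set.uIcc_of_le ht] at hs
    exact (hβb s hs.1).symm
  have hLd : ∀ t, HasDerivAt L (β t * L t) t := by
    intro t
    have h1 : HasDerivAt (fun t => ∫ τ in (0:ℝ)..t, β τ) (β t) t :=
      intervalIntegral.integral_hasDerivAt_right (hβc.intervalIntegrable _ _)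
        (hβc.stronglyMeasurableAtFilter _ _) hβc.continuousAt
    exact h1.exp.congr_deriv (mul_comm _ _)
  have hLc : Continuous L := continuous_iff_continuousAt.2 fun t => (hLd t).continuousAt
  have hLpos : ∀ t, 0 < L t := fun t => Real.exp_pos _
  have hL0 : L 0 = 1 := by simp [hLdef, lam]
  have hL : ∀ t ≥ (0:ℝ), HasDerivAt L (b t * L t) t := fun t ht => by
    rw [← hβb t ht]; exact hLd t
  obtain ⟨C, hC, G, hG0, hG, hGb⟩ := aux_G b L C₁ hLc hLpos hL0 hL hb0 hb1 hlimsup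
  refine ⟨K + 2 * Real.exp (C * N ^ 2) * (1 + C * N), by positivity, ?_⟩
  intro Λ hΛ E hE0 hE t ht hz
  have hz1 := hzone Λ hΛ t ht hz
  rw [hLlam t ht] at hz1 ⊢
  have hp := pow_pos (hLpos t) 2
  have hv : ∀ j, ∀ t ≥ (0:ℝ), HasDerivAt (fun τ => E τ 0 j) (Λ * E t 1 j) t := by
    intro j t ht
    have := hE t ht 0 j
    simpa [sysMat, Matrix.mul_apply, Fin.sum_univ_two] using this
  have hw : ∀ j, ∀ t ≥ (0:ℝ), HasDerivAt (fun τ => E τ 1 j)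
      (-Λ * E t 0 j + ((-2 * b t : ℝ) : ℂ) * E t 1 j) t := by
    intro j t ht
    have := hE t ht 1 j
    simpa [sysMat, Matrix.mul_apply, Fin.sum_univ_two] using this
  obtain ⟨a1, a2⟩ := aux_col1 b hb0 Λ (fun τ => E τ 0 0) (fun τ => E τ 1 0) (by simp [hE0])
    (by simp [hE0]) (hv 0) (hw 0) t ht
  obtain ⟨c1, c2⟩ := aux_col2 b L G C hC hLpos hL0 hL hG0 hG hGb Λ hΛ (fun τ => E τ 0 1)
    (fun τ => E τ 1 1) (by simp [hE0]) (by simp [hE0]) (hv 1) (hw 1) t ht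
  have hpos : 0 < Λ * (1 + t) := by positivity
  have hexp : Real.exp (C * (Λ * (1 + t)) ^ 2) ≤ Real.exp (C * N ^ 2) := by gcongr
  have hone : 1 ≤ (K + 2 * Real.exp (C * N ^ 2) * (1 + C * N)) * Λ ^ (-γ) / L t ^ 2 := by
    have hg : 0 < Λ ^ γ := Real.rpow_pos_of_pos hΛ γ
    rw [le_div_iff₀ hp, Real.rpow_neg hΛ.le, ← div_eq_mul_inv, le_div_iff₀ hg]
    have : 0 < 2 * Real.exp (C * N ^ 2) * (1 + C * N) := by positivity
    nlinarith
  refine ⟨a1.trans hone, a2.trans hone, ?_, ?_⟩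
  · rw [le_div_iff₀ hp]
    refine c1.trans ?_
    calc _ ≤ 2 * Real.exp (C * N ^ 2) * (C * N) := by gcongr
      _ ≤ _ := by nlinarith [Real.exp_pos (C * N ^ 2)]
  · rw [le_div_iff₀ hp]
    refine c2.trans ?_
    have : 0 < Real.exp (C * N ^ 2) * (C * N) := by positivity
    nlinarith
end

section
/- Let b : [0,∞) → ℝ be continuously differentiable with b(t) ≥ 0, b(t) ≤ C₁(1+t)^{−1} and |b'(t)| ≤ C₂(1+t)^{−2} for all t ≥ 0, and assume liminf_{t→∞} t·b(t) > 1/2. Let N > 0. Then there is a constant C > 0 (depending only on b and N) such that for all Λ > 0 and all t ≥ 0 with Λ(1+t) ≤ N, the fundamental solution E(t,0) of the dissipative system satisfies the entrywise bounds |E(t,0)_{11}| ≤ C·Λ^{−1}(1+t)^{−1}, |E(t,0)_{21}| ≤ C·Λ^{−1}(1+t)^{−1}, |E(t,0)_{12}| ≤ C·(1+t)^{−1}, |E(t,0)_{22}| ≤ C·(1+t)^{−1}. -/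
open MeasureTheory Filter

theorem dz_energy (b v w : ℝ → ℝ) (Λ : ℝ) (hb0 : ∀ t ≥ (0:ℝ), 0 ≤ b t)
    (hv : ∀ t ≥ (0:ℝ), HasDerivAt v (Λ * w t) t)
    (hw : ∀ t ≥ (0:ℝ), HasDerivAt w (-Λ * v t - 2 * b t * w t) t)
    (h0 : v 0 ^ 2 + w 0 ^ 2 ≤ 1) (t : ℝ) (ht : 0 ≤ t) : |v t| ≤ 1 ∧ |w t| ≤ 1 := by
  have hd : ∀ s ≥ (0:ℝ), HasDerivAt (fun s => v s ^ 2 + w s ^ 2) (-4 * b s * w s ^ 2) s := by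
    intro s hs
    have := ((hv s hs).pow 2).add ((hw s hs).pow 2)
    refine this.congr_deriv ?_
    simp; ring
  have hanti : AntitoneOn (fun s => v s ^ 2 + w s ^ 2) (Set.Ici 0) := by
    apply antitoneOn_of_hasDerivWithinAt_nonpos (convex_Ici 0)
      (fun s hs => (hd s hs).continuousAt.continuousWithinAt)
      (fun s hs => (hd s (interior_subset hs)).hasDerivWithinAt)
    intro s hs
    have := hb0 s (interior_subset hs)
    nlinarith [mul_nonneg this (sq_nonneg (w s))]
  have h1 := hanti (Set.mem_Ici.2 le_rfl) (Set.mem_Ici.2 ht) ht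
  simp only at h1
  constructor <;> rw [← sq_le_one_iff_abs_le_one] <;> nlinarith [sq_nonneg (v t), sq_nonneg (w t)]

theorem dz_late (b v w : ℝ → ℝ) (Λ δ T t η : ℝ) (hΛ : 0 < Λ) (hδ : 0 < δ) (hT : 0 ≤ T) (hTt : T ≤ t)
    (hη : 0 < η)
    (hbδ : ∀ s ≥ T, δ + 1 ≤ 2 * b s * (1 + s))
    (hv : ∀ t ≥ (0:ℝ), HasDerivAt v (w t) t)
    (hw : ∀ t ≥ (0:ℝ), HasDerivAt w (-Λ ^ 2 * v t - 2 * b t * w t) t) :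
    √(v t ^ 2 + η ^ 2) + √(((1 + t) * w t) ^ 2 + η ^ 2) / δ ≤
      Real.exp (Λ ^ 2 * (1 + t) ^ 2 / (2 * δ)) *
        (√(v T ^ 2 + η ^ 2) + √(((1 + T) * w T) ^ 2 + η ^ 2) / δ + η * (t - T)) := by
  set f : ℝ → ℝ := fun s => √(v s ^ 2 + η ^ 2) with hf
  set g : ℝ → ℝ := fun s => √(((1 + s) * w s) ^ 2 + η ^ 2) with hg
  have fpos : ∀ s, 0 < f s := fun s => Real.sqrt_pos.2 (by positivity)
  have gpos : ∀ s, 0 < g s := fun s => Real.sqrt_pos.2 (by positivity)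
  have fsq : ∀ s, f s ^ 2 = v s ^ 2 + η ^ 2 := fun s => Real.sq_sqrt (by positivity)
  have gsq : ∀ s, g s ^ 2 = ((1 + s) * w s) ^ 2 + η ^ 2 := fun s => Real.sq_sqrt (by positivity)
  have fv : ∀ s, |v s| ≤ f s := fun s => by
    apply Real.abs_le_sqrt; nlinarith
  have gw : ∀ s, |(1 + s) * w s| ≤ g s := fun s => by
    apply Real.abs_le_sqrt; nlinarith
  have gη : ∀ s, η ≤ g s := fun s => by
    apply Real.le_sqrt_of_sq_le; nlinarith [sq_nonneg ((1 + s) * w s)]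
  have hfd : ∀ s ≥ (0:ℝ), HasDerivAt f (v s * w s / f s) s := by
    intro s hs
    have := (((hv s hs).pow 2).add_const (η ^ 2)).sqrt (by simp; positivity)
    refine this.congr_deriv ?_
    have := (fpos s).ne'
    simp only [hf] at this ⊢
    simp
    field_simp
  have hgd : ∀ s ≥ (0:ℝ), HasDerivAt g
      (((1 + s) * w s) * (w s + (1 + s) * (-Λ ^ 2 * v s - 2 * b s * w s)) / g s) s := by
    intro s hs
    have := ((((((hasDerivAt_id s).const_add 1).mul (hw s hs))).pow 2).add_const (η ^ 2)).sqrt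
      (by simp; positivity)
    refine this.congr_deriv ?_
    have := (gpos s).ne'
    simp only [hg] at this ⊢
    simp
    field_simp
  have hed : ∀ s, HasDerivAt (fun s : ℝ => Real.exp (-(Λ ^ 2 * (1 + s) ^ 2 / (2 * δ))))
      (Real.exp (-(Λ ^ 2 * (1 + s) ^ 2 / (2 * δ))) * (-(Λ ^ 2 * (1 + s) / δ))) s := by
    intro s
    have := (((((((hasDerivAt_id s).const_add 1).pow 2).const_mul (Λ ^ 2)).div_const (2 * δ)).neg)).exp
    refine this.congr_deriv ?_
    simp
    field_simp
  set e : ℝ → ℝ := fun s : ℝ => Real.exp (-(Λ ^ 2 * (1 + s) ^ 2 / (2 * δ))) with he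
  have epos : ∀ s, 0 < e s := fun s => Real.exp_pos _
  have ele : ∀ s, e s ≤ 1 := fun s => Real.exp_le_one_iff.2 (by
    have : 0 ≤ Λ ^ 2 * (1 + s) ^ 2 / (2 * δ) := by positivity
    linarith)
  have hZ : ∀ s ≥ (0:ℝ), HasDerivAt (fun s => (f s + g s / δ) * e s - η * s)
      ((v s * w s / f s +
        (((1 + s) * w s) * (w s + (1 + s) * (-Λ ^ 2 * v s - 2 * b s * w s)) / g s) / δ) * e s
        + (f s + g s / δ) * (e s * (-(Λ ^ 2 * (1 + s) / δ))) - η * 1) s := by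
    intro s hs
    exact (((hfd s hs).add ((hgd s hs).div_const δ)).mul (hed s)).sub
      ((hasDerivAt_id s).const_mul η)
  have hanti : AntitoneOn (fun s => (f s + g s / δ) * e s - η * s) (Set.Ici T) := by
    apply antitoneOn_of_hasDerivWithinAt_nonpos (convex_Ici T)
      (fun s hs => (hZ s (hT.trans hs)).continuousAt.continuousWithinAt)
      (fun s hs => (hZ s (hT.trans (interior_subset hs))).hasDerivWithinAt)
    intro s hs
    have hs' : T ≤ s := interior_subset hs
    have hs0 : 0 ≤ s := hT.trans hs'
    have hp : 0 < 1 + s := by linarith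
    have hb := hbδ s hs'
    have h1 : v s * w s / f s ≤ g s / (1 + s) := by
      rw [div_le_div_iff₀ (fpos s) hp]
      calc v s * w s * (1 + s) = v s * ((1 + s) * w s) := by ring
        _ ≤ |v s| * |(1 + s) * w s| := by rw [← abs_mul]; exact le_abs_self _
        _ ≤ f s * g s := mul_le_mul (fv s) (gw s) (abs_nonneg _) (fpos s).le
        _ = _ := by ring
    have h2 : ((1 + s) * w s) * (w s + (1 + s) * (-Λ ^ 2 * v s - 2 * b s * w s)) / g s
        ≤ -δ * (g s - η) / (1 + s) + Λ ^ 2 * (1 + s) * f s := by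
      rw [div_le_iff₀ (gpos s)]
      have e1 : -(v s * ((1 + s) * w s)) ≤ f s * g s := by
        calc -(v s * ((1 + s) * w s)) ≤ |v s| * |(1 + s) * w s| := by
              rw [← abs_mul]; exact neg_le_abs _
          _ ≤ f s * g s := mul_le_mul (fv s) (gw s) (abs_nonneg _) (fpos s).le
      have e2 : ((1 + s) * w s) * (w s + (1 + s) * (-Λ ^ 2 * v s - 2 * b s * w s))
          = ((1 + s) * w s) ^ 2 * (1 - 2 * b s * (1 + s)) / (1 + s)
            + Λ ^ 2 * (1 + s) * -(v s * ((1 + s) * w s)) := by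
        field_simp
        ring
      have e3 : ((1 + s) * w s) ^ 2 * (1 - 2 * b s * (1 + s)) / (1 + s)
          ≤ -δ * (g s - η) / (1 + s) * g s := by
        rw [div_mul_eq_mul_div]
        apply div_le_div_of_nonneg_right _ hp.le
        have a1 : ((1 + s) * w s) ^ 2 * (1 - 2 * b s * (1 + s)) ≤ ((1 + s) * w s) ^ 2 * (-δ) :=
          mul_le_mul_of_nonneg_left (by linarith) (sq_nonneg _)
        have a2 : δ * (g s ^ 2 - η * g s) ≤ δ * ((1 + s) * w s) ^ 2 :=
          mul_le_mul_of_nonneg_left (by nlinarith [gsq s, gη s]) hδ.le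
        nlinarith
      have e4 : Λ ^ 2 * (1 + s) * -(v s * ((1 + s) * w s)) ≤ Λ ^ 2 * (1 + s) * (f s * g s) :=
        mul_le_mul_of_nonneg_left e1 (by positivity)
      rw [e2]
      nlinarith
    have h3 : v s * w s / f s +
        (((1 + s) * w s) * (w s + (1 + s) * (-Λ ^ 2 * v s - 2 * b s * w s)) / g s) / δ
        ≤ η / (1 + s) + Λ ^ 2 * (1 + s) / δ * f s := by
      have := div_le_div_of_nonneg_right h2 hδ.le
      have e5 : (-δ * (g s - η) / (1 + s) + Λ ^ 2 * (1 + s) * f s) / δ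
        = -(g s / (1 + s)) + η / (1 + s) + Λ ^ 2 * (1 + s) / δ * f s := by
        field_simp
        ring
      linarith
    have h4 : η / (1 + s) ≤ η := div_le_self hη.le (by linarith)
    have h5 := mul_le_mul_of_nonneg_right h3 (epos s).le
    have h6 : η / (1 + s) * e s ≤ η := by
      have : η / (1 + s) * e s ≤ η * 1 := mul_le_mul h4 (ele s) (epos s).le hη.le
      linarith
    have h7 : 0 ≤ g s / δ * (e s * (Λ ^ 2 * (1 + s) / δ)) := by
      have := gpos s
      have := epos s
      positivity
    nlinarith
  have hfin := hanti (Set.mem_Ici.2 le_rfl) (Set.mem_Ici.2 hTt) hTt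
  simp only at hfin
  have hYT : (f T + g T / δ) * e T ≤ f T + g T / δ := by
    have := fpos T
    have := gpos T
    exact mul_le_of_le_one_right (by positivity) (ele T)
  have hee : e t * Real.exp (Λ ^ 2 * (1 + t) ^ 2 / (2 * δ)) = 1 := by
    rw [he, ← Real.exp_add]; simp
  have hpe := Real.exp_pos (Λ ^ 2 * (1 + t) ^ 2 / (2 * δ))
  change f t + g t / δ ≤ Real.exp (Λ ^ 2 * (1 + t) ^ 2 / (2 * δ)) * (f T + g T / δ + η * (t - T))
  calc f t + g t / δ = Real.exp (Λ ^ 2 * (1 + t) ^ 2 / (2 * δ)) * ((f t + g t / δ) * e t) := by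
        rw [mul_comm, mul_assoc, hee, mul_one]
    _ ≤ _ := mul_le_mul_of_nonneg_left (by linarith) hpe.le

set_option maxHeartbeats 1000000 in
theorem dz_real (b : ℝ → ℝ) (hb0 : ∀ t ≥ (0:ℝ), 0 ≤ b t)
    (hliminf : ∃ μ > (1/2 : ℝ), ∀ᶠ t in atTop, μ ≤ t * b t) (N : ℝ) (hN : 0 < N) :
    ∃ C > (0:ℝ), ∀ Λ > (0:ℝ), ∀ v w : ℝ → ℝ,
      v 0 = 0 → |w 0| ≤ 1 →
      (∀ t ≥ (0:ℝ), HasDerivAt v (Λ * w t) t) →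
      (∀ t ≥ (0:ℝ), HasDerivAt w (-Λ * v t - 2 * b t * w t) t) →
      ∀ t ≥ (0:ℝ), Λ * (1 + t) ≤ N → |v t| ≤ C / (1 + t) ∧ |w t| ≤ C / (1 + t) := by
  obtain ⟨μ, hμ, hev⟩ := hliminf
  obtain ⟨T₀, hT₀⟩ := eventually_atTop.1 hev
  set T := max T₀ 0 with hTdef
  have hT : 0 ≤ T := le_max_right _ _
  set δ := 2 * μ - 1 with hδdef
  have hδ : 0 < δ := by linarith
  have hbδ : ∀ s ≥ T, δ + 1 ≤ 2 * b s * (1 + s) := by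
    intro s hs
    have h1 := hT₀ s ((le_max_left _ _).trans hs)
    have h2 := hb0 s (hT.trans hs)
    nlinarith
  set M := Real.exp (N ^ 2 / (2 * δ)) * ((T + 1) + (1 + T + 1) / δ + 1) with hM
  have hMpos : 0 < M := by positivity
  refine ⟨(1 + T) + N * M + δ * M, by positivity, ?_⟩
  intro Λ hΛ v w hv0 hw0 hv hw t ht hz
  have hp : 0 < 1 + t := by linarith
  have hen := dz_energy b v w Λ hb0 hv hw (by
    rw [hv0]; have := sq_le_one_iff_abs_le_one (w 0) |>.2 hw0; linarith)
  rcases le_total t T with htT | hTt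
  · have : 1 ≤ ((1 + T) + N * M + δ * M) / (1 + t) := by
      rw [le_div_iff₀ hp]
      have : 0 < N * M := by positivity
      have : 0 < δ * M := by positivity
      linarith
    exact ⟨(hen t ht).1.trans this, (hen t ht).2.trans this⟩
  · set u : ℝ → ℝ := fun s => v s / Λ with hu
    have hud : ∀ s ≥ (0:ℝ), HasDerivAt u (w s) s := by
      intro s hs
      refine ((hv s hs).div_const Λ).congr_deriv ?_
      field_simp
    have hwd : ∀ s ≥ (0:ℝ), HasDerivAt w (-Λ ^ 2 * u s - 2 * b s * w s) s := by
      intro s hs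
      refine (hw s hs).congr_deriv ?_
      simp only [hu]
      field_simp
    have hu0 : u 0 = 0 := by simp [hu, hv0]
    have huT : |u T| ≤ T := by
      have := Convex.norm_image_sub_le_of_norm_hasDerivWithin_le (f := u) (f' := w) (C := 1)
        (s := Set.Ici 0) (x := 0) (y := T) (fun s hs => (hud s hs).hasDerivWithinAt)
        (fun s hs => (hen s hs).2) (convex_Ici 0) (Set.mem_Ici.2 le_rfl) hT
      simpa [hu0, Real.norm_eq_abs, abs_of_nonneg hT] using this
    set η := 1 / (1 + t) with hη
    have hηpos : 0 < η := by positivity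
    have hη1 : η ≤ 1 := by rw [hη, div_le_one hp]; linarith
    have hlate := dz_late b u w Λ δ T t η hΛ hδ hT hTt hηpos hbδ hud hwd
    have hsq : ∀ x y : ℝ, |x| ≤ y → √(x ^ 2 + η ^ 2) ≤ y + 1 := by
      intro x y hxy
      have hy : 0 ≤ y := (abs_nonneg x).trans hxy
      rw [Real.sqrt_le_left (by linarith)]
      have : x ^ 2 ≤ y ^ 2 := sq_le_sq' (abs_le.1 hxy).1 (abs_le.1 hxy).2
      nlinarith
    have k1 := hsq (u T) T huT
    have k2 := hsq ((1 + T) * w T) (1 + T) (by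
      rw [abs_mul, abs_of_pos (by linarith : 0 < 1 + T)]
      exact mul_le_of_le_one_right (by linarith) (hen T hT).2)
    have k3 : η * (t - T) ≤ 1 := by
      rw [hη, div_mul_eq_mul_div, div_le_one hp]; linarith
    have k4 := div_le_div_of_nonneg_right k2 hδ.le
    have k5 : Real.exp (Λ ^ 2 * (1 + t) ^ 2 / (2 * δ)) ≤ Real.exp (N ^ 2 / (2 * δ)) := by
      apply Real.exp_le_exp.2
      apply div_le_div_of_nonneg_right _ (by positivity)
      rw [← mul_pow]
      exact pow_le_pow_left₀ (by positivity) hz 2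
    have k6 : √(u t ^ 2 + η ^ 2) + √(((1 + t) * w t) ^ 2 + η ^ 2) / δ ≤ M := by
      refine hlate.trans (mul_le_mul k5 (by linarith) ?_ (Real.exp_pos _).le)
      have : 0 ≤ η * (t - T) := mul_nonneg hηpos.le (by linarith)
      positivity
    have k7 : |u t| ≤ √(u t ^ 2 + η ^ 2) := by
      apply Real.abs_le_sqrt; nlinarith
    have k8 : |(1 + t) * w t| ≤ √(((1 + t) * w t) ^ 2 + η ^ 2) := by
      apply Real.abs_le_sqrt; nlinarith
    have k9 : 0 ≤ √(((1 + t) * w t) ^ 2 + η ^ 2) / δ := by positivity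
    have k10 : |u t| ≤ M := by linarith
    have k11 : |(1 + t) * w t| ≤ δ * M := by
      have : √(((1 + t) * w t) ^ 2 + η ^ 2) / δ ≤ M := by
        have := Real.sqrt_nonneg (u t ^ 2 + η ^ 2)
        linarith
      rw [div_le_iff₀ hδ] at this
      linarith
    have p1 : 0 < N * M := by positivity
    have p2 : 0 < δ * M := by positivity
    constructor
    · rw [le_div_iff₀ hp]
      have : v t = Λ * u t := by simp only [hu]; field_simp
      rw [this, abs_mul, abs_of_pos hΛ]
      have : Λ * (1 + t) * |u t| ≤ N * M := mul_le_mul hz k10 (abs_nonneg _) hN.le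
      have e1 : Λ * |u t| * (1 + t) = Λ * (1 + t) * |u t| := by ring
      linarith
    · rw [le_div_iff₀ hp]
      rw [abs_mul, abs_of_pos hp] at k11
      linarith

/-- Dissipative-zone estimate in the case
`liminf t·b(t) > 1/2`: on the zone `Λ(1+t) ≤ N` the entries of the fundamental
solution `E(t,0)` are bounded by `C·Λ^{−1}(1+t)^{−1}` (first column) and
`C·(1+t)^{−1}` (second column). -/
theorem dissipative_zone_estimate_C2
    (b b' : ℝ → ℝ) (C₁ C₂ : ℝ)
    (hb' : ∀ t ≥ (0:ℝ), HasDerivAt b (b' t) t)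
    (hb'c : ContinuousOn b' (Set.Ici 0))
    (hb0 : ∀ t ≥ (0:ℝ), 0 ≤ b t)
    (hb1 : ∀ t ≥ (0:ℝ), b t ≤ C₁ / (1 + t))
    (hb2 : ∀ t ≥ (0:ℝ), |b' t| ≤ C₂ / (1 + t) ^ 2)
    (hliminf : ∃ μ > (1/2 : ℝ), ∀ᶠ t in atTop, μ ≤ t * b t)
    (N : ℝ) (hN : 0 < N) :
    ∃ C > (0:ℝ), ∀ Λ > (0:ℝ), ∀ E : ℝ → Matrix (Fin 2) (Fin 2) ℂ,
      E 0 = 1 →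
      (∀ t ≥ (0:ℝ), ∀ i j : Fin 2,
        HasDerivAt (fun τ => E τ i j) ((sysMat Λ b t * E t) i j) t) →
      ∀ t ≥ (0:ℝ), Λ * (1 + t) ≤ N →
        ‖E t 0 0‖ ≤ C * Λ⁻¹ / (1 + t) ∧
        ‖E t 1 0‖ ≤ C * Λ⁻¹ / (1 + t) ∧
        ‖E t 0 1‖ ≤ C / (1 + t) ∧
        ‖E t 1 1‖ ≤ C / (1 + t) := by
  obtain ⟨C, hC, H⟩ := dz_real b hb0 hliminf N hN
  refine ⟨2 * C + 2 * N, by positivity, ?_⟩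
  intro Λ hΛ E hE0 hE t ht hz
  have hp : 0 < 1 + t := by linarith
  have hre : ∀ (f : ℝ → ℂ) (f' : ℂ) (s : ℝ), HasDerivAt f f' s →
      HasDerivAt (fun s => (f s).re) f'.re s := fun f f' s h =>
    (Complex.reCLM.hasFDerivAt.comp_hasDerivAt s h)
  have him : ∀ (f : ℝ → ℂ) (f' : ℂ) (s : ℝ), HasDerivAt f f' s →
      HasDerivAt (fun s => (f s).im) f'.im s := fun f f' s h =>
    (Complex.imCLM.hasFDerivAt.comp_hasDerivAt s h)
  have r0 : ∀ j, ∀ s ≥ (0:ℝ), HasDerivAt (fun s => (E s 0 j).re) (Λ * (E s 1 j).re) s := by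
    intro j s hs
    refine (hre _ _ _ (hE s hs 0 j)).congr_deriv ?_
    simp [sysMat, Matrix.mul_apply, Fin.sum_univ_two]
  have i0 : ∀ j, ∀ s ≥ (0:ℝ), HasDerivAt (fun s => (E s 0 j).im) (Λ * (E s 1 j).im) s := by
    intro j s hs
    refine (him _ _ _ (hE s hs 0 j)).congr_deriv ?_
    simp [sysMat, Matrix.mul_apply, Fin.sum_univ_two]
  have r1 : ∀ j, ∀ s ≥ (0:ℝ), HasDerivAt (fun s => (E s 1 j).re)
      (-Λ * (E s 0 j).re - 2 * b s * (E s 1 j).re) s := by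
    intro j s hs
    refine (hre _ _ _ (hE s hs 1 j)).congr_deriv ?_
    simp [sysMat, Matrix.mul_apply, Fin.sum_univ_two]
    ring
  have i1 : ∀ j, ∀ s ≥ (0:ℝ), HasDerivAt (fun s => (E s 1 j).im)
      (-Λ * (E s 0 j).im - 2 * b s * (E s 1 j).im) s := by
    intro j s hs
    refine (him _ _ _ (hE s hs 1 j)).congr_deriv ?_
    simp [sysMat, Matrix.mul_apply, Fin.sum_univ_two]
    ring
  have a := dz_energy b _ _ Λ hb0 (r0 0) (r1 0) (by simp [hE0]) t ht
  have a' := dz_energy b _ _ Λ hb0 (i0 0) (i1 0) (by simp [hE0]) t ht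
  have c := H Λ hΛ _ _ (by simp [hE0]) (by simp [hE0]) (r0 1) (r1 1) t ht hz
  have c' := H Λ hΛ _ _ (by simp [hE0]) (by simp [hE0]) (i0 1) (i1 1) t ht hz
  have q1 : 2 ≤ (2 * C + 2 * N) * Λ⁻¹ / (1 + t) := by
    rw [le_div_iff₀ hp, ← div_eq_mul_inv, le_div_iff₀ hΛ]
    nlinarith
  have q2 : C / (1 + t) + C / (1 + t) ≤ (2 * C + 2 * N) / (1 + t) := by
    rw [← add_div]
    exact div_le_div_of_nonneg_right (by linarith) hp.le
  have n := Complex.norm_le_abs_re_add_abs_im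
  exact ⟨by linarith [n (E t 0 0), a.1, a'.1], by linarith [n (E t 1 0), a.2, a'.2],
    by linarith [n (E t 0 1), c.1, c'.1], by linarith [n (E t 1 1), c.2, c'.2]⟩
end

section
/- Let b : [0,∞) → ℝ be continuous and nonnegative with liminf_{t→∞} t·b(t) > 1/2. Then ∫₀^∞ exp(−2∫₀^t b(τ)dτ) dt < ∞, i.e. the function 1/λ(t)² is integrable on [0,∞), where λ(t) = exp(∫₀^t b(τ)dτ). -/
open MeasureTheory Filter

/-- If `b ≥ 0` is continuous on `[0,∞)` and
`liminf_{t→∞} t·b(t) > 1/2`, then `1/λ(t)² = exp(−2∫₀^t b)` is integrable on `[0,∞)`. -/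
theorem inv_lambda_sq_integrable
    (b : ℝ → ℝ)
    (hbc : ContinuousOn b (Set.Ici 0))
    (hb0 : ∀ t ≥ (0:ℝ), 0 ≤ b t)
    (hliminf : ∃ a > (1/2 : ℝ), ∀ᶠ t in atTop, a ≤ t * b t) :
    IntegrableOn (fun t => Real.exp (-(2 * ∫ τ in (0:ℝ)..t, b τ))) (Set.Ici 0) := by
  obtain ⟨a, ha, hev⟩ := hliminf
  obtain ⟨T0, hT0⟩ := eventually_atTop.1 hev
  obtain ⟨T, hT1, hT⟩ : ∃ T : ℝ, 1 ≤ T ∧ ∀ t ≥ T, a ≤ t * b t :=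
    ⟨max T0 1, le_max_right _ _, fun t ht => hT0 t (le_trans (le_max_left _ _) ht)⟩
  have hTpos : 0 < T := by linarith
  set c : ℝ → ℝ := fun τ => b (max τ 0) with hc
  have hcc : Continuous c :=
    hbc.comp_continuous (by fun_prop) (fun x => Set.mem_Ici.2 (le_max_right _ _))
  have hc0 : ∀ t, 0 ≤ c t := fun t => hb0 _ (le_max_right _ _)
  have hII : ∀ x y, IntervalIntegrable c volume x y := fun x y => hcc.intervalIntegrable x y
  have hF : Continuous (fun t => Real.exp (-(2 * ∫ τ in (0:ℝ)..t, c τ))) := by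
    have := intervalIntegral.continuous_primitive hII 0
    fun_prop
  have key : IntegrableOn (fun t => Real.exp (-(2 * ∫ τ in (0:ℝ)..t, c τ))) (Set.Ici 0) := by
    rw [← Set.Icc_union_Ioi_eq_Ici hTpos.le]
    refine IntegrableOn.union (hF.continuousOn.integrableOn_compact isCompact_Icc) ?_
    have hg : IntegrableOn (fun t : ℝ => Real.exp (2 * a * Real.log T) * t ^ (-(2 * a)))
        (Set.Ioi T) :=
      (integrableOn_Ioi_rpow_of_lt (by linarith) hTpos).const_mul _
    refine Integrable.mono' hg hF.aestronglyMeasurable ?_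
    refine (ae_restrict_iff' measurableSet_Ioi).2 (Eventually.of_forall fun t ht => ?_)
    have ht : T < t := ht
    have htpos : 0 < t := by linarith
    rw [Real.norm_eq_abs, abs_of_pos (Real.exp_pos _), Real.rpow_def_of_pos htpos, ← Real.exp_add]
    apply Real.exp_le_exp.2
    have h1 : (∫ τ in (0:ℝ)..T, c τ) + ∫ τ in T..t, c τ = ∫ τ in (0:ℝ)..t, c τ :=
      intervalIntegral.integral_add_adjacent_intervals (hII _ _) (hII _ _)
    have h2 : 0 ≤ ∫ τ in (0:ℝ)..T, c τ :=
      intervalIntegral.integral_nonneg hTpos.le fun u _ => hc0 u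
    have h0 : (0:ℝ) ∉ Set.uIcc T t := by
      rw [Set.uIcc_of_le ht.le]
      intro h
      linarith [h.1]
    have h3 : ∫ τ in T..t, a * τ⁻¹ ≤ ∫ τ in T..t, c τ := by
      apply intervalIntegral.integral_mono_on ht.le _ (hII _ _)
      · intro x hx
        have hx0 : 0 < x := by linarith [hx.1]
        have := hT x hx.1
        simp only [hc, max_eq_left hx0.le]
        rw [← div_eq_mul_inv, div_le_iff₀ hx0]
        linarith
      · exact (intervalIntegral.intervalIntegrable_inv (fun x hx h => h0 (h ▸ hx))
          continuousOn_id).const_mul a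
    rw [intervalIntegral.integral_const_mul, integral_inv h0,
      Real.log_div htpos.ne' hTpos.ne'] at h3
    linarith
  refine key.congr_fun (fun t ht => ?_) measurableSet_Ici
  have ht : 0 ≤ t := ht
  have : ∫ τ in (0:ℝ)..t, c τ = ∫ τ in (0:ℝ)..t, b τ := by
    apply intervalIntegral.integral_congr
    intro x hx
    rw [Set.uIcc_of_le ht] at hx
    simp only [hc, max_eq_left hx.1]
  simp only [this]
end

section
/- Under the hypotheses and notation of the hyperbolic-zone diagonalisation (b continuously differentiable with |b(t)| ≤ C₁(1+t)^{−1}, |b'(t)| ≤ C₂(1+t)^{−2}, N > C₁, Λ > 0, s ≥ 0 with Λ(1+s) ≥ N, and Q₁ the solution of (d/dt)Q₁(t) = −Ẽ₀(s,t)·R₁(t)·Ẽ₀(t,s)·Q₁(t), Q₁(s) = I), the matrix Q₁(t) is invertible for every t ≥ s, and the limit matrix Q₁(∞,s) = lim_{t→∞} Q₁(t) is invertible. -/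
open MeasureTheory Filter

/-- The matrix `N^{(1)}(t) = [[0, −i·b(t)/(2Λ)], [i·b(t)/(2Λ), 0]]`. -/
noncomputable def Nmat (b : ℝ → ℝ) (Λ t : ℝ) : Matrix (Fin 2) (Fin 2) ℂ :=
  !![0, -(Complex.I * b t / (2 * Λ)); Complex.I * b t / (2 * Λ), 0]

/-- The matrix `N₁(t) = I − N^{(1)}(t)`. -/
noncomputable def None' (b : ℝ → ℝ) (Λ t : ℝ) : Matrix (Fin 2) (Fin 2) ℂ :=
  1 - Nmat b Λ t

/-- The remainder matrix `R₁(t) = −N₁(t)⁻¹·((d/dt)N^{(1)}(t) + b(t)N^{(1)}(t))`. -/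
noncomputable def Rone (b b' : ℝ → ℝ) (Λ t : ℝ) : Matrix (Fin 2) (Fin 2) ℂ :=
  -((None' b Λ t)⁻¹ * (Nmat b' Λ t + (b t : ℂ) • Nmat b Λ t))

/-- The diagonal free propagator `Ẽ₀(t,s) = diag(e^{−iΛ(t−s)}, e^{iΛ(t−s)})`. -/
noncomputable def Etil (Λ t s : ℝ) : Matrix (Fin 2) (Fin 2) ℂ :=
  !![Complex.exp (-(Complex.I * Λ * (t - s))), 0;
     0, Complex.exp (Complex.I * Λ * (t - s))]

theorem gron_aux {E : Type*} [NormedAddCommGroup E] [NormedSpace ℝ E]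
    (f f' : ℝ → E) (g G : ℝ → ℝ) (a b : ℝ) (hab : a ≤ b)
    (hf : ∀ t ∈ Set.Icc a b, HasDerivAt f (f' t) t)
    (hG : ∀ t ∈ Set.Icc a b, HasDerivAt G (g t) t)
    (hb : ∀ t ∈ Set.Icc a b, ‖f' t‖ ≤ g t * ‖f t‖) :
    ‖f b‖ ≤ ‖f a‖ * Real.exp (G b - G a) := by
  have key : ∀ ε > (0:ℝ), ‖f b‖ ≤ (‖f a‖ + ε) * Real.exp (G b - G a + ε * (b - a)) := by
    intro ε hε
    have hB : ∀ t ∈ Set.Icc a b, HasDerivAt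
        (fun t => (‖f a‖ + ε) * Real.exp (G t - G a + ε * (t - a)))
        ((‖f a‖ + ε) * (Real.exp (G t - G a + ε * (t - a)) * (g t + ε * 1))) t := by
      intro t ht
      have h1 := ((hG t ht).sub_const (G a)).add (((hasDerivAt_id t).sub_const a).const_mul ε)
      exact (h1.exp).const_mul (‖f a‖ + ε)
    refine image_norm_le_of_norm_deriv_right_lt_deriv_boundary' (f := f) (f' := f')
      (a := a) (b := b)
      (B := fun t => (‖f a‖ + ε) * Real.exp (G t - G a + ε * (t - a)))
      (B' := fun t => (‖f a‖ + ε) * (Real.exp (G t - G a + ε * (t - a)) * (g t + ε * 1)))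
      (fun t ht => (hf t ht).continuousAt.continuousWithinAt)
      (fun t ht => (hf t ⟨ht.1, ht.2.le⟩).hasDerivWithinAt) ?_
      (fun t ht => (hB t ht).continuousAt.continuousWithinAt)
      (fun t ht => (hB t ⟨ht.1, ht.2.le⟩).hasDerivWithinAt) ?_ ⟨hab, le_rfl⟩
    · simp [hε.le]
    · intro t ht heq
      have h1 := hb t ⟨ht.1, ht.2.le⟩
      have hpos : 0 < (‖f a‖ + ε) * Real.exp (G t - G a + ε * (t - a)) := by positivity
      rw [heq] at h1
      have : 0 < ε * ((‖f a‖ + ε) * Real.exp (G t - G a + ε * (t - a))) := by positivity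
      nlinarith
  have hc : Tendsto (fun ε : ℝ => (‖f a‖ + ε) * Real.exp (G b - G a + ε * (b - a)))
      (nhdsWithin 0 (Set.Ioi 0)) (nhds ((‖f a‖ + 0) * Real.exp (G b - G a + 0 * (b - a)))) := by
    apply Tendsto.mono_left _ nhdsWithin_le_nhds
    apply Continuous.tendsto (f := fun ε : ℝ => (‖f a‖ + ε) * Real.exp (G b - G a + ε * (b - a)))
    fun_prop
  have := ge_of_tendsto hc (b := ‖f b‖) (by
    filter_upwards [self_mem_nhdsWithin] with ε hε using key ε hε)
  simpa using this

theorem gron_rev {E : Type*} [NormedAddCommGroup E] [NormedSpace ℝ E]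
    (f f' : ℝ → E) (g G : ℝ → ℝ) (a b : ℝ) (hab : a ≤ b)
    (hf : ∀ t ∈ Set.Icc a b, HasDerivAt f (f' t) t)
    (hG : ∀ t ∈ Set.Icc a b, HasDerivAt G (g t) t)
    (hb : ∀ t ∈ Set.Icc a b, ‖f' t‖ ≤ g t * ‖f t‖) :
    ‖f a‖ ≤ ‖f b‖ * Real.exp (G b - G a) := by
  have hm : ∀ t ∈ Set.Icc (-b) (-a), -t ∈ Set.Icc a b := by
    rintro t ⟨h1, h2⟩; constructor <;> linarith
  have h := gron_aux (fun t => f (-t)) (fun t => -f' (-t)) (fun t => g (-t)) (fun t => -G (-t))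
    (-b) (-a) (by linarith) ?_ ?_ ?_
  · simp only [neg_neg] at h
    rwa [show -G a - -G b = G b - G a by ring] at h
  · intro t ht
    simpa [Function.comp_def] using (hf (-t) (hm t ht)).scomp t (hasDerivAt_neg t)
  · intro t ht
    simpa [Function.comp_def] using ((hG (-t) (hm t ht)).scomp t (hasDerivAt_neg t)).fun_neg
  · intro t ht
    simpa using hb (-t) (hm t ht)

theorem Rone_explicit (b b' : ℝ → ℝ) (Λ t β c : ℝ) (hβ : β = b t / (2 * Λ))
    (hc : c = (b' t + b t ^ 2) / (2 * Λ)) (h1 : 1 - β ^ 2 ≠ 0) :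
    Rone b b' Λ t = ((-(c / (1 - β ^ 2)) : ℝ) : ℂ) • !![(β : ℂ), -Complex.I; Complex.I, β] := by
  have hN : Nmat b Λ t = !![0, -(Complex.I * β); Complex.I * β, 0] := by
    rw [Nmat, hβ]; push_cast; simp only [mul_div_assoc]
  have hN2 : Nmat b' Λ t + (b t : ℂ) • Nmat b Λ t
      = !![0, -(Complex.I * c); Complex.I * c, 0] := by
    ext i j
    fin_cases i <;> fin_cases j <;> simp [Nmat, hc] <;> ring
  have h1' : (1 - (β : ℂ) ^ 2) ≠ 0 := by exact_mod_cast h1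
  have hinv : (None' b Λ t)⁻¹ = (1 - (β : ℂ) ^ 2)⁻¹ • !![1, -(Complex.I * β); Complex.I * β, 1] := by
    apply Matrix.inv_eq_right_inv
    rw [None', hN]
    ext i j
    fin_cases i <;> fin_cases j <;> simp [Matrix.mul_apply, Fin.sum_univ_two] <;>
      field_simp <;> ring_nf <;> simp <;> ring
  rw [Rone, hinv, hN2]
  ext i j
  fin_cases i <;> fin_cases j <;> simp [Matrix.mul_apply, Fin.sum_univ_two] <;>
      field_simp <;> ring_nf <;> simp

theorem Rone_bound (b b' : ℝ → ℝ) (Λ t β c : ℝ) (hβ : β = b t / (2 * Λ))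
    (hc : c = (b' t + b t ^ 2) / (2 * Λ)) (h1 : |β| ≤ 1 / 2) (i j : Fin 2) :
    ‖Rone b b' Λ t i j‖ ≤ 2 * |c| := by
  have h2 : β ^ 2 ≤ 1 / 4 := by
    rw [← sq_abs]; nlinarith [abs_nonneg β]
  have h3 : (1/2 : ℝ) ≤ 1 - β ^ 2 := by linarith
  rw [Rone_explicit b b' Λ t β c hβ hc (by linarith)]
  have h4 : ‖((-(c / (1 - β ^ 2)) : ℝ) : ℂ)‖ ≤ 2 * |c| := by
    rw [Complex.norm_real, norm_neg, Real.norm_eq_abs, abs_div, abs_of_pos (a := 1 - β ^ 2) (by linarith),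
      div_le_iff₀ (by linarith)]
    nlinarith [abs_nonneg c]
  have h5 : ‖!![(β : ℂ), -Complex.I; Complex.I, β] i j‖ ≤ 1 := by
    fin_cases i <;> fin_cases j <;> simp <;> linarith
  rw [Matrix.smul_apply, smul_eq_mul, norm_mul]
  calc _ ≤ (2 * |c|) * 1 := by gcongr
    _ = _ := by ring

theorem conj_norm (Λ t s : ℝ) (R : Matrix (Fin 2) (Fin 2) ℂ) (i j : Fin 2) :
    ‖(-(Etil Λ s t * R * Etil Λ t s)) i j‖ = ‖R i j‖ := by
  have e1 : ∀ x y : ℝ, ‖Complex.exp (Complex.I * Λ * (x - y))‖ = 1 := by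
    intro x y
    rw [show Complex.I * Λ * (x - y) = ((Λ * (x - y) : ℝ) : ℂ) * Complex.I by push_cast; ring]
    exact Complex.norm_exp_ofReal_mul_I _
  have e2 : ∀ x y : ℝ, ‖Complex.exp (-(Complex.I * Λ * (x - y)))‖ = 1 := by
    intro x y
    rw [Complex.exp_neg, norm_inv, e1, inv_one]
  simp only [Matrix.neg_apply, Matrix.mul_apply, Fin.sum_univ_two, norm_neg]
  fin_cases i <;> fin_cases j <;> simp [Etil, e1, e2]

theorem abstract_main (s k : ℝ) (hs : 0 ≤ s) (hk : 0 ≤ k)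
    (A Q : ℝ → Matrix (Fin 2) (Fin 2) ℂ) (hQs : Q s = 1)
    (hA : ∀ t ≥ s, ∀ i j, ‖A t i j‖ ≤ k / (1 + t) ^ 2)
    (hQ : ∀ t ≥ s, ∀ i j : Fin 2, HasDerivAt (fun τ => Q τ i j) ((A t * Q t) i j) t) :
    (∀ t ≥ s, IsUnit (Q t)) ∧
    ∃ Qinf : Matrix (Fin 2) (Fin 2) ℂ, Tendsto Q atTop (nhds Qinf) ∧ IsUnit Qinf := by
  have hG : ∀ t ≥ s, HasDerivAt (fun t : ℝ => -(2 * k) / (1 + t)) (2 * k / (1 + t) ^ 2) t := by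
    intro t ht
    have h0 : (1 + t) ≠ 0 := by linarith
    have := (hasDerivAt_const t (-(2 * k))).fun_div ((hasDerivAt_id' t).const_add 1) h0
    exact this.congr_deriv (by ring)
  have hGd : ∀ t ≥ s, -(2 * k) / (1 + t) - -(2 * k) / (1 + s) ≤ 2 * k := by
    intro t ht
    have h1 : 0 ≤ 2 * k / (1 + t) := by
      have : 0 ≤ 1 + t := by linarith
      positivity
    have h2 : 2 * k / (1 + s) ≤ 2 * k := div_le_self (by linarith) (by linarith)
    rw [neg_div, neg_div]; linarith
  -- determinant
  have hdet : ∀ t ≥ s, HasDerivAt (fun τ => (Q τ).det) ((A t 0 0 + A t 1 1) * (Q t).det) t := by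
    intro t ht
    have := ((hQ t ht 0 0).fun_mul (hQ t ht 1 1)).fun_sub ((hQ t ht 0 1).fun_mul (hQ t ht 1 0))
    simp only [Matrix.det_fin_two]
    refine this.congr_deriv ?_
    simp only [Matrix.mul_apply, Fin.sum_univ_two]
    ring
  have hlow : ∀ t ≥ s, Real.exp (-(2 * k)) ≤ ‖(Q t).det‖ := by
    intro t ht
    have h := gron_rev (fun τ => (Q τ).det) (fun t => (A t 0 0 + A t 1 1) * (Q t).det)
      (fun t => 2 * k / (1 + t) ^ 2) (fun t : ℝ => -(2 * k) / (1 + t)) s t ht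
      (fun x hx => hdet x hx.1) (fun x hx => hG x hx.1) (by
        intro x hx
        rw [norm_mul]
        gcongr
        calc _ ≤ _ := norm_add_le _ _
          _ ≤ _ := add_le_add (hA x hx.1 0 0) (hA x hx.1 1 1)
          _ = _ := by ring)
    simp only [hQs, Matrix.det_one, norm_one] at h
    have h2 : (1:ℝ) ≤ ‖(Q t).det‖ * Real.exp (2 * k) :=
      h.trans (by gcongr; exact hGd t ht)
    rw [Real.exp_neg, inv_le_iff_one_le_mul₀ (Real.exp_pos _)]
    exact h2
  have hunit : ∀ P : Matrix (Fin 2) (Fin 2) ℂ, Real.exp (-(2 * k)) ≤ ‖P.det‖ → IsUnit P := by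
    intro P hP
    rw [Matrix.isUnit_iff_isUnit_det, isUnit_iff_ne_zero]
    intro h0
    rw [h0, norm_zero] at hP
    exact absurd (Real.exp_pos _) (not_lt.mpr hP)
  refine ⟨fun t ht => hunit _ (hlow t ht), ?_⟩
  let f : ℝ → (Fin 2 → Fin 2 → ℂ) := fun t i j => Q t i j
  let f' : ℝ → (Fin 2 → Fin 2 → ℂ) := fun t i j => (A t * Q t) i j
  have hf : ∀ t ≥ s, HasDerivAt f (f' t) t := by
    intro t ht
    rw [hasDerivAt_pi]; intro i
    rw [hasDerivAt_pi]; intro j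
    exact hQ t ht i j
  have hfb : ∀ t ≥ s, ‖f' t‖ ≤ 2 * k / (1 + t) ^ 2 * ‖f t‖ := by
    intro t ht
    have h0 : 0 ≤ 2 * k / (1 + t) ^ 2 * ‖f t‖ := by positivity
    rw [pi_norm_le_iff_of_nonneg h0]; intro i
    rw [pi_norm_le_iff_of_nonneg h0]; intro j
    have he : ∀ l, ‖Q t l j‖ ≤ ‖f t‖ := fun l =>
      (norm_le_pi_norm (f t l) j).trans (norm_le_pi_norm (f t) l)
    simp only [f', Matrix.mul_apply, Fin.sum_univ_two]
    calc _ ≤ _ := norm_add_le _ _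
      _ = ‖A t i 0‖ * ‖Q t 0 j‖ + ‖A t i 1‖ * ‖Q t 1 j‖ := by rw [norm_mul, norm_mul]
      _ ≤ k / (1 + t) ^ 2 * ‖f t‖ + k / (1 + t) ^ 2 * ‖f t‖ := by
        gcongr
        · exact hA t ht i 0
        · exact he 0
        · exact hA t ht i 1
        · exact he 1
      _ = _ := by ring
  obtain ⟨M, hM0, hM⟩ : ∃ M : ℝ, 0 ≤ M ∧ ∀ t ≥ s, ‖f t‖ ≤ M := by
    refine ⟨‖f s‖ * Real.exp (2 * k), by positivity, fun t ht => ?_⟩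
    have h := gron_aux f f' (fun t => 2 * k / (1 + t) ^ 2) (fun t : ℝ => -(2 * k) / (1 + t)) s t ht
      (fun x hx => hf x hx.1) (fun x hx => hG x hx.1) (fun x hx => hfb x hx.1)
    exact h.trans (by gcongr; exact hGd t ht)
  have hinc : ∀ r t, s ≤ r → r ≤ t → ‖f t - f r‖ ≤ M * (2 * k) / (1 + r) := by
    intro r t hr hrt
    have hB : ∀ x ∈ Set.Icc r t, HasDerivAt
        (fun x : ℝ => M * (-(2 * k) / (1 + x) - -(2 * k) / (1 + r))) (M * (2 * k / (1 + x) ^ 2)) x :=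
      fun x hx => ((hG x (hr.trans hx.1)).sub_const _).const_mul M
    have := image_norm_le_of_norm_deriv_right_le_deriv_boundary' (f := fun x => f x - f r) (f' := f')
      (a := r) (b := t)
      (B := fun x : ℝ => M * (-(2 * k) / (1 + x) - -(2 * k) / (1 + r)))
      (B' := fun x => M * (2 * k / (1 + x) ^ 2))
      (fun x hx => ((hf x (hr.trans hx.1)).sub_const _).continuousAt.continuousWithinAt)
      (fun x hx => ((hf x (hr.trans hx.1)).sub_const _).hasDerivWithinAt) (by simp)
      (fun x hx => (hB x hx).continuousAt.continuousWithinAt)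
      (fun x hx => (hB x ⟨hx.1, hx.2.le⟩).hasDerivWithinAt)
      (fun x hx => by
        refine (hfb x (hr.trans hx.1)).trans ?_
        rw [mul_comm]
        gcongr
        exact hM x (hr.trans hx.1)) (x := t) ⟨hrt, le_rfl⟩
    refine this.trans ?_
    rw [mul_div_assoc]
    gcongr
    have h1 : 0 ≤ 2 * k / (1 + t) := by
      have : 0 ≤ 1 + t := by linarith
      positivity
    rw [neg_div, neg_div]; linarith
  have hcau : CauchySeq (fun t => f (max t s)) := by
    refine cauchySeq_of_le_tendsto_0 (fun r => M * (2 * k) / (1 + max r s)) ?_ ?_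
    · have hmono : ∀ n m r : ℝ, r ≤ n → n ≤ m →
          ‖f (max m s) - f (max n s)‖ ≤ M * (2 * k) / (1 + max r s) := by
        intro n m r h1 h2
        refine (hinc (max n s) (max m s) (le_max_right _ _) (max_le_max_right s h2)).trans ?_
        have : 0 ≤ max r s := hs.trans (le_max_right _ _)
        gcongr
      intro n m r hn hm
      rcases le_total n m with h | h
      · rw [dist_comm, dist_eq_norm]; exact hmono n m r hn h
      · rw [dist_eq_norm]; exact hmono m n r hm h
    · apply Tendsto.const_div_atTop
      apply tendsto_atTop_add_const_left
      exact tendsto_atTop_mono (fun x => le_max_left x s) tendsto_id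
  obtain ⟨Qinf, hlim⟩ := cauchySeq_tendsto_of_complete hcau
  have hlim' : Tendsto f atTop (nhds Qinf) := by
    refine hlim.congr' ?_
    filter_upwards [eventually_ge_atTop s] with t ht
    rw [max_eq_left ht]
  have hlimQ : Tendsto Q atTop (nhds (Matrix.of Qinf)) := hlim'
  refine ⟨Matrix.of Qinf, hlimQ, hunit _ ?_⟩
  have hd : Tendsto (fun t => ‖(Q t).det‖) atTop (nhds ‖(Matrix.of Qinf).det‖) :=
    ((Continuous.matrix_det continuous_id).norm.tendsto _).comp hlimQ
  refine ge_of_tendsto hd ?_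
  filter_upwards [eventually_ge_atTop s] with t ht using hlow t ht

/-- In the hyperbolic zone the matrix `Q₁(t)` is invertible
for every `t ≥ s`, and the limit matrix `Q₁(∞,s) = lim_{t→∞} Q₁(t)` is invertible. -/
theorem hyperbolic_zone_Q1_invertible
    (b b' : ℝ → ℝ) (C₁ C₂ N : ℝ)
    (hb' : ∀ t ≥ (0:ℝ), HasDerivAt b (b' t) t)
    (hb'c : ContinuousOn b' (Set.Ici 0))
    (hb1 : ∀ t ≥ (0:ℝ), |b t| ≤ C₁ / (1 + t))
    (hb2 : ∀ t ≥ (0:ℝ), |b' t| ≤ C₂ / (1 + t) ^ 2)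
    (hN : C₁ < N)
    (Λ s : ℝ) (hΛ : 0 < Λ) (hs : 0 ≤ s) (hzone : N ≤ Λ * (1 + s))
    (Q₁ : ℝ → Matrix (Fin 2) (Fin 2) ℂ)
    (hQs : Q₁ s = 1)
    (hQ : ∀ t ≥ s, ∀ i j : Fin 2,
      HasDerivAt (fun τ => Q₁ τ i j)
        ((-(Etil Λ s t * Rone b b' Λ t * Etil Λ t s) * Q₁ t) i j) t) :
    (∀ t ≥ s, IsUnit (Q₁ t)) ∧
    ∃ Qinf : Matrix (Fin 2) (Fin 2) ℂ,
      Tendsto Q₁ atTop (nhds Qinf) ∧ IsUnit Qinf := by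
  have hC1 : 0 ≤ C₁ := by
    have := hb1 0 le_rfl
    simp only [add_zero, div_one] at this
    exact (abs_nonneg _).trans this
  have hC2 : 0 ≤ C₂ := by
    have := hb2 0 le_rfl
    simp only [add_zero, one_pow, div_one] at this
    exact (abs_nonneg _).trans this
  refine abstract_main s ((C₂ + C₁ ^ 2) / Λ) hs (by positivity)
    (fun t => -(Etil Λ s t * Rone b b' Λ t * Etil Λ t s)) Q₁ hQs ?_ hQ
  intro t ht i j
  have ht0 : 0 ≤ t := hs.trans ht
  have h1t : 0 < 1 + t := by linarith
  have hb1t := hb1 t ht0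
  have hβ : |b t / (2 * Λ)| ≤ 1 / 2 := by
    rw [abs_div, abs_of_pos (a := 2 * Λ) (by positivity), div_le_iff₀ (by positivity)]
    refine hb1t.trans ?_
    rw [div_le_iff₀ h1t]
    nlinarith
  rw [conj_norm]
  refine (Rone_bound b b' Λ t _ _ rfl rfl hβ i j).trans ?_
  rw [abs_div, abs_of_pos (a := 2 * Λ) (by positivity)]
  have h3 : |b' t + b t ^ 2| ≤ (C₂ + C₁ ^ 2) / (1 + t) ^ 2 := by
    calc _ ≤ |b' t| + |b t ^ 2| := abs_add_le _ _
      _ = |b' t| + |b t| ^ 2 := by rw [abs_pow]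
      _ ≤ C₂ / (1 + t) ^ 2 + (C₁ / (1 + t)) ^ 2 := by
        gcongr
        exact hb2 t ht0
      _ = _ := by rw [div_pow]; ring
  calc 2 * (|b' t + b t ^ 2| / (2 * Λ)) = |b' t + b t ^ 2| / Λ := by field_simp
    _ ≤ (C₂ + C₁ ^ 2) / (1 + t) ^ 2 / Λ := by gcongr
    _ = _ := by rw [div_right_comm]
end

section
/- Let b : [0,∞) → ℝ be continuously differentiable with b(t) ≥ 0, b(t) ≤ C₁(1+t)^{−1} and |b'(t)| ≤ C₂(1+t)^{−2} for all t ≥ 0, and assume limsup_{t→∞} t·b(t) < 1/2. Set λ(t) = exp(∫₀^t b(τ)dτ). Let N > C₁, γ ≥ 0 and K > 0 be such that Λ^γ·λ(t)² ≤ K whenever Λ(1+t) ≤ N. Then there is a constant C > 0 (depending only on b, N, γ, K) such that for all Λ with 0 < Λ ≤ N and all t ≥ 0, the fundamental solution E(t,0) of the dissipative system satisfies |E(t,0)_{11}| ≤ C·Λ^{−γ}/λ(t), |E(t,0)_{21}| ≤ C·Λ^{−γ}/λ(t), |E(t,0)_{12}| ≤ C/λ(t), |E(t,0)_{22}| ≤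 C/λ(t). -/
open MeasureTheory Filter

lemma ce_anti {f f' : ℝ → ℝ} {s t : ℝ} (hs : 0 ≤ s) (hst : s ≤ t)
    (hc : ContinuousOn f (Set.Ici 0)) (hd : ∀ x, 0 < x → HasDerivAt f (f' x) x)
    (hn : ∀ x, s < x → x < t → f' x ≤ 0) : f t ≤ f s := by
  have h : AntitoneOn f (Set.Icc s t) := by
    apply antitoneOn_of_deriv_nonpos (convex_Icc s t)
    · exact hc.mono (fun x hx => le_trans hs hx.1)
    · rw [interior_Icc]
      intro x hx
      exact (hd x (lt_of_le_of_lt hs hx.1)).differentiableAt.differentiableWithinAt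
    · rw [interior_Icc]
      intro x hx
      rw [(hd x (lt_of_le_of_lt hs hx.1)).deriv]
      exact hn x hx.1 hx.2
  exact h ⟨le_refl _, hst⟩ ⟨hst, le_refl _⟩ hst

lemma ce_int {g : ℝ → ℝ} (hg : ContinuousOn g (Set.Ici 0)) :
    ContinuousOn (fun t => ∫ τ in (0:ℝ)..t, g τ) (Set.Ici 0) ∧
    ∀ t, 0 < t → HasDerivAt (fun t => ∫ τ in (0:ℝ)..t, g τ) (g t) t := by
  have hG : Continuous (fun t => g (max t 0)) :=
    hg.comp_continuous (by fun_prop) (fun x => by simp)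
  have hD : ∀ t, HasDerivAt (fun t => ∫ τ in (0:ℝ)..t, g (max τ 0)) (g (max t 0)) t := fun t =>
    intervalIntegral.integral_hasDerivAt_right (hG.intervalIntegrable _ _)
      (hG.stronglyMeasurableAtFilter _ _) hG.continuousAt
  have heq : ∀ t, 0 ≤ t → (∫ τ in (0:ℝ)..t, g τ) = ∫ τ in (0:ℝ)..t, g (max τ 0) := by
    intro t ht
    apply intervalIntegral.integral_congr
    intro x hx
    rw [Set.uIcc_of_le ht] at hx
    simp [max_eq_left hx.1]
  constructor
  · have : Continuous (fun t => ∫ τ in (0:ℝ)..t, g (max τ 0)) :=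
      continuous_iff_continuousAt.2 fun t => (hD t).continuousAt
    exact this.continuousOn.congr heq
  · intro t ht
    have h := hD t
    rw [max_eq_left ht.le] at h
    apply h.congr_of_eventuallyEq
    filter_upwards [lt_mem_nhds ht] with x hx using heq x hx.le

lemma ce_lam {b : ℝ → ℝ} (hb : ContinuousOn b (Set.Ici 0)) (hb0 : ∀ t ≥ (0:ℝ), 0 ≤ b t) :
    ContinuousOn (lam b) (Set.Ici 0) ∧ (∀ t, 0 < t → HasDerivAt (lam b) (b t * lam b t) t) ∧
    (∀ t, 0 < lam b t) ∧ (∀ s t, 0 ≤ s → s ≤ t → lam b s ≤ lam b t) ∧ lam b 0 = 1 := by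
  obtain ⟨h1, h2⟩ := ce_int hb
  have hc : ContinuousOn (lam b) (Set.Ici 0) := Real.continuous_exp.comp_continuousOn h1
  have hd : ∀ t, 0 < t → HasDerivAt (lam b) (b t * lam b t) t := by
    intro t ht
    have := (h2 t ht).exp
    rw [mul_comm]
    exact this
  have hp : ∀ t, 0 < lam b t := fun t => Real.exp_pos _
  refine ⟨hc, hd, hp, ?_, by simp [lam]⟩
  intro s t hs hst
  have := ce_anti (f := fun x => - lam b x) hs hst hc.neg (fun x hx => (hd x hx).neg)
    (fun x hx _ => by
      have := mul_nonneg (hb0 x (by linarith)) (hp x).le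
      linarith)
  linarith

/-- A real solution column of the system. -/
def CeCol (b : ℝ → ℝ) (Λ : ℝ) (v w : ℝ → ℝ) : Prop :=
  ∀ t ≥ (0:ℝ), HasDerivAt v (Λ * w t) t ∧ HasDerivAt w (-Λ * v t - 2 * b t * w t) t

lemma CeCol.cont {b : ℝ → ℝ} {Λ : ℝ} {v w : ℝ → ℝ} (h : CeCol b Λ v w) :
    ContinuousOn v (Set.Ici 0) ∧ ContinuousOn w (Set.Ici 0) :=
  ⟨fun t ht => (h t ht).1.continuousAt.continuousWithinAt,
   fun t ht => (h t ht).2.continuousAt.continuousWithinAt⟩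

lemma ce_energy {b : ℝ → ℝ} {Λ : ℝ} {v w : ℝ → ℝ} (h : CeCol b Λ v w)
    (hb0 : ∀ t ≥ (0:ℝ), 0 ≤ b t) {t : ℝ} (ht : 0 ≤ t) :
    v t ^ 2 + w t ^ 2 ≤ v 0 ^ 2 + w 0 ^ 2 := by
  refine ce_anti (f := fun t => v t ^ 2 + w t ^ 2) le_rfl ht
    ((h.cont.1.pow 2).add (h.cont.2.pow 2))
    (fun x hx => ((h x hx.le).1.pow 2).add ((h x hx.le).2.pow 2)) ?_
  intro x hx _
  have := mul_nonneg (hb0 x hx.le) (sq_nonneg (w x))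
  norm_num
  nlinarith

lemma ce_hyp {b b' : ℝ → ℝ} {C₁ C₂ N Λ : ℝ} {v w : ℝ → ℝ}
    (hb' : ∀ t ≥ (0:ℝ), HasDerivAt b (b' t) t)
    (hb0 : ∀ t ≥ (0:ℝ), 0 ≤ b t)
    (hb1 : ∀ t ≥ (0:ℝ), b t ≤ C₁ / (1 + t))
    (hb2 : ∀ t ≥ (0:ℝ), |b' t| ≤ C₂ / (1 + t) ^ 2)
    (hN : C₁ < N) (hC1 : 0 ≤ C₁) (hC2 : 0 ≤ C₂) (hΛ : 0 < Λ)
    (h : CeCol b Λ v w) {s t : ℝ} (hs : 0 ≤ s) (hst : s ≤ t) (hz : N ≤ Λ * (1 + s)) :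
    lam b t ^ 2 * (v t ^ 2 + w t ^ 2) ≤
      (2 * Real.exp (C₂ / (1 - C₁ / N) / N) / (1 - C₁ / N)) *
        (lam b s ^ 2 * (v s ^ 2 + w s ^ 2)) := by
  have hbc : ContinuousOn b (Set.Ici 0) := fun t ht => (hb' t ht).continuousAt.continuousWithinAt
  obtain ⟨lc, ld, lp, lm, l0⟩ := ce_lam hbc hb0
  have hN0 : 0 < N := lt_of_le_of_lt hC1 hN
  set q := C₁ / N with hq
  have hq1 : q < 1 := (div_lt_one hN0).2 hN
  have hq0 : 0 ≤ q := div_nonneg hC1 hN0.le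
  set c := C₂ / (1 - q) with hcdef
  have hc0 : 0 ≤ c := div_nonneg hC2 (by linarith)
  set S : ℝ → ℝ := fun x => lam b x ^ 2 * (v x ^ 2 + w x ^ 2) with hS
  have hS0 : ∀ x, 0 ≤ S x := fun x => by positivity
  set F : ℝ → ℝ := fun x => lam b x ^ 2 * (v x ^ 2 + w x ^ 2 + 2 / Λ * (b x * (v x * w x))) with hF
  -- b / Λ ≤ q
  have hbq : ∀ x, s ≤ x → b x / Λ ≤ q := by
    intro x hx
    have h1 : (0:ℝ) < 1 + x := by linarith
    rw [div_le_iff₀ hΛ]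
    refine (hb1 x (by linarith)).trans ?_
    rw [div_le_iff₀ h1, hq, div_mul_eq_mul_div, div_mul_eq_mul_div, le_div_iff₀ hN0]
    have : N ≤ Λ * (1 + x) := hz.trans (by gcongr)
    nlinarith
  have hcross : ∀ x, s ≤ x → |F x - S x| ≤ q * S x := by
    intro x hx
    have e : F x - S x = (b x / Λ) * (lam b x ^ 2 * (2 * (v x * w x))) := by
      simp only [hF, hS]; ring
    rw [e, abs_mul, abs_of_nonneg (div_nonneg (hb0 x (by linarith)) hΛ.le)]
    refine mul_le_mul (hbq x hx) ?_ (abs_nonneg _) hq0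
    rw [abs_mul, abs_of_nonneg (sq_nonneg _)]
    refine mul_le_mul_of_nonneg_left ?_ (sq_nonneg _)
    rw [abs_le]
    constructor <;> nlinarith [sq_nonneg (v x + w x), sq_nonneg (v x - w x)]
  have hFl : ∀ x, s ≤ x → (1 - q) * S x ≤ F x := fun x hx => by
    have := (abs_le.1 (hcross x hx)).1; linarith
  have hFu : ∀ x, s ≤ x → F x ≤ 2 * S x := fun x hx => by
    have := (abs_le.1 (hcross x hx)).2
    nlinarith [hS0 x]
  have hFc : ContinuousOn F (Set.Ici 0) :=
    (lc.pow 2).mul (((h.cont.1.pow 2).add (h.cont.2.pow 2)).add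
      (continuousOn_const.mul (hbc.mul (h.cont.1.mul h.cont.2))))
  have hFd : ∀ x, 0 < x → HasDerivAt F (lam b x ^ 2 * (2 / Λ * b' x * (v x * w x))) x := by
    intro x hx
    obtain ⟨dv, dw⟩ := h x hx.le
    have := ((ld x hx).pow 2).mul (((dv.pow 2).add (dw.pow 2)).add
      (((hb' x hx.le).mul (dv.mul dw)).const_mul (2 / Λ)))
    refine this.congr_deriv ?_
    simp
    field_simp
    ring
  set e : ℝ → ℝ := fun x => Real.exp (c / Λ * (1 + x)⁻¹) with he
  have hed : ∀ x, 0 ≤ x → HasDerivAt e (e x * (c / Λ * (-1 / (1 + x) ^ 2))) x := by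
    intro x hx
    have h1 : (1 + x) ≠ 0 := by linarith
    have := (((hasDerivAt_id x).const_add 1).inv h1).const_mul (c / Λ)
    exact this.exp
  have hec : ContinuousOn e (Set.Ici 0) := fun x hx => (hed x hx).continuousAt.continuousWithinAt
  have key : F t * e t ≤ F s * e s := by
    refine ce_anti (f := fun x => F x * e x) hs hst (hFc.mul hec)
      (fun x hx => (hFd x hx).mul (hed x hx.le)) ?_
    intro x hx _
    have hx0 : 0 ≤ x := by linarith
    have hep : 0 < e x := Real.exp_pos _
    have h1 : (0:ℝ) < 1 + x := by linarith
    have hmain : lam b x ^ 2 * (2 / Λ * b' x * (v x * w x)) ≤ c / Λ / (1 + x) ^ 2 * F x := by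
      have a1 : lam b x ^ 2 * (2 / Λ * b' x * (v x * w x)) ≤ |b' x| / Λ * S x := by
        have : b' x * (2 * (v x * w x)) ≤ |b' x| * (v x ^ 2 + w x ^ 2) := by
          refine (le_abs_self _).trans ?_
          rw [abs_mul]
          refine mul_le_mul_of_nonneg_left ?_ (abs_nonneg _)
          rw [abs_le]
          constructor <;> nlinarith [sq_nonneg (v x + w x), sq_nonneg (v x - w x)]
        have h2 := mul_le_mul_of_nonneg_left this (by positivity : 0 ≤ lam b x ^ 2 / Λ)
        calc _ = lam b x ^ 2 / Λ * (b' x * (2 * (v x * w x))) := by ring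
          _ ≤ _ := h2
          _ = _ := by simp only [hS]; ring
      have a2 : |b' x| / Λ * S x ≤ C₂ / (1 + x) ^ 2 / Λ * S x := by
        have := hb2 x hx0
        have := hS0 x
        gcongr
      have a3 : C₂ = c * (1 - q) := by
        rw [hcdef, div_mul_cancel₀]; linarith
      have a4 : c / Λ / (1 + x) ^ 2 * ((1 - q) * S x) ≤ c / Λ / (1 + x) ^ 2 * F x :=
        mul_le_mul_of_nonneg_left (hFl x hx.le) (by positivity)
      have a5 : C₂ / (1 + x) ^ 2 / Λ * S x = c / Λ / (1 + x) ^ 2 * ((1 - q) * S x) := by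
        rw [a3]; ring
      linarith
    have := mul_le_mul_of_nonneg_right hmain hep.le
    have e2 : F x * (e x * (c / Λ * (-1 / (1 + x) ^ 2))) = - (c / Λ / (1 + x) ^ 2 * F x * e x) := by
      ring
    linarith
  have het : 1 ≤ e t := Real.one_le_exp (by
    have : (0:ℝ) ≤ 1 + t := by linarith
    positivity)
  have hes : e s ≤ Real.exp (c / N) := by
    apply Real.exp_le_exp.2
    have h1 : (0:ℝ) < 1 + s := by linarith
    calc c / Λ * (1 + s)⁻¹ = c / (Λ * (1 + s)) := by field_simp
      _ ≤ c / N := by gcongr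
  have hFt : 0 ≤ F t := le_trans (mul_nonneg (by linarith) (hS0 t)) (hFl t hst)
  have f1 : (1 - q) * S t ≤ 2 * S s * Real.exp (c / N) :=
    calc (1 - q) * S t ≤ F t := hFl t hst
      _ ≤ F t * e t := le_mul_of_one_le_right hFt het
      _ ≤ F s * e s := key
      _ ≤ 2 * S s * Real.exp (c / N) :=
        mul_le_mul (hFu s le_rfl) hes (Real.exp_pos _).le (by have := hS0 s; positivity)
  have hq2 : 0 < 1 - q := by linarith
  change S t ≤ 2 * Real.exp (c / N) / (1 - q) * S s
  rw [div_mul_eq_mul_div, le_div_iff₀ hq2]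
  linarith

lemma ce_P {b : ℝ → ℝ} {C₁ : ℝ} (hbc : ContinuousOn b (Set.Ici 0))
    (hb0 : ∀ t ≥ (0:ℝ), 0 ≤ b t)
    (hb1 : ∀ t ≥ (0:ℝ), b t ≤ C₁ / (1 + t))
    (hlimsup : ∃ μ < (1/2 : ℝ), ∀ᶠ t in atTop, t * b t ≤ μ) :
    ∃ D > (0:ℝ), ∀ t, 0 ≤ t → (∫ τ in (0:ℝ)..t, (lam b τ ^ 2)⁻¹) ≤ D * (1 + t) * (lam b t ^ 2)⁻¹ := by
  obtain ⟨lc, ld, lp, lm, l0⟩ := ce_lam hbc hb0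
  have hic : ContinuousOn (fun t => (lam b t ^ 2)⁻¹) (Set.Ici 0) :=
    (lc.pow 2).inv₀ (fun x _ => (pow_pos (lp x) 2).ne')
  have hid : ∀ x, 0 < x → HasDerivAt (fun t => (lam b t ^ 2)⁻¹) (-2 * b x * (lam b x ^ 2)⁻¹) x := by
    intro x hx
    have := ((ld x hx).pow 2).inv (pow_pos (lp x) 2).ne'
    refine this.congr_deriv ?_
    have := (lp x).ne'
    simp
    field_simp
  obtain ⟨pc, pd⟩ := ce_int hic
  obtain ⟨μ, hμ, hev⟩ := hlimsup
  have hlim : Tendsto (fun t : ℝ => C₁ / (1 + t)) atTop (nhds 0) :=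
    Tendsto.div_atTop tendsto_const_nhds (tendsto_atTop_add_const_left _ _ tendsto_id)
  set ε := (1/2 - μ) with hε
  have hε0 : 0 < ε := by linarith
  have hev2 : ∀ᶠ t in atTop, C₁ / (1 + t) < ε / 2 := hlim.eventually (gt_mem_nhds (by linarith))
  obtain ⟨T₀, hT₀⟩ := eventually_atTop.1 (hev.and hev2)
  set T := max T₀ 0 with hT
  have hT0 : 0 ≤ T := le_max_right _ _
  have hbT : ∀ t, T ≤ t → ε ≤ 1 - 2 * b t * (1 + t) := by
    intro t ht
    obtain ⟨h1, h2⟩ := hT₀ t (le_trans (le_max_left _ _) ht)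
    have h3 := hb1 t (hT0.trans ht)
    nlinarith
  set P : ℝ → ℝ := fun t => ∫ τ in (0:ℝ)..t, (lam b τ ^ 2)⁻¹ with hP
  have P0 : P 0 = 0 := by simp [hP]
  have hl1 : ∀ t, 0 ≤ t → 1 ≤ lam b t := fun t ht => l0 ▸ lm 0 t le_rfl ht
  have hPT : ∀ t, 0 ≤ t → P t ≤ t := by
    intro t ht
    have := ce_anti (f := fun x => P x - x) le_rfl ht (pc.sub continuousOn_id)
      (fun x hx => (pd x hx).sub (hasDerivAt_id x)) (fun x hx _ => by
        have : (lam b x ^ 2)⁻¹ ≤ 1 := inv_le_one_of_one_le₀ (one_le_pow₀ (hl1 x hx.le))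
        linarith)
    simp only [P0] at this
    linarith
  set D := 1 / ε + T * lam b T ^ 2 with hD
  have hD0 : 0 < D := by have := lp T; positivity
  have small : ∀ t, 0 ≤ t → t ≤ T → P t ≤ D * (1 + t) * (lam b t ^ 2)⁻¹ := by
    intro t ht htT
    refine (hPT t ht).trans ?_
    have l1 := lp t
    have l2 : lam b t ^ 2 ≤ lam b T ^ 2 := pow_le_pow_left₀ l1.le (lm t T ht htT) 2
    rw [← div_eq_mul_inv, le_div_iff₀ (by positivity)]
    have : t * lam b t ^ 2 ≤ T * lam b T ^ 2 := mul_le_mul htT l2 (by positivity) hT0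
    have h3 : T * lam b T ^ 2 ≤ D := by have := one_div_pos.2 hε0; linarith
    nlinarith
  refine ⟨D, hD0, fun t ht => ?_⟩
  rcases le_total t T with h | h
  · exact small t ht h
  · have := ce_anti (f := fun x => P x - D * (1 + x) * (lam b x ^ 2)⁻¹) hT0 h
      (pc.sub ((continuousOn_const.mul (continuousOn_const.add continuousOn_id)).mul hic))
      (fun x hx => (pd x hx).sub
        ((((hasDerivAt_id x).const_add 1).const_mul D).mul (hid x hx))) (fun x hx _ => by
        have h1 := hbT x hx.le
        have h2 : 1 ≤ D * ε := by
          have : 0 ≤ T * lam b T ^ 2 * ε := by positivity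
          rw [hD, add_mul, one_div_mul_cancel hε0.ne']; linarith
        have h4 : 0 < (lam b x ^ 2)⁻¹ := inv_pos.2 (pow_pos (lp x) 2)
        have h3 : 1 ≤ D * (1 - 2 * b x * (1 + x)) := h2.trans (by gcongr)
        simp only [id]
        nlinarith)
    have h2 := small T hT0 le_rfl
    linarith

lemma ce_diss {b : ℝ → ℝ} {N Λ D : ℝ} {v w : ℝ → ℝ} (hbc : ContinuousOn b (Set.Ici 0))
    (hb0 : ∀ t ≥ (0:ℝ), 0 ≤ b t) (hΛ : 0 < Λ) (hD0 : 0 < D)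
    (hD : ∀ t, 0 ≤ t → (∫ τ in (0:ℝ)..t, (lam b τ ^ 2)⁻¹) ≤ D * (1 + t) * (lam b t ^ 2)⁻¹)
    (h : CeCol b Λ v w) (hv0 : v 0 = 0) (hw0 : |w 0| ≤ 1) {t : ℝ} (ht : 0 ≤ t)
    (hz : Λ * (1 + t) ≤ N) :
    lam b t * |v t| ≤ D * N * Real.exp (D * N ^ 2 / 2) ∧
      lam b t * |w t| ≤ Real.exp (D * N ^ 2 / 2) := by
  obtain ⟨lc, ld, lp, lm, l0⟩ := ce_lam hbc hb0
  have hl1 : ∀ t, 0 ≤ t → 1 ≤ lam b t := fun t ht => l0 ▸ lm 0 t le_rfl ht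
  have hic : ContinuousOn (fun t => (lam b t ^ 2)⁻¹) (Set.Ici 0) :=
    (lc.pow 2).inv₀ (fun x _ => (pow_pos (lp x) 2).ne')
  obtain ⟨pc, pd⟩ := ce_int hic
  set P : ℝ → ℝ := fun t => ∫ τ in (0:ℝ)..t, (lam b τ ^ 2)⁻¹ with hP
  have P0 : P 0 = 0 := by simp [hP]
  have hgc : ContinuousOn (fun t => Λ * (lam b t ^ 2 * |v t|)) (Set.Ici 0) :=
    continuousOn_const.mul ((lc.pow 2).mul h.cont.1.abs)
  obtain ⟨yc', yd'⟩ := ce_int hgc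
  set Y : ℝ → ℝ := fun t => 1 + ∫ τ in (0:ℝ)..t, Λ * (lam b τ ^ 2 * |v τ|) with hY
  have Y0 : Y 0 = 1 := by simp [hY]
  have yc : ContinuousOn Y (Set.Ici 0) := continuousOn_const.add yc'
  have yd : ∀ t, 0 < t → HasDerivAt Y (Λ * (lam b t ^ 2 * |v t|)) t :=
    fun t ht => (yd' t ht).const_add 1
  have hPn : ∀ x, 0 ≤ x → 0 ≤ P x := by
    intro x hx
    have := ce_anti (f := fun x => - P x) le_rfl hx pc.neg (fun x hx => (pd x hx).neg)
      (fun x _ _ => by have := lp x; simp only [Left.neg_nonpos_iff]; positivity)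
    simp only [P0] at this
    linarith
  have hyc : ContinuousOn (fun x => lam b x ^ 2 * w x) (Set.Ici 0) := (lc.pow 2).mul h.cont.2
  have hyd : ∀ x, 0 < x → HasDerivAt (fun x => lam b x ^ 2 * w x) (-(Λ * (lam b x ^ 2 * v x))) x := by
    intro x hx
    refine (((ld x hx).pow 2).mul (h x hx.le).2).congr_deriv ?_
    simp
    ring
  have hg : ∀ x, |Λ * (lam b x ^ 2 * v x)| ≤ Λ * (lam b x ^ 2 * |v x|) := by
    intro x
    rw [abs_mul, abs_mul, abs_of_pos hΛ, abs_of_nonneg (sq_nonneg (lam b x))]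
  have hyY : ∀ x, 0 ≤ x → |lam b x ^ 2 * w x| ≤ Y x := by
    intro x hx
    have hw := abs_le.1 hw0
    have a1 := ce_anti (f := fun x => lam b x ^ 2 * w x - Y x) le_rfl hx (hyc.sub yc)
      (fun x hx => (hyd x hx).sub (yd x hx)) (fun x _ _ => by
        have := abs_le.1 (hg x); linarith)
    have a2 := ce_anti (f := fun x => -(lam b x ^ 2 * w x) - Y x) le_rfl hx (hyc.neg.sub yc)
      (fun x hx => (hyd x hx).neg.sub (yd x hx)) (fun x _ _ => by
        have := abs_le.1 (hg x); linarith)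
    simp only [l0, Y0] at a1 a2
    rw [abs_le]
    constructor <;> linarith
  have hYp : ∀ x, 0 ≤ x → 0 ≤ Y x := fun x hx => (abs_nonneg _).trans (hyY x hx)
  have hwx : ∀ x, w x = (lam b x ^ 2)⁻¹ * (lam b x ^ 2 * w x) := by
    intro x
    rw [inv_mul_cancel_left₀ (pow_pos (lp x) 2).ne']
  have hvY : ∀ x, 0 ≤ x → |v x| ≤ Λ * (Y x * P x) := by
    intro x hx
    have hd : ∀ x, 0 < x → |Λ * w x| ≤ Λ * (Λ * (lam b x ^ 2 * |v x|) * P x + Y x * (lam b x ^ 2)⁻¹) := by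
      intro x hx
      rw [abs_mul, abs_of_pos hΛ]
      refine mul_le_mul_of_nonneg_left ?_ hΛ.le
      have h1 : |w x| ≤ Y x * (lam b x ^ 2)⁻¹ := by
        have l := lp x
        rw [hwx x, abs_mul, abs_of_pos (by positivity), mul_comm]
        exact mul_le_mul_of_nonneg_right (hyY x hx.le) (by positivity)
      have h2 : 0 ≤ Λ * (lam b x ^ 2 * |v x|) * P x := by
        have := hPn x hx.le
        positivity
      linarith
    have a1 := ce_anti (f := fun x => v x - Λ * (Y x * P x)) le_rfl hx
      (h.cont.1.sub (continuousOn_const.mul (yc.mul pc)))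
      (fun x hx => (h x hx.le).1.sub (((yd x hx).mul (pd x hx)).const_mul Λ)) (fun x hx _ => by
        have := abs_le.1 (hd x hx); linarith)
    have a2 := ce_anti (f := fun x => - v x - Λ * (Y x * P x)) le_rfl hx
      (h.cont.1.neg.sub (continuousOn_const.mul (yc.mul pc)))
      (fun x hx => (h x hx.le).1.neg.sub (((yd x hx).mul (pd x hx)).const_mul Λ)) (fun x hx _ => by
        have := abs_le.1 (hd x hx); linarith)
    simp only [P0, hv0] at a1 a2
    rw [abs_le]
    constructor <;> linarith
  have hvY2 : ∀ x, 0 ≤ x → lam b x ^ 2 * |v x| ≤ Λ * D * (1 + x) * Y x := by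
    intro x hx
    have l := lp x
    have hY := hYp x hx
    have h1 : |v x| ≤ Λ * (Y x * (D * (1 + x) * (lam b x ^ 2)⁻¹)) :=
      (hvY x hx).trans (by have := hD x hx; gcongr)
    calc lam b x ^ 2 * |v x| ≤ lam b x ^ 2 * (Λ * (Y x * (D * (1 + x) * (lam b x ^ 2)⁻¹))) := by
          gcongr
      _ = _ := by field_simp
  set e : ℝ → ℝ := fun x => Real.exp (-(D * Λ ^ 2 / 2) * (1 + x) ^ 2) with he
  have hed : ∀ x, HasDerivAt e (e x * (-(D * Λ ^ 2) * (1 + x))) x := by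
    intro x
    have := ((((hasDerivAt_id x).const_add 1).pow 2).const_mul (-(D * Λ ^ 2 / 2))).exp
    refine this.congr_deriv ?_
    simp [he]
    ring
  have hec : ContinuousOn e (Set.Ici 0) := fun x hx => (hed x).continuousAt.continuousWithinAt
  have key : Y t * e t ≤ Y 0 * e 0 := by
    refine ce_anti (f := fun x => Y x * e x) le_rfl ht (yc.mul hec)
      (fun x hx => (yd x hx).mul (hed x)) ?_
    intro x hx _
    have hep : 0 < e x := Real.exp_pos _
    have := mul_le_mul_of_nonneg_left (mul_le_mul_of_nonneg_left (hvY2 x hx.le) hΛ.le) hep.le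
    nlinarith
  have he0 : e 0 ≤ 1 := by
    apply Real.exp_le_one_iff.2
    have : 0 ≤ D * Λ ^ 2 / 2 := by positivity
    norm_num
    positivity
  have hYt : Y t ≤ Real.exp (D * N ^ 2 / 2) := by
    have h1 : Y t * e t ≤ 1 := by rw [Y0] at key; linarith
    have h2 : Real.exp (-(D * N ^ 2 / 2)) ≤ e t := by
      apply Real.exp_le_exp.2
      have : (Λ * (1 + t)) ^ 2 ≤ N ^ 2 := pow_le_pow_left₀ (by positivity) hz 2
      nlinarith
    have h3 : Y t * Real.exp (-(D * N ^ 2 / 2)) ≤ 1 :=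
      (mul_le_mul_of_nonneg_left h2 (hYp t ht)).trans h1
    rw [Real.exp_neg, ← div_eq_mul_inv, div_le_one (Real.exp_pos _)] at h3
    exact h3
  have ll : lam b t ≤ lam b t ^ 2 := by nlinarith [hl1 t ht]
  have hYt0 := hYp t ht
  have hNn : 0 ≤ N := le_trans (by positivity) hz
  constructor
  · calc lam b t * |v t| ≤ lam b t ^ 2 * |v t| := by gcongr
      _ ≤ Λ * D * (1 + t) * Y t := hvY2 t ht
      _ = D * (Λ * (1 + t)) * Y t := by ring
      _ ≤ D * N * Real.exp (D * N ^ 2 / 2) := by gcongr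
  · calc lam b t * |w t| ≤ lam b t ^ 2 * |w t| := by gcongr
      _ = |lam b t ^ 2 * w t| := by rw [abs_mul, abs_of_nonneg (sq_nonneg (lam b t))]
      _ ≤ Y t := hyY t ht
      _ ≤ _ := hYt

set_option maxHeartbeats 1000000

/-- Combined (dissipative and hyperbolic zone) estimate for
the fundamental solution in the case `limsup t·b(t) < 1/2`:
for `0 < Λ ≤ N` and all `t ≥ 0` the entries of `E(t,0)` are bounded by
`C·Λ^{−γ}/λ(t)` (first column) and `C/λ(t)` (second column). -/
theorem combined_estimate_C1
    (b b' : ℝ → ℝ) (C₁ C₂ : ℝ)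
    (hb' : ∀ t ≥ (0:ℝ), HasDerivAt b (b' t) t)
    (hb'c : ContinuousOn b' (Set.Ici 0))
    (hb0 : ∀ t ≥ (0:ℝ), 0 ≤ b t)
    (hb1 : ∀ t ≥ (0:ℝ), b t ≤ C₁ / (1 + t))
    (hb2 : ∀ t ≥ (0:ℝ), |b' t| ≤ C₂ / (1 + t) ^ 2)
    (hlimsup : ∃ μ < (1/2 : ℝ), ∀ᶠ t in atTop, t * b t ≤ μ)
    (N γ K : ℝ) (hN : C₁ < N) (hγ : 0 ≤ γ) (hK : 0 < K)
    (hzone : ∀ Λ > (0:ℝ), ∀ t ≥ (0:ℝ), Λ * (1 + t) ≤ N → Λ ^ γ * (lam b t) ^ 2 ≤ K) :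
    ∃ C > (0:ℝ), ∀ Λ, 0 < Λ → Λ ≤ N →
      ∀ E : ℝ → Matrix (Fin 2) (Fin 2) ℂ,
        E 0 = 1 →
        (∀ t ≥ (0:ℝ), ∀ i j : Fin 2,
          HasDerivAt (fun τ => E τ i j) ((sysMat Λ b t * E t) i j) t) →
        ∀ t ≥ (0:ℝ),
          ‖E t 0 0‖ ≤ C * Λ ^ (-γ) / lam b t ∧
          ‖E t 1 0‖ ≤ C * Λ ^ (-γ) / lam b t ∧
          ‖E t 0 1‖ ≤ C / lam b t ∧
          ‖E t 1 1‖ ≤ C / lam b t := by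
  have hbc : ContinuousOn b (Set.Ici 0) := fun t ht => (hb' t ht).continuousAt.continuousWithinAt
  obtain ⟨lc, ld, lp, lm, l0⟩ := ce_lam hbc hb0
  have hl1 : ∀ t, 0 ≤ t → 1 ≤ lam b t := fun t ht => l0 ▸ lm 0 t le_rfl ht
  have hC1 : 0 ≤ C₁ := by
    have := (hb0 0 le_rfl).trans (hb1 0 le_rfl); simpa using this
  have hC2 : 0 ≤ C₂ := by
    have := (abs_nonneg _).trans (hb2 0 le_rfl); simpa using this
  have hN0 : 0 < N := lt_of_le_of_lt hC1 hN
  obtain ⟨D, hD0, hD⟩ := ce_P hbc hb0 hb1 hlimsup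
  set H := 2 * Real.exp (C₂ / (1 - C₁ / N) / N) / (1 - C₁ / N) with hH
  have hH0 : 0 < H := by
    have : C₁ / N < 1 := (div_lt_one hN0).2 hN
    have : 0 < 1 - C₁ / N := by linarith
    positivity
  set R := 1 + 2 * H with hR
  -- propagation from the dissipative zone to all times
  have prop : ∀ Λ, 0 < Λ → Λ ≤ N → ∀ v w : ℝ → ℝ, CeCol b Λ v w → ∀ B : ℝ,
      (∀ t, 0 ≤ t → Λ * (1 + t) ≤ N → lam b t * |v t| ≤ B ∧ lam b t * |w t| ≤ B) →
      ∀ t, 0 ≤ t → lam b t * |v t| ≤ R * B ∧ lam b t * |w t| ≤ R * B := by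
    intro Λ hΛ hΛN v w hcol B hB t ht
    have hB0 : 0 ≤ B := by
      have := (hB 0 le_rfl (by linarith)).1
      rw [l0, one_mul] at this
      exact (abs_nonneg _).trans this
    have hR1 : 1 ≤ R := by linarith
    rcases le_total (Λ * (1 + t)) N with hz | hz
    · obtain ⟨h1, h2⟩ := hB t ht hz
      constructor <;> nlinarith
    · have hs1 : Λ * (1 + (N / Λ - 1)) = N := by field_simp; ring
      set s := N / Λ - 1 with hs
      have hs0 : 0 ≤ s := by
        have := (one_le_div hΛ).2 hΛN; linarith
      have hst : s ≤ t := by nlinarith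
      obtain ⟨h1, h2⟩ := hB s hs0 hs1.le
      have key := ce_hyp hb' hb0 hb1 hb2 hN hC1 hC2 hΛ hcol hs0 hst hs1.ge
      rw [← hH] at key
      have l := lp s
      have l' := lp t
      have h1' : (lam b s * |v s|) ^ 2 ≤ B ^ 2 := pow_le_pow_left₀ (by positivity) h1 2
      have h2' : (lam b s * |w s|) ^ 2 ≤ B ^ 2 := pow_le_pow_left₀ (by positivity) h2 2
      rw [mul_pow, sq_abs] at h1' h2'
      have k2 : lam b t ^ 2 * (v t ^ 2 + w t ^ 2) ≤ (R * B) ^ 2 := by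
        refine key.trans ?_
        have : H * (lam b s ^ 2 * (v s ^ 2 + w s ^ 2)) ≤ H * (2 * B ^ 2) :=
          mul_le_mul_of_nonneg_left (by linarith) hH0.le
        refine this.trans ?_
        have hR2 : 2 * H ≤ R ^ 2 := by nlinarith
        nlinarith [mul_le_mul_of_nonneg_right hR2 (sq_nonneg B)]
      have hRB : 0 ≤ R * B := by positivity
      constructor
      · refine le_of_abs_le (abs_le_of_sq_le_sq ?_ hRB)
        rw [mul_pow, sq_abs]
        nlinarith [mul_nonneg (sq_nonneg (lam b t)) (sq_nonneg (w t))]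
      · refine le_of_abs_le (abs_le_of_sq_le_sq ?_ hRB)
        rw [mul_pow, sq_abs]
        nlinarith [mul_nonneg (sq_nonneg (lam b t)) (sq_nonneg (v t))]
  -- first column, real version
  have first : ∀ Λ, 0 < Λ → Λ ≤ N → ∀ v w : ℝ → ℝ, CeCol b Λ v w → v 0 ^ 2 + w 0 ^ 2 ≤ 1 →
      ∀ t, 0 ≤ t → lam b t * |v t| ≤ R * (K * Λ ^ (-γ)) ∧ lam b t * |w t| ≤ R * (K * Λ ^ (-γ)) := by
    intro Λ hΛ hΛN v w hcol h0
    refine prop Λ hΛ hΛN v w hcol _ ?_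
    intro t ht hz
    have hen := (ce_energy hcol hb0 ht).trans h0
    have hv : |v t| ≤ 1 := abs_le_one_iff_mul_self_le_one.2 (by nlinarith [sq_nonneg (w t)])
    have hw : |w t| ≤ 1 := abs_le_one_iff_mul_self_le_one.2 (by nlinarith [sq_nonneg (v t)])
    have hzz := hzone Λ hΛ t ht hz
    have hpos : 0 < Λ ^ γ := Real.rpow_pos_of_pos hΛ γ
    have hl : lam b t ≤ K * Λ ^ (-γ) := by
      rw [Real.rpow_neg hΛ.le, ← div_eq_mul_inv, le_div_iff₀ hpos]
      have : lam b t ≤ lam b t ^ 2 := by nlinarith [hl1 t ht]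
      nlinarith
    have l := lp t
    exact ⟨(mul_le_of_le_one_right l.le hv).trans hl, (mul_le_of_le_one_right l.le hw).trans hl⟩
  set M := D * N * Real.exp (D * N ^ 2 / 2) + Real.exp (D * N ^ 2 / 2) with hM
  have hM0 : 0 < M := by positivity
  have second : ∀ Λ, 0 < Λ → Λ ≤ N → ∀ v w : ℝ → ℝ, CeCol b Λ v w → v 0 = 0 → |w 0| ≤ 1 →
      ∀ t, 0 ≤ t → lam b t * |v t| ≤ R * M ∧ lam b t * |w t| ≤ R * M := by
    intro Λ hΛ hΛN v w hcol hv0 hw0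
    refine prop Λ hΛ hΛN v w hcol _ ?_
    intro t ht hz
    obtain ⟨h1, h2⟩ := ce_diss hbc hb0 hΛ hD0 hD hcol hv0 hw0 ht hz
    have p1 : 0 < D * N * Real.exp (D * N ^ 2 / 2) := by positivity
    have p2 := Real.exp_pos (D * N ^ 2 / 2)
    constructor <;> linarith
  have hR0 : 0 < R := by linarith
  refine ⟨2 * R * K + 2 * R * M, by positivity, ?_⟩
  intro Λ hΛ hΛN E hE0 hE t ht
  have hre : ∀ j, CeCol b Λ (fun τ => (E τ 0 j).re) (fun τ => (E τ 1 j).re) := by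
    intro j x hx
    have d0 := hE x hx 0 j
    have d1 := hE x hx 1 j
    constructor
    · refine (Complex.reCLM.hasFDerivAt.comp_hasDerivAt x d0).congr_deriv ?_
      simp [sysMat, Matrix.mul_apply, Fin.sum_univ_two]
    · refine (Complex.reCLM.hasFDerivAt.comp_hasDerivAt x d1).congr_deriv ?_
      simp [sysMat, Matrix.mul_apply, Fin.sum_univ_two]
      ring
  have him : ∀ j, CeCol b Λ (fun τ => (E τ 0 j).im) (fun τ => (E τ 1 j).im) := by
    intro j x hx
    have d0 := hE x hx 0 j
    have d1 := hE x hx 1 j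
    constructor
    · refine (Complex.imCLM.hasFDerivAt.comp_hasDerivAt x d0).congr_deriv ?_
      simp [sysMat, Matrix.mul_apply, Fin.sum_univ_two]
    · refine (Complex.imCLM.hasFDerivAt.comp_hasDerivAt x d1).congr_deriv ?_
      simp [sysMat, Matrix.mul_apply, Fin.sum_univ_two]
      ring
  have a1 := first Λ hΛ hΛN _ _ (hre 0) (by simp [hE0]) t ht
  have a2 := first Λ hΛ hΛN _ _ (him 0) (by simp [hE0]) t ht
  have a3 := second Λ hΛ hΛN _ _ (hre 1) (by simp [hE0]) (by simp [hE0]) t ht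
  have a4 := second Λ hΛ hΛN _ _ (him 1) (by simp [hE0]) (by simp [hE0]) t ht
  have hpos : 0 < Λ ^ (-γ) := Real.rpow_pos_of_pos hΛ _
  have fin : ∀ (z : ℂ) (B : ℝ), lam b t * |z.re| ≤ B → lam b t * |z.im| ≤ B →
      ‖z‖ * lam b t ≤ 2 * B := by
    intro z B h1 h2
    have := mul_le_mul_of_nonneg_right (Complex.norm_le_abs_re_add_abs_im z) (lp t).le
    linarith
  have e1 : 2 * (R * (K * Λ ^ (-γ))) ≤ (2 * R * K + 2 * R * M) * Λ ^ (-γ) := by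
    have : 0 ≤ 2 * R * M * Λ ^ (-γ) := by positivity
    linarith
  have e2 : 2 * (R * M) ≤ 2 * R * K + 2 * R * M := by
    have : 0 ≤ 2 * R * K := by positivity
    linarith
  refine ⟨?_, ?_, ?_, ?_⟩
  · rw [le_div_iff₀ (lp t)]; exact (fin _ _ a1.1 a2.1).trans e1
  · rw [le_div_iff₀ (lp t)]; exact (fin _ _ a1.2 a2.2).trans e1
  · rw [le_div_iff₀ (lp t)]; exact (fin _ _ a3.1 a4.1).trans e2
  · rw [le_div_iff₀ (lp t)]; exact (fin _ _ a3.2 a4.2).trans e2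
end

section
/- Let b : [0,∞) → ℝ be continuously differentiable with b(t) ≥ 0, b(t) ≤ C₁(1+t)^{−1} and |b'(t)| ≤ C₂(1+t)^{−2} for all t ≥ 0, and assume liminf_{t→∞} t·b(t) > 1/2. Set λ(t) = exp(∫₀^t b(τ)dτ) and μ̄ = limsup_{t→∞} t·b(t). Let N > C₁ and let γ ≥ 0 satisfy γ > μ̄ − 1. Then there is a constant C > 0 (depending only on b, N, γ) such that for every Λ > 0, every twice continuously differentiable u : [0,∞) → ℂ with u''(t) + 2b(t)u'(t) + Λ²u(t) = 0, and every t ≥ 0: √(Λ²|u(t)|² + |u'(t)|²) ≤ (C/λ(t))·( min(Λ,N)^{−γ−1}·Λ·|u(0)| + min(Λ,N)^{−γ}·|u'(0)| ). -/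
open MeasureTheory Filter

/-- Properties of `lam` extended to all of `ℝ` through `b (max t 0)`. -/
lemma aux_lam (b b' : ℝ → ℝ) (hb' : ∀ t ≥ (0:ℝ), HasDerivAt b (b' t) t) :
    ∃ L : ℝ → ℝ, (∀ t ≥ (0:ℝ), L t = lam b t) ∧ L 0 = 1 ∧ (∀ t, 0 < L t) ∧
      ∀ t ≥ (0:ℝ), HasDerivAt L (b t * L t) t := by
  have hc : Continuous (fun t : ℝ => b (max t 0)) := by
    rw [continuous_iff_continuousAt]
    intro t
    have h1 : ContinuousAt b (max t 0) := (hb' _ (le_max_right _ _)).continuousAt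
    exact ContinuousAt.comp (f := fun t : ℝ => max t 0) h1 (by fun_prop)
  refine ⟨fun t => Real.exp (∫ τ in (0:ℝ)..t, b (max τ 0)), ?_, by simp,
    fun t => Real.exp_pos _, ?_⟩
  · intro t ht
    unfold lam
    simp only
    congr 1
    apply intervalIntegral.integral_congr
    intro s hs
    rw [Set.uIcc_of_le ht] at hs
    simp [max_eq_left hs.1]
  · intro t ht
    have h := (intervalIntegral.integral_hasDerivAt_right (hc.intervalIntegrable 0 t)
      (hc.stronglyMeasurableAtFilter _ _) hc.continuousAt).exp
    rw [max_eq_left ht] at h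
    convert h using 1
    ring

lemma aux_mono (f f' : ℝ → ℝ) (a : ℝ) (hf : ∀ t ≥ a, HasDerivAt f (f' t) t)
    (h : ∀ t ≥ a, 0 ≤ f' t) : ∀ t ≥ a, f a ≤ f t := by
  intro t ht
  have : MonotoneOn f (Set.Ici a) := by
    apply monotoneOn_of_hasDerivWithinAt_nonneg (f' := f') (convex_Ici a)
    · exact fun x hx => (hf x hx).continuousAt.continuousWithinAt
    · intro x hx
      rw [interior_Ici] at hx
      exact (hf x (le_of_lt hx)).hasDerivWithinAt
    · intro x hx
      rw [interior_Ici] at hx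
      exact h x (le_of_lt hx)
  exact this (Set.mem_Ici.2 le_rfl) ht ht

/-- derivative of `L(t) (1+t)^p`. -/
lemma aux_pow_deriv (b L : ℝ → ℝ) (p t : ℝ) (ht : 0 ≤ t)
    (hL : HasDerivAt L (b t * L t) t) :
    HasDerivAt (fun s => L s * (1 + s) ^ p)
      (L t * (1 + t) ^ (p - 1) * ((1 + t) * b t + p)) t := by
  have h1 : HasDerivAt (fun s : ℝ => 1 + s) 1 t := by
    simpa using (hasDerivAt_id t).const_add 1
  have h2 := h1.rpow_const (p := p) (Or.inl (by positivity))
  have h3 := hL.mul h2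
  have h4 : (1 + t) ^ p = (1 + t) ^ (p - 1) * (1 + t) := by
    rw [Real.rpow_sub_one (by positivity)]
    field_simp
  refine h3.congr_deriv ?_
  rw [h4]; ring

lemma aux_lam_mono (b L : ℝ → ℝ) (hL0 : ∀ t, 0 < L t)
    (hL : ∀ t ≥ (0:ℝ), HasDerivAt L (b t * L t) t) (hb0 : ∀ t ≥ (0:ℝ), 0 ≤ b t) :
    ∀ s t, 0 ≤ s → s ≤ t → L s ≤ L t := by
  intro s t hs hst
  exact aux_mono L _ s (fun t ht => hL t (hs.trans ht))
    (fun t ht => mul_nonneg (hb0 t (hs.trans ht)) (hL0 t).le) t hst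

/-- lower bound of `L` -/
lemma aux_lower (b L : ℝ → ℝ) (hL1 : L 0 = 1) (hL0 : ∀ t, 0 < L t)
    (hL : ∀ t ≥ (0:ℝ), HasDerivAt L (b t * L t) t) (hb0 : ∀ t ≥ (0:ℝ), 0 ≤ b t)
    (μ : ℝ) (hμ : 0 < μ) (h : ∀ᶠ t in atTop, μ ≤ t * b t) :
    ∃ c > 0, ∀ t ≥ (0:ℝ), c * (1 + t) ^ μ ≤ L t := by
  obtain ⟨T, hT⟩ := eventually_atTop.1 h
  set S := max T 0 with hS
  have hS0 : 0 ≤ S := le_max_right _ _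
  have hLm := aux_lam_mono b L hL0 hL hb0
  have hp : (0:ℝ) < (1 + S) ^ (-μ) := by positivity
  refine ⟨(1 + S) ^ (-μ), hp, fun t ht => ?_⟩
  have hl1 : ∀ t ≥ (0:ℝ), 1 ≤ L t := fun t ht => by rw [← hL1]; exact hLm 0 t le_rfl ht
  rcases le_total t S with h1 | h1
  · calc (1 + S) ^ (-μ) * (1 + t) ^ μ ≤ (1 + S) ^ (-μ) * (1 + S) ^ μ := by gcongr
      _ = 1 := by rw [← Real.rpow_add (by positivity)]; simp
      _ ≤ L t := hl1 t ht
  · have := aux_mono _ _ S (fun t ht => aux_pow_deriv b L (-μ) t (hS0.trans ht) (hL t (hS0.trans ht)))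
      (fun t ht => by
        have h0 : 0 ≤ t := hS0.trans ht
        have h2 := hT t ((le_max_left _ _).trans ht)
        have h3 := hb0 t h0
        have := hL0 t
        refine mul_nonneg (by positivity) (by linarith)) t h1
    have h5 : (1 + S) ^ (-μ) ≤ L t * (1 + t) ^ (-μ) :=
      le_trans (by nlinarith [hl1 S hS0]) this
    calc (1 + S) ^ (-μ) * (1 + t) ^ μ ≤ L t * (1 + t) ^ (-μ) * (1 + t) ^ μ := by gcongr
      _ = L t := by rw [mul_assoc, ← Real.rpow_add (by positivity)]; simp

/-- upper bound of `L` -/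
lemma aux_upper (b L : ℝ → ℝ) (C₁ γ μ' : ℝ) (hL0 : ∀ t, 0 < L t)
    (hL : ∀ t ≥ (0:ℝ), HasDerivAt L (b t * L t) t) (hb0 : ∀ t ≥ (0:ℝ), 0 ≤ b t)
    (hb1 : ∀ t ≥ (0:ℝ), b t ≤ C₁ / (1 + t)) (hγ0 : 0 ≤ γ)
    (h : ∀ᶠ t in atTop, t * b t ≤ μ') (hμ : μ' - 1 < γ) :
    ∃ D > 0, ∀ t ≥ (0:ℝ), L t ≤ D * (1 + t) ^ (γ + 1) := by
  obtain ⟨T, hT⟩ := eventually_atTop.1 h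
  set d := γ + 1 - μ' with hd
  have hd0 : 0 < d := by linarith
  set S := max (max T 0) (C₁ / d) with hS
  have hS0 : 0 ≤ S := (le_max_right _ _).trans (le_max_left _ _)
  have hLm := aux_lam_mono b L hL0 hL hb0
  refine ⟨L S, hL0 S, fun t ht => ?_⟩
  have hLS := hL0 S
  rcases le_total t S with h1 | h1
  · have h2 : (1:ℝ) ≤ (1 + t) ^ (γ + 1) := Real.one_le_rpow (by linarith) (by linarith)
    have := hLm t S ht h1
    nlinarith
  · have := aux_mono _ _ S (fun t ht => (aux_pow_deriv b L (-(γ + 1)) t (hS0.trans ht) (hL t (hS0.trans ht))).neg)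
      (fun t ht => by
        have h0 : 0 ≤ t := hS0.trans ht
        have h2 := hT t (((le_max_left _ _).trans (le_max_left _ _)).trans ht)
        have h3 := hb1 t h0
        have h4 : C₁ / d ≤ t := (le_max_right _ _).trans ht
        have h6 : b t ≤ d := by
          refine h3.trans ?_
          rw [div_le_iff₀ (by positivity)]
          rw [div_le_iff₀ hd0] at h4
          nlinarith
        have := hL0 t
        rw [← mul_neg]
        refine mul_nonneg (by positivity) (by linarith)) t h1
    simp only [Pi.neg_apply] at this
    have h7 : (1 + S) ^ (-(γ + 1)) ≤ 1 := Real.rpow_le_one_of_one_le_of_nonpos (by linarith) (by linarith)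
    have h5 : L t * (1 + t) ^ (-(γ + 1)) ≤ L S := by nlinarith
    calc L t = L t * (1 + t) ^ (-(γ + 1)) * (1 + t) ^ (γ + 1) := by
          rw [mul_assoc, ← Real.rpow_add (by positivity)]; simp
      _ ≤ _ := by gcongr

/-- hyperbolic zone -/
lemma aux_hyp (b b' L : ℝ → ℝ) (C₁ C₂ : ℝ) (hC₁ : 0 ≤ C₁)
    (hb' : ∀ t ≥ (0:ℝ), HasDerivAt b (b' t) t)
    (hb0 : ∀ t ≥ (0:ℝ), 0 ≤ b t)
    (hb1 : ∀ t ≥ (0:ℝ), b t ≤ C₁ / (1 + t))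
    (hb2 : ∀ t ≥ (0:ℝ), |b' t| ≤ C₂ / (1 + t) ^ 2)
    (hL : ∀ t ≥ (0:ℝ), HasDerivAt L (b t * L t) t)
    (Λ : ℝ) (hΛ : 0 < Λ) (u u' u'' : ℝ → ℂ)
    (hu : ∀ t ≥ (0:ℝ), HasDerivAt u (u' t) t)
    (hu' : ∀ t ≥ (0:ℝ), HasDerivAt u' (u'' t) t)
    (hode : ∀ t ≥ (0:ℝ), u'' t + 2 * (b t : ℂ) * u' t + (Λ : ℂ) ^ 2 * u t = 0)
    (s t : ℝ) (hs : 0 ≤ s) (hst : s ≤ t) (hsΛ : 1 ≤ Λ * (1 + s)) :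
    L t ^ 2 * (Λ ^ 2 * ‖u t‖ ^ 2 + ‖u' t‖ ^ 2) ≤
      ((2 + 2 * C₁ ^ 2) ^ 2 * Real.exp (C₁ ^ 2 + C₂)) *
        (L s ^ 2 * (Λ ^ 2 * ‖u s‖ ^ 2 + ‖u' s‖ ^ 2)) := by
  have hC₂ : 0 ≤ C₂ := by
    have := (abs_nonneg _).trans (hb2 0 le_rfl)
    simpa using this
  set M := C₁ ^ 2 + C₂ with hM
  have hM0 : 0 ≤ M := by positivity
  set w : ℝ → ℂ := fun t => (L t : ℂ) * u t with hw
  set v : ℝ → ℂ := fun t => (L t : ℂ) * (u' t + b t * u t) with hv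
  have hwd : ∀ t ≥ (0:ℝ), HasDerivAt w (v t) t := by
    intro t ht
    refine ((hL t ht).ofReal_comp.mul (hu t ht)).congr_deriv ?_
    simp only [hv]; push_cast; ring
  have hvd : ∀ t ≥ (0:ℝ), HasDerivAt v (((b t ^ 2 + b' t - Λ ^ 2 : ℝ) : ℂ) * w t) t := by
    intro t ht
    refine ((hL t ht).ofReal_comp.mul ((hu' t ht).add ((hb' t ht).ofReal_comp.mul (hu t ht)))).congr_deriv ?_
    have : u'' t = - (2 * (b t : ℂ) * u' t + (Λ : ℂ) ^ 2 * u t) := by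
      linear_combination hode t ht
    simp only [hw, this, Pi.add_apply, Pi.mul_apply]; push_cast; ring
  set E : ℝ → ℝ := fun t => Λ ^ 2 * ‖w t‖ ^ 2 + ‖v t‖ ^ 2 with hE
  have hEd : ∀ t ≥ (0:ℝ), HasDerivAt E (2 * (b t ^ 2 + b' t) * inner ℝ (w t) (v t)) t := by
    intro t ht
    have h1 := ((hwd t ht).norm_sq.const_mul (Λ ^ 2)).add (hvd t ht).norm_sq
    refine h1.congr_deriv ?_
    rw [← Complex.real_smul, real_inner_smul_right, real_inner_comm (w t) (v t)]
    ring
  have hGd : ∀ t ≥ (0:ℝ), HasDerivAt (fun t => Real.exp (M / Λ * (1 + t)⁻¹))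
      (Real.exp (M / Λ * (1 + t)⁻¹) * (M / Λ * (-1 / (1 + t) ^ 2))) t := by
    intro t ht
    have h1 : HasDerivAt (fun s : ℝ => 1 + s) 1 t := by
      simpa using (hasDerivAt_id t).const_add 1
    exact ((h1.inv (by positivity)).const_mul (M / Λ)).exp
  have hkey := aux_mono _ _ s (fun t ht => ((hEd t (hs.trans ht)).mul (hGd t (hs.trans ht))).neg)
    (by
      intro t ht
      have ht0 : 0 ≤ t := hs.trans ht
      have hq : |b t ^ 2 + b' t| ≤ M / (1 + t) ^ 2 := by
        have h1 : b t ^ 2 ≤ (C₁ / (1 + t)) ^ 2 := by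
          have := hb0 t ht0
          have := hb1 t ht0
          gcongr
        calc |b t ^ 2 + b' t| ≤ |b t ^ 2| + |b' t| := abs_add_le _ _
          _ ≤ (C₁ / (1 + t)) ^ 2 + C₂ / (1 + t) ^ 2 := by
            rw [abs_of_nonneg (sq_nonneg _)]; linarith [hb2 t ht0]
          _ = _ := by rw [hM]; field_simp
      have hi : |inner ℝ (w t) (v t)| ≤ ‖w t‖ * ‖v t‖ := abs_real_inner_le_norm _ _
      have h2 : 2 * (b t ^ 2 + b' t) * inner ℝ (w t) (v t) ≤ M / (1 + t) ^ 2 * (E t / Λ) := by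
        have h3 : 2 * (‖w t‖ * ‖v t‖) ≤ E t / Λ := by
          rw [le_div_iff₀ hΛ]
          simp only [hE]
          nlinarith [sq_nonneg (Λ * ‖w t‖ - ‖v t‖)]
        calc _ ≤ |2 * (b t ^ 2 + b' t) * inner ℝ (w t) (v t)| := le_abs_self _
          _ = |b t ^ 2 + b' t| * (2 * |inner ℝ (w t) (v t)|) := by
            rw [abs_mul, abs_mul, abs_two]; ring
          _ ≤ M / (1 + t) ^ 2 * (2 * (‖w t‖ * ‖v t‖)) := by gcongr
          _ ≤ _ := by gcongr
      have h4 := Real.exp_pos (M / Λ * (1 + t)⁻¹)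
      have h5 : -(2 * (b t ^ 2 + b' t) * inner ℝ (w t) (v t) * Real.exp (M / Λ * (1 + t)⁻¹) +
          E t * (Real.exp (M / Λ * (1 + t)⁻¹) * (M / Λ * (-1 / (1 + t) ^ 2)))) =
          Real.exp (M / Λ * (1 + t)⁻¹) * (M / (1 + t) ^ 2 * (E t / Λ) -
            2 * (b t ^ 2 + b' t) * inner ℝ (w t) (v t)) := by
        field_simp
        ring
      rw [h5]
      exact mul_nonneg h4.le (by linarith)) t hst
  simp only [Pi.neg_apply, Pi.mul_apply, neg_le_neg_iff] at hkey
  have ht0 : 0 ≤ t := hs.trans hst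
  have hE0 : ∀ t, 0 ≤ E t := fun t => by simp only [hE]; positivity
  have hEE : E t ≤ Real.exp M * E s := by
    have h1 : 1 ≤ Real.exp (M / Λ * (1 + t)⁻¹) := Real.one_le_exp (by positivity)
    have h2 : Real.exp (M / Λ * (1 + s)⁻¹) ≤ Real.exp M := by
      apply Real.exp_le_exp.2
      have : M / Λ * (1 + s)⁻¹ = M / (Λ * (1 + s)) := by field_simp
      rw [this]
      exact div_le_self hM0 hsΛ
    nlinarith [hE0 t, hE0 s]
  have hbz : ∀ r, s ≤ r → b r ≤ C₁ * Λ := by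
    intro r hr
    have hr0 : 0 ≤ r := hs.trans hr
    refine (hb1 r hr0).trans ?_
    rw [div_le_iff₀ (by positivity)]
    have : 1 ≤ Λ * (1 + r) := hsΛ.trans (by gcongr)
    nlinarith
  have hnw : ∀ r, ‖w r‖ ^ 2 = L r ^ 2 * ‖u r‖ ^ 2 := by
    intro r; simp [hw, mul_pow]
  have hnv : ∀ r, ‖v r‖ ^ 2 = L r ^ 2 * ‖u' r + b r * u r‖ ^ 2 := by
    intro r; simp [hv, mul_pow]
  have hgen : ∀ (x y : ℂ) (β : ℝ), 0 ≤ β → β ≤ C₁ * Λ →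
      ‖x + β * y‖ ^ 2 ≤ 2 * ‖x‖ ^ 2 + 2 * C₁ ^ 2 * (Λ ^ 2 * ‖y‖ ^ 2) := by
    intro x y β hβ0 hβ
    have h1 : ‖x + β * y‖ ≤ ‖x‖ + C₁ * Λ * ‖y‖ := by
      calc ‖x + β * y‖ ≤ ‖x‖ + ‖(β:ℂ) * y‖ := norm_add_le _ _
        _ = ‖x‖ + β * ‖y‖ := by rw [norm_mul, Complex.norm_real, Real.norm_of_nonneg hβ0]
        _ ≤ _ := by gcongr
    calc ‖x + β * y‖ ^ 2 ≤ (‖x‖ + C₁ * Λ * ‖y‖) ^ 2 := by gcongr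
      _ ≤ _ := by nlinarith [sq_nonneg (‖x‖ - C₁ * Λ * ‖y‖)]
  have hup : E s ≤ (2 + 2 * C₁ ^ 2) * (L s ^ 2 * (Λ ^ 2 * ‖u s‖ ^ 2 + ‖u' s‖ ^ 2)) := by
    simp only [hE, hnw, hnv]
    have h1 := hgen (u' s) (u s) (b s) (hb0 s hs) (hbz s le_rfl)
    have h2 : Λ ^ 2 * ‖u s‖ ^ 2 + ‖u' s + b s * u s‖ ^ 2 ≤
        (2 + 2 * C₁ ^ 2) * (Λ ^ 2 * ‖u s‖ ^ 2 + ‖u' s‖ ^ 2) := by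
      have : 0 ≤ Λ ^ 2 * ‖u s‖ ^ 2 := by positivity
      have : 0 ≤ C₁ ^ 2 * ‖u' s‖ ^ 2 := by positivity
      linarith
    have := mul_le_mul_of_nonneg_left h2 (sq_nonneg (L s))
    linarith
  have hlow : L t ^ 2 * (Λ ^ 2 * ‖u t‖ ^ 2 + ‖u' t‖ ^ 2) ≤ (2 + 2 * C₁ ^ 2) * E t := by
    simp only [hE, hnw, hnv]
    have h1 := hgen (u' t + b t * u t) (-u t) (b t) (hb0 t ht0) (hbz t hst)
    have h3 : u' t + b t * u t + b t * (-u t) = u' t := by ring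
    rw [h3, norm_neg] at h1
    have h2 : Λ ^ 2 * ‖u t‖ ^ 2 + ‖u' t‖ ^ 2 ≤
        (2 + 2 * C₁ ^ 2) * (Λ ^ 2 * ‖u t‖ ^ 2 + ‖u' t + b t * u t‖ ^ 2) := by
      have : 0 ≤ Λ ^ 2 * ‖u t‖ ^ 2 := by positivity
      have : 0 ≤ C₁ ^ 2 * ‖u' t + b t * u t‖ ^ 2 := by positivity
      linarith
    have := mul_le_mul_of_nonneg_left h2 (sq_nonneg (L t))
    linarith
  calc _ ≤ (2 + 2 * C₁ ^ 2) * E t := hlow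
    _ ≤ (2 + 2 * C₁ ^ 2) * (Real.exp M * ((2 + 2 * C₁ ^ 2) * (L s ^ 2 * (Λ ^ 2 * ‖u s‖ ^ 2 + ‖u' s‖ ^ 2)))) := by
      have := hEE.trans (mul_le_mul_of_nonneg_left hup (Real.exp_pos M).le)
      gcongr
    _ = _ := by ring

/-- dissipative zone -/
lemma aux_diss (b L : ℝ → ℝ) (c μ D γ : ℝ) (hc : 0 < c) (hμ : 1/2 < μ)
    (hL1 : L 0 = 1) (hL0 : ∀ t, 0 < L t)
    (hb0 : ∀ t ≥ (0:ℝ), 0 ≤ b t)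
    (hL : ∀ t ≥ (0:ℝ), HasDerivAt L (b t * L t) t)
    (hlow : ∀ t ≥ (0:ℝ), c * (1 + t) ^ μ ≤ L t)
    (hup : ∀ t ≥ (0:ℝ), L t ≤ D * (1 + t) ^ (γ + 1)) (hD : 0 < D) (hγ0 : 0 ≤ γ)
    (Λ : ℝ) (hΛ : 0 < Λ) (u u' u'' : ℝ → ℂ)
    (hu : ∀ t ≥ (0:ℝ), HasDerivAt u (u' t) t)
    (hu' : ∀ t ≥ (0:ℝ), HasDerivAt u' (u'' t) t)
    (hode : ∀ t ≥ (0:ℝ), u'' t + 2 * (b t : ℂ) * u' t + (Λ : ℂ) ^ 2 * u t = 0)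
    (t : ℝ) (ht : 0 ≤ t) (htΛ : Λ * (1 + t) ≤ 1) :
    L t * (Λ * ‖u t‖ + ‖u' t‖) ≤
      (4 * D * (1 + 1 / (c ^ 2 * (2 * μ - 1))) + 1) * (Λ ^ (-γ) * (‖u 0‖ + ‖u' 0‖)) := by
  have hLm := aux_lam_mono b L hL0 hL hb0
  obtain ⟨r, hr, hmax⟩ := isCompact_Icc.exists_isMaxOn (Set.nonempty_Icc.2 ht)
    (f := fun s => ‖u s‖) (fun x hx => (hu x hx.1).continuousAt.norm.continuousWithinAt)
  set B := ‖u r‖ with hB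
  have hB0 : 0 ≤ B := norm_nonneg _
  have huB : ∀ s ∈ Set.Icc 0 t, ‖u s‖ ≤ B := fun s hs => hmax hs
  -- bound on the derivative
  have hder : ∀ s ∈ Set.Icc 0 t, L s ^ 2 * ‖u' s‖ ≤ ‖u' 0‖ + L s ^ 2 * (Λ ^ 2 * B * s) := by
    intro s hs
    set g : ℝ → ℂ := fun x => ((L x ^ 2 : ℝ) : ℂ) * u' x with hg
    have hgd : ∀ x ∈ Set.Icc 0 s, HasDerivWithinAt g (-((L x ^ 2 * Λ ^ 2 : ℝ) : ℂ) * u x) (Set.Icc 0 s) x := by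
      intro x hx
      have h1 := ((hL x hx.1).pow 2).ofReal_comp.mul (hu' x hx.1)
      refine (h1.congr_deriv ?_).hasDerivWithinAt
      have : u'' x = - (2 * (b x : ℂ) * u' x + (Λ : ℂ) ^ 2 * u x) := by
        linear_combination hode x hx.1
      simp only [this, Pi.pow_apply]; push_cast; ring
    have h2 := (convex_Icc 0 s).norm_image_sub_le_of_norm_hasDerivWithin_le (C := L s ^ 2 * Λ ^ 2 * B) hgd
      (by
        intro x hx
        rw [norm_mul, norm_neg, Complex.norm_real, Real.norm_of_nonneg (by positivity)]
        have := huB x ⟨hx.1, hx.2.trans hs.2⟩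
        have := hLm x s hx.1 hx.2
        have := (hL0 x).le
        gcongr) (Set.left_mem_Icc.2 hs.1) (Set.right_mem_Icc.2 hs.1)
    have h3 : ‖g s‖ = L s ^ 2 * ‖u' s‖ := by
      simp only [hg]
      rw [norm_mul, Complex.norm_real, Real.norm_of_nonneg (by positivity)]
    have h4 : g 0 = u' 0 := by simp [hg, hL1]
    have h5 := norm_sub_norm_le (g s) (g 0)
    rw [h3, h4] at h5
    rw [h4, sub_zero, Real.norm_of_nonneg hs.1] at h2
    linarith
  set κ := 2 * μ - 1 with hκ
  have hκ0 : 0 < κ := by linarith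
  have hder2 : ∀ s ∈ Set.Icc 0 t, ‖u' s‖ ≤ ‖u' 0‖ / c ^ 2 * (1 + s) ^ (-κ - 1) + Λ ^ 2 * B * s := by
    intro s hs
    have hs0 := hs.1
    have h1 := hder s hs
    have h2 : c ^ 2 * (1 + s) ^ (κ + 1) ≤ L s ^ 2 := by
      have : (1 + s) ^ (κ + 1) = ((1 + s) ^ μ) ^ 2 := by
        rw [← Real.rpow_mul_natCast (by positivity)]; congr 1; push_cast; linarith
      rw [this, ← mul_pow]
      have := hlow s hs0
      gcongr
    have hLs := hL0 s
    have h3 : ‖u' s‖ ≤ ‖u' 0‖ / L s ^ 2 + Λ ^ 2 * B * s := by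
      rw [div_add' _ _ _ (by positivity), le_div_iff₀ (by positivity)]
      linarith
    have h4 : ‖u' 0‖ / L s ^ 2 ≤ ‖u' 0‖ / (c ^ 2 * (1 + s) ^ (κ + 1)) := by gcongr
    have h5 : ‖u' 0‖ / (c ^ 2 * (1 + s) ^ (κ + 1)) = ‖u' 0‖ / c ^ 2 * (1 + s) ^ (-κ - 1) := by
      rw [show -κ - 1 = -(κ + 1) by ring, Real.rpow_neg (by positivity)]
      field_simp
    linarith
  -- bound on u
  have hubd : ∀ s ∈ Set.Icc 0 t, ‖u s‖ ≤ ‖u 0‖ + ‖u' 0‖ / c ^ 2 * ((1 - (1 + s) ^ (-κ)) / κ) + Λ ^ 2 * B * (s ^ 2 / 2) := by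
    have := image_norm_le_of_norm_deriv_right_le_deriv_boundary' (f := u) (f' := u') (a := 0) (b := t)
      (B := fun s => ‖u 0‖ + ‖u' 0‖ / c ^ 2 * ((1 - (1 + s) ^ (-κ)) / κ) + Λ ^ 2 * B * (s ^ 2 / 2))
      (B' := fun s => ‖u' 0‖ / c ^ 2 * (1 + s) ^ (-κ - 1) + Λ ^ 2 * B * s)
      (fun x hx => (hu x hx.1).continuousAt.continuousWithinAt)
      (fun x hx => (hu x hx.1).hasDerivWithinAt) (by simp)
    have hBd : ∀ x ≥ (0:ℝ), HasDerivAt (fun s => ‖u 0‖ + ‖u' 0‖ / c ^ 2 * ((1 - (1 + s) ^ (-κ)) / κ) + Λ ^ 2 * B * (s ^ 2 / 2))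
        (‖u' 0‖ / c ^ 2 * (1 + x) ^ (-κ - 1) + Λ ^ 2 * B * x) x := by
      intro x hx
      have h1 : HasDerivAt (fun s : ℝ => 1 + s) 1 x := by
        simpa using (hasDerivAt_id x).const_add 1
      have h2 := h1.rpow_const (p := -κ) (Or.inl (by positivity))
      have h3 := ((((h2.const_sub 1).div_const κ).const_mul (‖u' 0‖ / c ^ 2)).const_add ‖u 0‖).add
        (((hasDerivAt_pow 2 x).div_const 2).const_mul (Λ ^ 2 * B))
      refine h3.congr_deriv ?_
      field_simp
      push_cast
      ring
    exact fun s hs => this (fun x hx => (hBd x hx.1).continuousAt.continuousWithinAt)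
      (fun x hx => (hBd x hx.1).hasDerivWithinAt) (fun x hx => hder2 x ⟨hx.1, hx.2.le⟩) hs
  have hΛ1 : Λ ≤ 1 := by nlinarith
  have hBle : B ≤ 2 * (‖u 0‖ + ‖u' 0‖ / c ^ 2 * (1 / κ)) := by
    have h1 := hubd r hr
    have hr0 := hr.1
    have h2 : (1 - (1 + r) ^ (-κ)) / κ ≤ 1 / κ := by
      have : 0 ≤ (1 + r) ^ (-κ) := by positivity
      gcongr
      linarith
    have h3 : ‖u' 0‖ / c ^ 2 * ((1 - (1 + r) ^ (-κ)) / κ) ≤ ‖u' 0‖ / c ^ 2 * (1 / κ) := by gcongr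
    have h4 : Λ * r ≤ 1 := by
      have := hr.2
      nlinarith
    have h5 : Λ ^ 2 * B * (r ^ 2 / 2) ≤ B / 2 := by
      have : (Λ * r) ^ 2 ≤ 1 := pow_le_one₀ (by positivity) h4
      nlinarith
    change B ≤ _ at h1
    linarith
  have hB2 : B ≤ 2 * (1 + 1 / (c ^ 2 * κ)) * (‖u 0‖ + ‖u' 0‖) := by
    refine hBle.trans ?_
    have h1 : ‖u' 0‖ / c ^ 2 * (1 / κ) = 1 / (c ^ 2 * κ) * ‖u' 0‖ := by field_simp
    rw [h1]
    have : 0 ≤ 1 / (c ^ 2 * κ) := by positivity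
    nlinarith [norm_nonneg (u 0), norm_nonneg (u' 0), mul_nonneg this (norm_nonneg (u 0))]
  have hLΛ : L t * Λ ≤ D * Λ ^ (-γ) := by
    have h1 : (1 + t) ^ (γ + 1) ≤ (Λ⁻¹) ^ (γ + 1) := by
      have : 1 + t ≤ Λ⁻¹ := by
        rw [← one_div, le_div_iff₀ hΛ]; linarith
      gcongr
    have h2 : (Λ⁻¹) ^ (γ + 1) * Λ = Λ ^ (-γ) := by
      rw [Real.inv_rpow hΛ.le, ← Real.rpow_neg hΛ.le, ← Real.rpow_add_one hΛ.ne']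
      congr 1; ring
    calc L t * Λ ≤ D * (Λ⁻¹) ^ (γ + 1) * Λ := by
          gcongr
          exact (hup t ht).trans (by gcongr)
      _ = _ := by rw [mul_assoc, h2]
  have hLt := hL0 t
  have hLt1 : 1 ≤ L t := by rw [← hL1]; exact hLm 0 t le_rfl ht
  have hΛγ : 1 ≤ Λ ^ (-γ) := Real.one_le_rpow_of_pos_of_le_one_of_nonpos hΛ hΛ1 (by linarith)
  have ht' : t ∈ Set.Icc 0 t := Set.right_mem_Icc.2 ht
  have f1 : L t * (Λ * ‖u t‖) ≤ D * Λ ^ (-γ) * B := by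
    rw [← mul_assoc]
    have := huB t ht'
    gcongr
  have f2 : L t * ‖u' t‖ ≤ ‖u' 0‖ + D * Λ ^ (-γ) * B := by
    have h1 := hder t ht'
    have h2 : L t * (L t * ‖u' t‖) ≤ L t * (‖u' 0‖ + L t * Λ * (Λ * t) * B) := by
      nlinarith [norm_nonneg (u' 0)]
    have h3 := le_of_mul_le_mul_left h2 hLt
    have h4 : Λ * t ≤ 1 := by nlinarith
    have h5 : L t * Λ * (Λ * t) * B ≤ D * Λ ^ (-γ) * 1 * B := by gcongr
    linarith
  have f3 : D * Λ ^ (-γ) * B ≤ D * Λ ^ (-γ) * (2 * (1 + 1 / (c ^ 2 * κ)) * (‖u 0‖ + ‖u' 0‖)) := by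
    gcongr
  have f4 : ‖u' 0‖ ≤ Λ ^ (-γ) * (‖u 0‖ + ‖u' 0‖) := by
    nlinarith [norm_nonneg (u 0), norm_nonneg (u' 0)]
  calc _ = L t * (Λ * ‖u t‖) + L t * ‖u' t‖ := by ring
    _ ≤ 2 * (D * Λ ^ (-γ) * (2 * (1 + 1 / (c ^ 2 * κ)) * (‖u 0‖ + ‖u' 0‖))) + Λ ^ (-γ) * (‖u 0‖ + ‖u' 0‖) := by linarith
    _ = _ := by ring

/-- Energy estimate (Theorem `thm:EnEst` at fixed frequency)
in the case `liminf t·b(t) > 1/2` with `γ ≥ 0`, `γ > μ̄ − 1` where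
`μ̄ = limsup t·b(t)` (expressed by an eventual upper bound `μ'` of `t·b(t)` with
`γ > μ' − 1`): every solution of `u'' + 2b(t)u' + Λ²u = 0` satisfies
`√(Λ²|u(t)|² + |u'(t)|²) ≤ (C/λ(t))·(min(Λ,N)^{−γ−1}Λ|u(0)| + min(Λ,N)^{−γ}|u'(0)|)`. -/
theorem energy_estimate_modified_space
    (b b' : ℝ → ℝ) (C₁ C₂ : ℝ)
    (hb' : ∀ t ≥ (0:ℝ), HasDerivAt b (b' t) t)
    (hb'c : ContinuousOn b' (Set.Ici 0))
    (hb0 : ∀ t ≥ (0:ℝ), 0 ≤ b t)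
    (hb1 : ∀ t ≥ (0:ℝ), b t ≤ C₁ / (1 + t))
    (hb2 : ∀ t ≥ (0:ℝ), |b' t| ≤ C₂ / (1 + t) ^ 2)
    (hliminf : ∃ μ > (1/2 : ℝ), ∀ᶠ t in atTop, μ ≤ t * b t)
    (N γ : ℝ) (hN : C₁ < N) (hγ0 : 0 ≤ γ)
    (hγ : ∃ μ' : ℝ, (∀ᶠ t in atTop, t * b t ≤ μ') ∧ μ' - 1 < γ) :
    ∃ C > (0:ℝ), ∀ Λ > (0:ℝ), ∀ u u' u'' : ℝ → ℂ,
      (∀ t ≥ (0:ℝ), HasDerivAt u (u' t) t) →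
      (∀ t ≥ (0:ℝ), HasDerivAt u' (u'' t) t) →
      ContinuousOn u'' (Set.Ici 0) →
      (∀ t ≥ (0:ℝ), u'' t + 2 * (b t : ℂ) * u' t + (Λ : ℂ) ^ 2 * u t = 0) →
      ∀ t ≥ (0:ℝ),
        Real.sqrt (Λ ^ 2 * ‖u t‖ ^ 2 + ‖u' t‖ ^ 2) ≤
          (C / lam b t) *
            ((min Λ N) ^ (-(γ + 1)) * Λ * ‖u 0‖ + (min Λ N) ^ (-γ) * ‖u' 0‖) := by
  obtain ⟨L, hLlam, hL1, hL0, hL⟩ := aux_lam b b' hb'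
  obtain ⟨μ, hμ, hμe⟩ := hliminf
  obtain ⟨μ', hμ'e, hμ'⟩ := hγ
  obtain ⟨c, hc, hlow⟩ := aux_lower b L hL1 hL0 hL hb0 μ (by linarith) hμe
  obtain ⟨D, hD, hup⟩ := aux_upper b L C₁ γ μ' hL0 hL hb0 hb1 hγ0 hμ'e hμ'
  have hC₁ : 0 ≤ C₁ := by
    have := (hb0 0 le_rfl).trans (hb1 0 le_rfl)
    simpa using this
  have hN0 : 0 < N := by linarith
  set K := (2 + 2 * C₁ ^ 2) ^ 2 * Real.exp (C₁ ^ 2 + C₂) with hK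
  have hK0 : 0 < K := by positivity
  set Q := 4 * D * (1 + 1 / (c ^ 2 * (2 * μ - 1))) + 1 with hQ
  have hκ : 0 < 2 * μ - 1 := by linarith
  have hQ0 : 0 < Q := by positivity
  set P := N ^ (γ + 1) + N ^ γ with hP
  have hP0 : 0 < P := by positivity
  have hsK : 0 < Real.sqrt K := Real.sqrt_pos.2 hK0
  refine ⟨Q + Real.sqrt K * Q + Real.sqrt K * P, by positivity, ?_⟩
  intro Λ hΛ u u' u'' hu hu' _ hode t ht
  rw [← hLlam t ht]
  have hLt := hL0 t
  set R := (min Λ N) ^ (-(γ + 1)) * Λ * ‖u 0‖ + (min Λ N) ^ (-γ) * ‖u' 0‖ with hR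
  have hm : 0 < min Λ N := lt_min hΛ hN0
  have hR0 : 0 ≤ R := by positivity
  suffices h : L t * Real.sqrt (Λ ^ 2 * ‖u t‖ ^ 2 + ‖u' t‖ ^ 2) ≤
      (Q + Real.sqrt K * Q + Real.sqrt K * P) * R by
    rw [div_mul_eq_mul_div, le_div_iff₀ hLt]
    linarith
  have hsq : ∀ s, Real.sqrt (Λ ^ 2 * ‖u s‖ ^ 2 + ‖u' s‖ ^ 2) ≤ Λ * ‖u s‖ + ‖u' s‖ := by
    intro s
    apply Real.sqrt_le_iff.2
    refine ⟨by positivity, ?_⟩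
    have : 0 ≤ Λ * ‖u s‖ * ‖u' s‖ := by positivity
    nlinarith
  have hhyp : ∀ s, 0 ≤ s → s ≤ t → 1 ≤ Λ * (1 + s) →
      L t * Real.sqrt (Λ ^ 2 * ‖u t‖ ^ 2 + ‖u' t‖ ^ 2) ≤
        Real.sqrt K * (L s * (Λ * ‖u s‖ + ‖u' s‖)) := by
    intro s hs hst hsΛ
    have h1 := aux_hyp b b' L C₁ C₂ hC₁ hb' hb0 hb1 hb2 hL Λ hΛ u u' u'' hu hu' hode s t hs hst hsΛ
    rw [← hK] at h1
    have h2 := Real.sqrt_le_sqrt h1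
    rw [Real.sqrt_mul (sq_nonneg _), Real.sqrt_sq hLt.le, Real.sqrt_mul hK0.le,
      Real.sqrt_mul (sq_nonneg (L s)), Real.sqrt_sq (hL0 s).le] at h2
    refine h2.trans ?_
    have := hsq s
    have := (hL0 s).le
    gcongr
  have hdiss : ∀ s, 0 ≤ s → Λ * (1 + s) ≤ 1 →
      L s * (Λ * ‖u s‖ + ‖u' s‖) ≤ Q * R := by
    intro s hs hsΛ
    refine (aux_diss b L c μ D γ hc hμ hL1 hL0 hb0 hL hlow hup hD hγ0 Λ hΛ u u' u'' hu hu' hode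
      s hs hsΛ).trans ?_
    have h1 : Λ ^ (-γ) ≤ (min Λ N) ^ (-γ) :=
      Real.rpow_le_rpow_of_nonpos hm (min_le_left _ _) (by linarith)
    have h2 : Λ ^ (-γ) ≤ (min Λ N) ^ (-(γ + 1)) * Λ := by
      have h3 : Λ ^ (-(γ + 1)) ≤ (min Λ N) ^ (-(γ + 1)) :=
        Real.rpow_le_rpow_of_nonpos hm (min_le_left _ _) (by linarith)
      have h4 : Λ ^ (-γ) = Λ ^ (-(γ + 1)) * Λ := by
        rw [← Real.rpow_add_one hΛ.ne']; congr 1; ring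
      rw [h4]
      gcongr
    have h5 := mul_le_mul_of_nonneg_right h1 (norm_nonneg (u' 0))
    have h6 := mul_le_mul_of_nonneg_right h2 (norm_nonneg (u 0))
    have h7 : Λ ^ (-γ) * (‖u 0‖ + ‖u' 0‖) ≤ R := by rw [mul_add]; linarith
    gcongr
  have e1 : 0 ≤ Q * R := by positivity
  have e2 : 0 ≤ Real.sqrt K * Q * R := by positivity
  have e3 : 0 ≤ Real.sqrt K * P * R := by positivity
  rcases le_total 1 Λ with h1 | h1
  · have h2 := hhyp 0 le_rfl ht (by linarith)
    rw [hL1, one_mul] at h2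
    have h3 : Λ * ‖u 0‖ + ‖u' 0‖ ≤ P * R := by
      have g1 : N ^ (-(γ + 1)) ≤ (min Λ N) ^ (-(γ + 1)) :=
        Real.rpow_le_rpow_of_nonpos hm (min_le_right _ _) (by linarith)
      have g2 : N ^ (-γ) ≤ (min Λ N) ^ (-γ) :=
        Real.rpow_le_rpow_of_nonpos hm (min_le_right _ _) (by linarith)
      have g3 : N ^ (γ + 1) * N ^ (-(γ + 1)) = 1 := by
        rw [← Real.rpow_add hN0]; simp
      have g4 : N ^ γ * N ^ (-γ) = 1 := by
        rw [← Real.rpow_add hN0]; simp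
      have p1 : 0 < N ^ (γ + 1) := by positivity
      have p2 : 0 < N ^ γ := by positivity
      have g5 : 1 ≤ P * (min Λ N) ^ (-(γ + 1)) := by
        refine g3.symm.le.trans ?_
        exact mul_le_mul (by linarith) g1 (by positivity) hP0.le
      have g6 : 1 ≤ P * (min Λ N) ^ (-γ) := by
        refine g4.symm.le.trans ?_
        exact mul_le_mul (by linarith) g2 (by positivity) hP0.le
      have g7 := mul_le_mul_of_nonneg_right g5 (by positivity : 0 ≤ Λ * ‖u 0‖)
      have g8 := mul_le_mul_of_nonneg_right g6 (norm_nonneg (u' 0))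
      rw [hR]
      linarith
    have h4 := mul_le_mul_of_nonneg_left h3 hsK.le
    linarith
  · rcases le_total (Λ * (1 + t)) 1 with h2 | h2
    · have h3 := hdiss t ht h2
      have h4 := mul_le_mul_of_nonneg_left (hsq t) hLt.le
      linarith
    · have hs : 0 ≤ Λ⁻¹ - 1 := by
        have := (one_le_inv₀ hΛ).2 h1
        linarith
      have hs1 : Λ * (1 + (Λ⁻¹ - 1)) = 1 := by field_simp; ring
      have hst : Λ⁻¹ - 1 ≤ t := by
        have : Λ⁻¹ ≤ 1 + t := by rw [← one_div, div_le_iff₀ hΛ]; linarith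
        linarith
      have h3 := hhyp _ hs hst hs1.ge
      have h4 := mul_le_mul_of_nonneg_left (hdiss _ hs hs1.le) hsK.le
      linarith
end

section
/- Let b : [0,∞) → ℝ be continuously differentiable with b(t) ≥ 0, b(t) ≤ C₁(1+t)^{−1} and |b'(t)| ≤ C₂(1+t)^{−2} for all t ≥ 0, and assume that either limsup_{t→∞} t·b(t) < 1/2 or liminf_{t→∞} t·b(t) > 1/2. Set λ(t) = exp(∫₀^t b(τ)dτ). Fix Λ > 0 and let u : [0,∞) → ℂ be a twice continuously differentiable solution of u''(t) + 2b(t)u'(t) + Λ²u(t) = 0 with (u(0), u'(0)) ≠ (0,0). Then there exist v₁, v₂ ∈ ℂ, not both zero, such that with v(t) := v₁·cos(Λt) + (v₂/Λ)·sin(Λt) one has |λ(t)·Λ·u(t) − Λ·v(t)| + |λ(t)·u'(t) − v'(t)| → 0 as t → ∞. -/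
open MeasureTheory Filter

/-- Energy bounds and convergence of the variation-of-constants coefficients. -/
theorem aux_scatter (q : ℝ → ℝ) (K Λ : ℝ) (hΛ : 0 < Λ) (w w1 : ℝ → ℂ)
    (hq : ContinuousOn q (Set.Ici 0))
    (hqb : ∀ t ≥ (0:ℝ), |q t| ≤ K / (1 + t) ^ 2)
    (hw : ∀ t ≥ (0:ℝ), HasDerivAt w (w1 t) t)
    (hw1 : ∀ t ≥ (0:ℝ), HasDerivAt w1 (((q t : ℂ) - (Λ : ℂ) ^ 2) * w t) t)
    (h0 : ¬(w 0 = 0 ∧ w1 0 = 0)) :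
    ∃ v₁ v₂ : ℂ, ¬(v₁ = 0 ∧ v₂ = 0) ∧ (∃ M, ∀ t ≥ (0:ℝ), ‖w t‖ ≤ M) ∧
      Tendsto (fun t => w t * (Real.cos (Λ * t) : ℂ) - w1 t / Λ * (Real.sin (Λ * t) : ℂ))
        atTop (nhds v₁) ∧
      Tendsto (fun t => w1 t * (Real.cos (Λ * t) : ℂ) + Λ * w t * (Real.sin (Λ * t) : ℂ))
        atTop (nhds v₂) := by
  have hΛc : (Λ : ℂ) ≠ 0 := by exact_mod_cast hΛ.ne'
  set E : ℝ → ℝ := fun t => Λ ^ 2 * ‖w t‖ ^ 2 + ‖w1 t‖ ^ 2 with hE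
  set L : ℝ := K / Λ with hL
  have hEn : ∀ t, 0 ≤ E t := fun t => by simp only [hE]; positivity
  have hEd : ∀ t ≥ (0:ℝ), ∃ e, HasDerivAt E e t ∧ |e| ≤ L / (1 + t) ^ 2 * E t := by
    intro t ht
    refine ⟨_, ((hw t ht).norm_sq.const_mul (Λ ^ 2)).add (hw1 t ht).norm_sq, ?_⟩
    have h1 : Λ ^ 2 * (2 * inner ℝ (w t) (w1 t)) +
        2 * inner ℝ (w1 t) (((q t : ℂ) - (Λ : ℂ) ^ 2) * w t) = 2 * q t * inner ℝ (w t) (w1 t) := by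
      have : ((q t : ℂ) - (Λ : ℂ) ^ 2) * w t = (q t - Λ ^ 2) • w t := by
        rw [Complex.real_smul]; push_cast; ring
      rw [this, real_inner_smul_right, real_inner_comm (w t) (w1 t)]
      ring
    rw [h1, abs_mul, abs_mul]
    have h2 := abs_real_inner_le_norm (w t) (w1 t)
    have h3 : ‖w t‖ * ‖w1 t‖ * (2 * Λ) ≤ E t := by
      simp only [hE]
      nlinarith [sq_nonneg (Λ * ‖w t‖ - ‖w1 t‖)]
    have h4 : 2 * |inner ℝ (w t) (w1 t)| ≤ E t / Λ := by
      rw [le_div_iff₀ hΛ]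
      nlinarith
    have h5 := hqb t ht
    calc |(2:ℝ)| * |q t| * |inner ℝ (w t) (w1 t)| = |q t| * (2 * |inner ℝ (w t) (w1 t)|) := by
          rw [abs_two]; ring
      _ ≤ K / (1 + t) ^ 2 * (E t / Λ) := by
          apply mul_le_mul h5 h4 (by positivity) ((abs_nonneg _).trans h5)
      _ = L / (1 + t) ^ 2 * E t := by rw [hL]; ring
  choose! e he heb using hEd
  have hexp : ∀ c : ℝ, ∀ t ≥ (0:ℝ), HasDerivAt (fun t => E t * Real.exp (c / (1 + t)))
      ((e t - c / (1 + t) ^ 2 * E t) * Real.exp (c / (1 + t))) t := by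
    intro c t ht
    have hne : 1 + t ≠ 0 := by positivity
    have h1 : HasDerivAt (fun t : ℝ => c / (1 + t)) (-(c / (1 + t) ^ 2)) t := by
      have := (hasDerivAt_const t c).div ((hasDerivAt_id t).const_add 1) hne
      refine this.congr_deriv ?_
      simp; ring
    refine ((he t ht).mul h1.exp).congr_deriv ?_
    ring
  have hanti : AntitoneOn (fun t => E t * Real.exp (L / (1 + t))) (Set.Ici 0) := by
    refine antitoneOn_of_hasDerivWithinAt_nonpos (convex_Ici 0)
      (fun t ht => (hexp L t ht).continuousAt.continuousWithinAt)
      (fun t ht => (hexp L t (interior_subset ht)).hasDerivWithinAt) ?_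
    intro t ht
    have := abs_le.1 (heb t (interior_subset ht))
    exact mul_nonpos_of_nonpos_of_nonneg (by linarith) (Real.exp_pos _).le
  have hmono : MonotoneOn (fun t => E t * Real.exp (-L / (1 + t))) (Set.Ici 0) := by
    refine monotoneOn_of_hasDerivWithinAt_nonneg (convex_Ici 0)
      (fun t ht => (hexp (-L) t ht).continuousAt.continuousWithinAt)
      (fun t ht => (hexp (-L) t (interior_subset ht)).hasDerivWithinAt) ?_
    intro t ht
    have := abs_le.1 (heb t (interior_subset ht))
    refine mul_nonneg ?_ (Real.exp_pos _).le
    rw [neg_div]; linarith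
  have hL0 : 0 ≤ L := by
    have := (abs_nonneg _).trans (hqb 0 le_rfl)
    have : 0 ≤ K := by simpa using this
    positivity
  have hup : ∀ t ≥ (0:ℝ), E t ≤ E 0 * Real.exp L := by
    intro t ht
    have h := hanti (Set.mem_Ici.2 le_rfl) (Set.mem_Ici.2 ht) ht
    simp only [add_zero, div_one] at h
    have : 1 ≤ Real.exp (L / (1 + t)) := Real.one_le_exp (by positivity)
    nlinarith [hEn t]
  have hlow : ∀ t ≥ (0:ℝ), E 0 * Real.exp (-L) ≤ E t := by
    intro t ht
    have h := hmono (Set.mem_Ici.2 le_rfl) (Set.mem_Ici.2 ht) ht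
    simp only [add_zero, div_one] at h
    have : Real.exp (-L / (1 + t)) ≤ 1 := by
      apply Real.exp_le_one_iff.2
      rw [neg_div, neg_nonpos]; positivity
    nlinarith [hEn t]
  have hE0 : 0 < E 0 := by
    by_contra hcon
    apply h0
    have h1 : 0 ≤ Λ ^ 2 * ‖w 0‖ ^ 2 := by positivity
    have h2 : 0 ≤ ‖w1 0‖ ^ 2 := by positivity
    simp only [hE] at hcon
    have h3 : Λ ^ 2 * ‖w 0‖ ^ 2 = 0 := by linarith
    have h4 : ‖w1 0‖ ^ 2 = 0 := by linarith
    simpa [hΛ.ne'] using And.intro h3 h4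
  have hM : ∀ t ≥ (0:ℝ), ‖w t‖ ≤ Real.sqrt (E 0 * Real.exp L) / Λ := by
    intro t ht
    rw [le_div_iff₀ hΛ]
    apply Real.le_sqrt_of_sq_le
    have := hup t ht
    have h2 : 0 ≤ ‖w1 t‖ ^ 2 := by positivity
    simp only [hE] at this ⊢
    nlinarith
  set M := Real.sqrt (E 0 * Real.exp L) / Λ with hMdef
  have hM0 : 0 ≤ M := (norm_nonneg _).trans (hM 0 le_rfl)
  have hwc : ContinuousOn w (Set.Ici 0) := fun t ht => (hw t ht).continuousAt.continuousWithinAt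
  have hcosd : ∀ t : ℝ, HasDerivAt (fun t : ℝ => (Real.cos (Λ * t) : ℂ))
      (-(Λ * Real.sin (Λ * t)) : ℂ) t := by
    intro t
    have := (((hasDerivAt_id t).const_mul Λ).cos).ofReal_comp
    refine this.congr_deriv ?_
    push_cast; simp; ring
  have hsind : ∀ t : ℝ, HasDerivAt (fun t : ℝ => (Real.sin (Λ * t) : ℂ))
      (Λ * Real.cos (Λ * t) : ℂ) t := by
    intro t
    have := (((hasDerivAt_id t).const_mul Λ).sin).ofReal_comp
    refine this.congr_deriv ?_
    push_cast; simp; ring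
  have hAd : ∀ t ≥ (0:ℝ), HasDerivAt
      (fun t => w t * (Real.cos (Λ * t) : ℂ) - w1 t / Λ * (Real.sin (Λ * t) : ℂ))
      ((-(Real.sin (Λ * t)) / Λ : ℂ) * q t * w t) t := by
    intro t ht
    refine (((hw t ht).mul (hcosd t)).sub (((hw1 t ht).div_const (Λ:ℂ)).mul (hsind t))).congr_deriv ?_
    field_simp
    ring
  have hBd : ∀ t ≥ (0:ℝ), HasDerivAt
      (fun t => w1 t * (Real.cos (Λ * t) : ℂ) + Λ * w t * (Real.sin (Λ * t) : ℂ))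
      ((Real.cos (Λ * t) : ℂ) * q t * w t) t := by
    intro t ht
    refine (((hw1 t ht).mul (hcosd t)).add (((hw t ht).const_mul (Λ:ℂ)).mul (hsind t))).congr_deriv ?_
    ring
  have hint : ∀ c : ℝ, IntegrableOn (fun t : ℝ => c / (1 + t) ^ 2) (Set.Ioi 0) := by
    intro c
    have h1 : IntegrableOn (fun t : ℝ => 1 / (1 + t) ^ 2) (Set.Ioi 0) := by
      have hd : ∀ t ∈ Set.Ici (0:ℝ), HasDerivAt (fun t : ℝ => -(1 + t)⁻¹) (1 / (1 + t) ^ 2) t := by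
        intro t ht
        have ht' : (0:ℝ) ≤ t := ht
        have hne : 1 + t ≠ 0 := by positivity
        refine ((((hasDerivAt_id t).const_add 1).inv hne).neg).congr_deriv ?_
        simp [neg_div]
      refine integrableOn_Ioi_deriv_of_nonneg' (l := -0) hd (fun t _ => by positivity) ?_
      exact (tendsto_inv_atTop_zero.comp (tendsto_atTop_add_const_left _ 1 tendsto_id)).neg
    have := h1.const_mul c
    refine this.congr (ae_of_all _ fun t => ?_)
    simp [div_eq_mul_inv]
  have hqc : ContinuousOn (fun t => (q t : ℂ)) (Set.Ici 0) :=
    Complex.continuous_ofReal.comp_continuousOn hq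
  have hgen : ∀ g : ℝ → ℂ, ∀ D : ℝ, Continuous g → (∀ t, ‖g t‖ ≤ D) →
      IntegrableOn (fun t => g t * q t * w t) (Set.Ioi 0) := by
    intro g D hg hgD
    refine Integrable.mono' (hint (D * K * M)) ?_ ?_
    · exact (((hg.continuousOn.mul hqc).mul hwc).mono Set.Ioi_subset_Ici_self).aestronglyMeasurable
        measurableSet_Ioi
    · refine (ae_restrict_iff' measurableSet_Ioi).2 (ae_of_all _ fun t ht => ?_)
      have ht' : (0:ℝ) ≤ t := le_of_lt ht
      rw [norm_mul, norm_mul, Complex.norm_real, Real.norm_eq_abs]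
      have hD : 0 ≤ D := (norm_nonneg _).trans (hgD t)
      calc ‖g t‖ * |q t| * ‖w t‖ ≤ D * (K / (1 + t) ^ 2) * M := by
            gcongr
            · exact mul_nonneg hD ((abs_nonneg _).trans (hqb t ht'))
            · exact hgD t
            · exact hqb t ht'
            · exact hM t ht'
        _ = _ := by ring
  have hA := tendsto_limUnder_of_hasDerivAt_of_integrableOn_Ioi
    (fun t ht => hAd t (le_of_lt ht))
    (hgen (fun t => (-(Real.sin (Λ * t)) / Λ : ℂ)) (1 / Λ) (by fun_prop) (by
      intro t
      rw [norm_div, norm_neg, Complex.norm_real, Complex.norm_real, Real.norm_eq_abs,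
        Real.norm_eq_abs, abs_of_pos hΛ]
      gcongr
      exact Real.abs_sin_le_one _))
  have hB := tendsto_limUnder_of_hasDerivAt_of_integrableOn_Ioi
    (fun t ht => hBd t (le_of_lt ht))
    (hgen (fun t => (Real.cos (Λ * t) : ℂ)) 1 (by fun_prop) (by
      intro t
      rw [Complex.norm_real, Real.norm_eq_abs]
      exact Real.abs_cos_le_one _))
  refine ⟨_, _, ?_, ⟨M, hM⟩, hA, hB⟩
  rintro ⟨h1, h2⟩
  rw [h1] at hA
  rw [h2] at hB
  have hlim := ((hA.norm.pow 2).const_mul (Λ ^ 2)).add (hB.norm.pow 2)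
  simp only [norm_zero] at hlim
  have hEeq : ∀ t, Λ ^ 2 * ‖w t * (Real.cos (Λ * t) : ℂ) - w1 t / Λ * (Real.sin (Λ * t) : ℂ)‖ ^ 2 +
      ‖w1 t * (Real.cos (Λ * t) : ℂ) + Λ * w t * (Real.sin (Λ * t) : ℂ)‖ ^ 2 = E t := by
    intro t
    have e1 : w1 t / Λ = (Λ⁻¹ : ℝ) * w1 t := by push_cast; field_simp
    rw [e1]
    simp only [hE, Complex.sq_norm, Complex.normSq_apply, Complex.sub_re, Complex.sub_im,
      Complex.add_re, Complex.add_im, Complex.mul_re, Complex.mul_im, Complex.ofReal_re,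
      Complex.ofReal_im]
    have hcs := Real.sin_sq_add_cos_sq (Λ * t)
    have hl : Λ * Λ⁻¹ = 1 := mul_inv_cancel₀ hΛ.ne'
    generalize Λ⁻¹ = l at *
    generalize Real.sin (Λ * t) = s at *
    generalize Real.cos (Λ * t) = c at *
    generalize (w t).re = a1
    generalize (w t).im = a2
    generalize (w1 t).re = b1
    generalize (w1 t).im = b2
    have hc2 : c ^ 2 = 1 - s ^ 2 := by linarith
    linear_combination (Λ^2*(a1^2+a2^2) + (b1^2+b2^2)) * hcs
      + (s^2*(b1^2+b2^2)*(Λ*l+1) - 2*Λ*c*s*(a1*b1+a2*b2)) * hl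
  simp only [hEeq] at hlim
  have := ge_of_tendsto hlim ((eventually_ge_atTop 0).mono fun t ht => hlow t ht)
  have hp : 0 < E 0 * Real.exp (-L) := by positivity
  norm_num at this
  linarith

/-- Modified scattering at a fixed frequency `Λ > 0`
(Theorems 2 and 3.1 of the paper in spectral-parameter form): if
`limsup t·b(t) < 1/2` or `liminf t·b(t) > 1/2`, then for every nontrivial
solution of `u'' + 2b(t)u' + Λ²u = 0` there is a nontrivial free solution
`v(t) = v₁cos(Λt) + (v₂/Λ)sin(Λt)` with
`|λ(t)Λu(t) − Λv(t)| + |λ(t)u'(t) − v'(t)| → 0`. -/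
theorem modified_scattering_fixed_frequency
    (b b' : ℝ → ℝ) (C₁ C₂ : ℝ)
    (hb' : ∀ t ≥ (0:ℝ), HasDerivAt b (b' t) t)
    (hb'c : ContinuousOn b' (Set.Ici 0))
    (hb0 : ∀ t ≥ (0:ℝ), 0 ≤ b t)
    (hb1 : ∀ t ≥ (0:ℝ), b t ≤ C₁ / (1 + t))
    (hb2 : ∀ t ≥ (0:ℝ), |b' t| ≤ C₂ / (1 + t) ^ 2)
    (hdich : (∃ μ < (1/2 : ℝ), ∀ᶠ t in atTop, t * b t ≤ μ) ∨
             (∃ μ > (1/2 : ℝ), ∀ᶠ t in atTop, μ ≤ t * b t))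
    (Λ : ℝ) (hΛ : 0 < Λ)
    (u u' u'' : ℝ → ℂ)
    (hu : ∀ t ≥ (0:ℝ), HasDerivAt u (u' t) t)
    (hu' : ∀ t ≥ (0:ℝ), HasDerivAt u' (u'' t) t)
    (hu'' : ContinuousOn u'' (Set.Ici 0))
    (heq : ∀ t ≥ (0:ℝ), u'' t + 2 * (b t : ℂ) * u' t + (Λ : ℂ) ^ 2 * u t = 0)
    (hdata : ¬(u 0 = 0 ∧ u' 0 = 0)) :
    ∃ v₁ v₂ : ℂ, ¬(v₁ = 0 ∧ v₂ = 0) ∧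
      Tendsto (fun t =>
        ‖(lam b t : ℂ) * Λ * u t -
            (Λ : ℂ) * (v₁ * (Real.cos (Λ * t) : ℂ) + v₂ / Λ * (Real.sin (Λ * t) : ℂ))‖ +
        ‖(lam b t : ℂ) * u' t -
            (-(v₁ * Λ * (Real.sin (Λ * t) : ℂ)) + v₂ * (Real.cos (Λ * t) : ℂ))‖)
        atTop (nhds 0) := by
  have hΛc : (Λ : ℂ) ≠ 0 := by exact_mod_cast hΛ.ne'
  have hC1 : 0 ≤ C₁ := by simpa using (hb0 0 le_rfl).trans (hb1 0 le_rfl)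
  set β : ℝ → ℝ := fun t => b (max t 0) with hβ
  have hβb : ∀ t ≥ (0:ℝ), β t = b t := fun t ht => by simp [hβ, max_eq_left ht]
  have hbc : ContinuousOn b (Set.Ici 0) := fun t ht => (hb' t ht).continuousAt.continuousWithinAt
  have hβc : Continuous β :=
    hbc.comp_continuous (by fun_prop) (fun t => Set.mem_Ici.2 (le_max_right _ _))
  set ℓ : ℝ → ℝ := lam β with hℓ
  have hℓd : ∀ t ≥ (0:ℝ), HasDerivAt ℓ (ℓ t * b t) t := by
    intro t ht
    have := (hβc.integral_hasStrictDerivAt 0 t).hasDerivAt.exp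
    rw [hβb t ht] at this
    exact this
  have hℓl : ∀ t ≥ (0:ℝ), lam b t = ℓ t := by
    intro t ht
    simp only [hℓ, lam]
    congr 1
    apply intervalIntegral.integral_congr
    intro s hs
    rw [Set.uIcc_of_le ht] at hs
    exact (hβb s hs.1).symm
  have hℓp : ∀ t, 0 < ℓ t := fun t => Real.exp_pos _
  have hbd : ∀ t ≥ (0:ℝ), HasDerivAt (fun t => (b t : ℂ)) (b' t : ℂ) t :=
    fun t ht => (hb' t ht).ofReal_comp
  have hld : ∀ t ≥ (0:ℝ), HasDerivAt (fun t => (ℓ t : ℂ)) ((ℓ t * b t : ℝ) : ℂ) t :=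
    fun t ht => (hℓd t ht).ofReal_comp
  obtain ⟨v₁, v₂, hv, ⟨M, hM⟩, hA, hB⟩ := aux_scatter (fun t => b t ^ 2 + b' t) (C₁ ^ 2 + C₂) Λ hΛ
    (fun t => ℓ t * u t) (fun t => ℓ t * (u' t + b t * u t))
    ((hbc.pow 2).add hb'c)
    (by
      intro t ht
      have h1 : b t ^ 2 ≤ (C₁ / (1 + t)) ^ 2 := pow_le_pow_left₀ (hb0 t ht) (hb1 t ht) 2
      have h2 := abs_add_le (b t ^ 2) (b' t)
      rw [abs_of_nonneg (sq_nonneg (b t))] at h2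
      have h3 := hb2 t ht
      rw [div_pow] at h1
      rw [add_div]
      linarith)
    (by
      intro t ht
      refine ((hld t ht).mul (hu t ht)).congr_deriv ?_
      push_cast; ring)
    (by
      intro t ht
      refine ((hld t ht).mul ((hu' t ht).add ((hbd t ht).mul (hu t ht)))).congr_deriv ?_
      simp only [Pi.add_apply, Pi.mul_apply]
      push_cast
      linear_combination (ℓ t : ℂ) * heq t ht)
    (by
      rintro ⟨h1, h2⟩
      have hne : (ℓ 0 : ℂ) ≠ 0 := by exact_mod_cast (hℓp 0).ne'
      have h3 : u 0 = 0 := by simpa [hne] using h1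
      apply hdata
      refine ⟨h3, ?_⟩
      simpa [hne, h3] using h2)
  refine ⟨v₁, v₂, hv, ?_⟩
  set A : ℝ → ℂ := fun t => ℓ t * u t * (Real.cos (Λ * t) : ℂ)
    - ℓ t * (u' t + b t * u t) / Λ * (Real.sin (Λ * t) : ℂ) with hAdef
  set B : ℝ → ℂ := fun t => ℓ t * (u' t + b t * u t) * (Real.cos (Λ * t) : ℂ)
    + Λ * (ℓ t * u t) * (Real.sin (Λ * t) : ℂ) with hBdef
  have hA0 : Tendsto (fun t => ‖A t - v₁‖) atTop (nhds 0) :=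
    tendsto_iff_norm_sub_tendsto_zero.1 hA
  have hB0 : Tendsto (fun t => ‖B t - v₂‖) atTop (nhds 0) :=
    tendsto_iff_norm_sub_tendsto_zero.1 hB
  have hb0' : Tendsto (fun t : ℝ => C₁ * M * (1 + t)⁻¹) atTop (nhds (C₁ * M * 0)) :=
    (tendsto_inv_atTop_zero.comp (tendsto_atTop_add_const_left _ 1 tendsto_id)).const_mul _
  have hlim := ((hA0.const_mul (2 * Λ)).add (hB0.const_mul 2)).add hb0'
  simp only [mul_zero, add_zero] at hlim
  refine squeeze_zero' (Eventually.of_forall fun t => by positivity) ?_ hlim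
  filter_upwards [eventually_ge_atTop 0] with t ht
  rw [hℓl t ht]
  have hcs : (Real.sin (Λ * t) : ℂ) ^ 2 + (Real.cos (Λ * t) : ℂ) ^ 2 = 1 := by
    exact_mod_cast Real.sin_sq_add_cos_sq (Λ * t)
  have hs1 : ‖(Real.sin (Λ * t) : ℂ)‖ ≤ 1 := by
    rw [Complex.norm_real]; exact Real.abs_sin_le_one _
  have hc1 : ‖(Real.cos (Λ * t) : ℂ)‖ ≤ 1 := by
    rw [Complex.norm_real]; exact Real.abs_cos_le_one _
  have hΛn : ‖(Λ : ℂ)‖ = Λ := by rw [Complex.norm_real]; exact abs_of_pos hΛ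
  have e1 : (ℓ t : ℂ) * Λ * u t -
            (Λ : ℂ) * (v₁ * (Real.cos (Λ * t) : ℂ) + v₂ / Λ * (Real.sin (Λ * t) : ℂ))
      = Λ * (A t - v₁) * (Real.cos (Λ * t) : ℂ) + (B t - v₂) * (Real.sin (Λ * t) : ℂ) := by
    simp only [hAdef, hBdef]
    field_simp
    linear_combination (-(ℓ t : ℂ) * Λ * u t) * hcs
  have e2 : (ℓ t : ℂ) * u' t -
            (-(v₁ * Λ * (Real.sin (Λ * t) : ℂ)) + v₂ * (Real.cos (Λ * t) : ℂ))
      = -(Λ * (A t - v₁) * (Real.sin (Λ * t) : ℂ)) + (B t - v₂) * (Real.cos (Λ * t) : ℂ)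
        - b t * (ℓ t * u t) := by
    simp only [hAdef, hBdef]
    field_simp
    linear_combination (-(ℓ t : ℂ) * (u' t + b t * u t)) * hcs
  rw [e1, e2]
  have n1 : ∀ z : ℂ, ‖z‖ ≤ 1 → ‖(Λ : ℂ) * (A t - v₁) * z‖ ≤ Λ * ‖A t - v₁‖ := by
    intro z hz
    rw [norm_mul, norm_mul, hΛn]
    exact mul_le_of_le_one_right (by positivity) hz
  have n2 : ∀ z : ℂ, ‖z‖ ≤ 1 → ‖(B t - v₂) * z‖ ≤ ‖B t - v₂‖ := by
    intro z hz
    rw [norm_mul]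
    exact mul_le_of_le_one_right (by positivity) hz
  have n3 : ‖(b t : ℂ) * (ℓ t * u t)‖ ≤ C₁ * M * (1 + t)⁻¹ := by
    rw [norm_mul, Complex.norm_real, Real.norm_eq_abs, abs_of_nonneg (hb0 t ht)]
    calc b t * ‖(ℓ t : ℂ) * u t‖ ≤ C₁ / (1 + t) * M :=
          mul_le_mul (hb1 t ht) (hM t ht) (norm_nonneg _) ((hb0 t ht).trans (hb1 t ht))
      _ = _ := by ring
  have t1 := norm_add_le ((Λ : ℂ) * (A t - v₁) * (Real.cos (Λ * t) : ℂ))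
    ((B t - v₂) * (Real.sin (Λ * t) : ℂ))
  have t2 := norm_sub_le (-((Λ : ℂ) * (A t - v₁) * (Real.sin (Λ * t) : ℂ))
    + (B t - v₂) * (Real.cos (Λ * t) : ℂ)) ((b t : ℂ) * (ℓ t * u t))
  have t3 := norm_add_le (-((Λ : ℂ) * (A t - v₁) * (Real.sin (Λ * t) : ℂ)))
    ((B t - v₂) * (Real.cos (Λ * t) : ℂ))
  rw [norm_neg] at t3
  linarith [n1 _ hs1, n1 _ hc1, n2 _ hs1, n2 _ hc1]
end
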